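/- arXiv:quant-ph/0507045 — 2 statements merged into one kernel-verified Lean document; each statement's English description precedes it below -/
import Mathlib

section
/- Let dA, dB, dC be positive integers and U : Matrix ((Fin dB) × (Fin dC)) (Fin dA) ℂ with Uᴴ * U = 1. Let ρ be a density matrix on Fin dA with entropies SA = S(ρ), SB = S(tr_C (U ρ Uᴴ)), SC = S(tr_B (U ρ Uᴴ)). If SB < SC and SB < SA, then the rate (1 − SB/SA)·SC + (SB/SA)·SB is achievable with one-way LOCC (C→B) decoding for U. -/
/-!
A bipartite vector is written as its coefficient matrix, with rows for Bob and columns for Charlie.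
In eigenbases of `ρ` and of its two output marginals, the isometry `U` becomes an ensemble (`Ens`) of
orthonormal matrices `A t` with probabilities `p t` such that `∑ p AAᴴ = diag q` and
`∑ p AᴴA = diag r`, and the three entropies are the Shannon entropies of `p`, `q` and `r`
(`spectral_ens`). A random-phase superposition `∑ ph (s t) √(p t) A t` (`Ens.X`) is a unit vector in
the range of `U`; after truncation to typical indices (`Ens.exists_typical`) its marginals are nearly
flat, with ranks about `2^{n SB}` on both sides, inside typical subspaces of dimensions `2^{n SB}`
(Bob) and `2^{n SC}` (Charlie).

The `n` uses are split into blocks of lengths `n₁ ≈ (1 - λ) n` and `n₂ ≈ λ n`, where `λ = SB / SA`.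
The message is a pair `(i, j)`, and its codeword is the product of a superposition on the first block
depending on `i` and one on the second block depending on `(i, j)`.

* First layer. The row spaces of the first-block codewords have dimension at most `2^{n₁ SB}` inside
  Charlie's typical space of dimension `2^{n₁ SC}`. By the packing lemma (`packing`), Charlie alone can
  identify `2^{n₁ (SC - SB)}` values of `i` with little disturbance (`sequential_protocol`).
* Second layer. With `i` known, Charlie measures all his systems with random-phase vectors, and Bob
  applies a pretty good measurement to his conditional states (`phased_protocol`). By the
  second-moment bound `phase_quadratic`, the error is governed by the overlaps of distinct codewords,
  of order `2^{-n₂ SA}`, and by cross-term purities of order `2^{-(n₁ + n₂) SB}`. As `n₂ SA ≥ n SB`, both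
  are small for `2^{n SB}` values of `j`; this is what fixes `λ`.

The total rate is `(1 - λ) (SC - SB) + SB = (1 - λ) SC + λ SB`. The random phases are averaged over in
`one_shot`; `block_code` expurgates the code and completes the protocol to a one-way LOCC measurement;
`finite_code` collects the exponents.

The pretty good measurement is taken with the resolvent `2 (1 + S)⁻¹` of the Gram operator `S` in place
of its inverse square root, which reduces all operator inequalities to scalar ones in `S`.
-/

open scoped BigOperators Classical ComplexOrder Matrix

noncomputable section

/-- von Neumann entropy in bits of a (Hermitian) matrix, via its eigenvalues. -/
def vnEntropy {n : Type*} [Fintype n] [DecidableEq n] (ρ : Matrix n n ℂ) : ℝ :=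
  if h : ρ.IsHermitian then -∑ i, h.eigenvalues i * Real.logb 2 (h.eigenvalues i) else 0

/-- A density matrix: positive semidefinite with unit trace. -/
def IsDensityMatrix {n : Type*} [Fintype n] [DecidableEq n] (ρ : Matrix n n ℂ) : Prop :=
  ρ.PosSemidef ∧ ρ.trace = 1

/-- Partial trace over the second (C) factor. -/
def ptraceC {dB dC : ℕ} (M : Matrix (Fin dB × Fin dC) (Fin dB × Fin dC) ℂ) :
    Matrix (Fin dB) (Fin dB) ℂ := fun i k => ∑ j, M (i, j) (k, j)

/-- Partial trace over the first (B) factor. -/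
def ptraceB {dB dC : ℕ} (M : Matrix (Fin dB × Fin dC) (Fin dB × Fin dC) ℂ) :
    Matrix (Fin dC) (Fin dC) ℂ := fun j l => ∑ i, M (i, j) (i, l)

/-- Partial transpose (on the second factor). -/
def ptranspose {dB dC : ℕ} (M : Matrix (Fin dB × Fin dC) (Fin dB × Fin dC) ℂ) :
    Matrix (Fin dB × Fin dC) (Fin dB × Fin dC) ℂ := fun p q => M (p.1, q.2) (q.1, p.2)

/-- The pure state (rank-one projector) associated to a vector. -/
def pureState {ι : Type*} (v : ι → ℂ) : Matrix ι ι ℂ := Matrix.vecMulVec v (star v)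

/-- A unit vector. -/
def IsUnitVec {ι : Type*} [Fintype ι] (v : ι → ℂ) : Prop := ∑ x, Complex.normSq (v x) = 1

/-- Entanglement entropy of a bipartite pure state. -/
def entg {dB dC : ℕ} (v : Fin dB × Fin dC → ℂ) : ℝ := vnEntropy (ptraceC (pureState v))

/-- The n-fold tensor power of an isometry `U : A → B ⊗ C`. -/
def tensorPow {dA dB dC : ℕ} (U : Matrix (Fin dB × Fin dC) (Fin dA) ℂ) (n : ℕ) :
    Matrix (Fin n → Fin dB × Fin dC) (Fin n → Fin dA) ℂ :=
  fun f g => ∏ k, U (f k) (g k)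

/-- n-fold partial trace over the C factors. -/
def ptraceCn {dB dC n : ℕ}
    (M : Matrix (Fin n → Fin dB × Fin dC) (Fin n → Fin dB × Fin dC) ℂ) :
    Matrix (Fin n → Fin dB) (Fin n → Fin dB) ℂ :=
  fun fB gB => ∑ fC : Fin n → Fin dC, M (fun k => (fB k, fC k)) (fun k => (gB k, fC k))

/-- n-fold partial transpose over the C factors. -/
def ptransposeN {dB dC n : ℕ}
    (M : Matrix (Fin n → Fin dB × Fin dC) (Fin n → Fin dB × Fin dC) ℂ) :
    Matrix (Fin n → Fin dB × Fin dC) (Fin n → Fin dB × Fin dC) ℂ :=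
  fun f g => M (fun k => ((f k).1, (g k).2)) (fun k => ((g k).1, (f k).2))

/-- A POVM on the n-fold space implemented by one-way LOCC from C to B:
Charlie measures `(M x)` on `C^n`, sends `x`, and Bob measures `(B x i)` on `B^n`. -/
def IsOneWayLOCC {dB dC n N : ℕ}
    (Np : Fin N → Matrix (Fin n → Fin dB × Fin dC) (Fin n → Fin dB × Fin dC) ℂ) : Prop :=
  ∃ (m : ℕ) (M : Fin m → Matrix (Fin n → Fin dC) (Fin n → Fin dC) ℂ)
    (B : Fin m → Fin N → Matrix (Fin n → Fin dB) (Fin n → Fin dB) ℂ),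
    (∀ x, (M x).PosSemidef) ∧ (∑ x, M x) = 1 ∧
    (∀ x i, (B x i).PosSemidef) ∧ (∀ x, (∑ i, B x i) = 1) ∧
    (∀ i f g, Np i f g =
      ∑ x, B x i (fun k => (f k).1) (fun k => (g k).1) * M x (fun k => (f k).2) (fun k => (g k).2))

/-- The rate R is achievable with one-way LOCC (C→B) decoding for the isometry U. -/
def AchievableOneWayCB {dA dB dC : ℕ} (U : Matrix (Fin dB × Fin dC) (Fin dA) ℂ) (R : ℝ) : Prop :=
  ∀ ε : ℝ, 0 < ε → ∃ n₀ : ℕ, ∀ n : ℕ, n₀ ≤ n →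
    ∃ (N : ℕ) (φ : Fin N → (Fin n → Fin dB × Fin dC) → ℂ)
      (Np : Fin N → Matrix (Fin n → Fin dB × Fin dC) (Fin n → Fin dB × Fin dC) ℂ),
      (2 : ℝ) ^ ((n : ℝ) * (R - ε)) ≤ (N : ℝ) ∧
      (∀ i, IsUnitVec (φ i)) ∧
      (∀ i, ∃ ψ, (tensorPow U n).mulVec ψ = φ i) ∧
      IsOneWayLOCC Np ∧
      (∀ i, 1 - ε ≤ (Matrix.trace (pureState (φ i) * Np i)).re)

/-- Base-2 Shannon entropy. -/
def shannonEntropy {ι : Type*} [Fintype ι] (q : ι → ℝ) : ℝ := -∑ x, q x * Real.logb 2 (q x)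

section Helpers
open Matrix

/-! ### Frobenius norm and resolvent -/

/-- Squared Frobenius (Hilbert–Schmidt) norm. -/
def fro {α β : Type*} [Fintype α] [Fintype β] (X : Matrix α β ℂ) : ℝ :=
  ∑ i, ∑ j, Complex.normSq (X i j)

section Fro
variable {α β γ δ : Type*} [Fintype α] [Fintype β] [Fintype γ] [Fintype δ]

lemma fro_nonneg (X : Matrix α β ℂ) : 0 ≤ fro X :=
  Finset.sum_nonneg fun _ _ => Finset.sum_nonneg fun _ _ => Complex.normSq_nonneg _

lemma fro_conjTranspose (X : Matrix α β ℂ) : fro Xᴴ = fro X := by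
  unfold fro
  rw [Finset.sum_comm]
  simp [conjTranspose_apply]

lemma trace_self_eq_fro (X : Matrix α β ℂ) : trace (Xᴴ * X) = (fro X : ℂ) := by
  rw [← fro_conjTranspose]
  simp only [fro, trace, diag, mul_apply, conjTranspose_apply, Complex.ofReal_sum]
  refine Finset.sum_congr rfl fun i _ => Finset.sum_congr rfl fun j _ => ?_
  rw [Complex.normSq_eq_conj_mul_self]
  simp [mul_comm]

lemma trace_self_eq_fro' (X : Matrix α β ℂ) : trace (X * Xᴴ) = (fro X : ℂ) := by
  have := trace_self_eq_fro Xᴴ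
  rwa [conjTranspose_conjTranspose, fro_conjTranspose] at this

lemma fro_kronecker (X : Matrix α β ℂ) (Y : Matrix γ δ ℂ) :
    fro (kronecker X Y) = fro X * fro Y := by
  unfold fro
  simp only [Fintype.sum_prod_type, kronecker, kroneckerMap_apply, Complex.normSq_mul]
  rw [Finset.sum_mul_sum]
  refine Finset.sum_congr rfl fun i _ => Finset.sum_congr rfl fun j _ => ?_
  rw [Finset.sum_mul_sum]

lemma fro_add3_le (X Y Z : Matrix α β ℂ) : fro (X + Y + Z) ≤ 3 * (fro X + fro Y + fro Z) := by
  unfold fro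
  simp only [← Finset.sum_add_distrib, Finset.mul_sum]
  refine Finset.sum_le_sum fun i _ => Finset.sum_le_sum fun j _ => ?_
  simp only [Matrix.add_apply, Complex.normSq_apply, Complex.add_re, Complex.add_im]
  nlinarith [sq_nonneg ((X i j).re - (Y i j).re), sq_nonneg ((X i j).re - (Z i j).re),
    sq_nonneg ((Z i j).re - (Y i j).re), sq_nonneg ((X i j).im - (Y i j).im),
    sq_nonneg ((X i j).im - (Z i j).im), sq_nonneg ((Z i j).im - (Y i j).im)]

/-- A lower bound for `|x + y|²` when `y` is small; `a` is free. -/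
lemma normSq_add_ge (x y : ℂ) {a : ℝ} (ha : 0 < a) :
    (1 - a) * Complex.normSq x - Complex.normSq y / a ≤ Complex.normSq (x + y) := by
  have e : Complex.normSq (x + y) - ((1 - a) * Complex.normSq x - Complex.normSq y / a)
      = ((a * x.re + y.re) ^ 2 + (a * x.im + y.im) ^ 2) / a + Complex.normSq y := by
    simp only [Complex.normSq_apply, Complex.add_re, Complex.add_im]
    field_simp
    ring
  have : 0 ≤ ((a * x.re + y.re) ^ 2 + (a * x.im + y.im) ^ 2) / a + Complex.normSq y := by
    have := Complex.normSq_nonneg y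
    positivity
  linarith

/-- A state close to `X` has almost the norm of `X`: the bound is applied with a small `a` and with
`fro Y` much smaller than `a`. -/
lemma fro_add_ge (X Y : Matrix α β ℂ) {a : ℝ} (ha : 0 < a) :
    (1 - a) * fro X - fro Y / a ≤ fro (X + Y) := by
  unfold fro
  simp only [Finset.mul_sum, Finset.sum_div, ← Finset.sum_sub_distrib]
  exact Finset.sum_le_sum fun i _ => Finset.sum_le_sum fun j _ => normSq_add_ge _ _ ha

lemma trace_mul_re_nonneg {A B : Matrix α α ℂ} (hA : A.PosSemidef) (hB : B.PosSemidef) :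
    0 ≤ (trace (A * B)).re := by
  obtain ⟨N, rfl⟩ : ∃ N : Matrix α α ℂ, B = Nᴴ * N := by
    open scoped MatrixOrder in
    obtain ⟨N, hN⟩ := CStarAlgebra.nonneg_iff_eq_star_mul_self.mp hB.nonneg
    exact ⟨N, hN⟩
  rw [← Matrix.mul_assoc, Matrix.trace_mul_comm, ← Matrix.mul_assoc]
  exact (Complex.le_def.mp (hA.mul_mul_conjTranspose_same N).trace_nonneg).1

/-- A contraction does not increase the Frobenius norm. -/
lemma fro_mul_contraction [DecidableEq β] (X : Matrix α β ℂ) (K : Matrix β γ ℂ)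
    (hK : (1 - K * Kᴴ).PosSemidef) : fro (X * K) ≤ fro X := by
  have h := (Complex.le_def.mp (hK.mul_mul_conjTranspose_same X).trace_nonneg).1
  have e : X * (1 - K * Kᴴ) * Xᴴ = X * Xᴴ - (X * K) * (X * K)ᴴ := by
    simp only [conjTranspose_mul, Matrix.mul_sub, Matrix.sub_mul, Matrix.mul_one, Matrix.mul_assoc]
  rw [e, trace_sub, trace_self_eq_fro', trace_self_eq_fro'] at h
  simpa using h

end Fro

section Core
variable {β : Type*} [Fintype β] [DecidableEq β]

/-- The operator `R = (1 + S)⁻¹` underlying the square-root-free pretty good measurement. The two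
bounds are `4 x ≤ (1 + x)²` (normalisation) and `4 / (1 + x) ≥ 3 - x` (success probability) on the
spectrum of `S`. -/
lemma exists_resolvent {S : Matrix β β ℂ} (hS : S.PosSemidef) :
    ∃ R : Matrix β β ℂ, Rᴴ = R ∧ (1 - (4 : ℂ) • (R * S * R)).PosSemidef ∧
      ((4 : ℂ) • R - (3 : ℂ) • 1 + S).PosSemidef := by
  have hp : (1 + S).PosDef := PosDef.one.add_posSemidef hS
  have hu : IsUnit (1 + S).det := (Matrix.isUnit_iff_isUnit_det _).mp hp.isUnit
  have hR : ((1 + S)⁻¹)ᴴ = (1 + S)⁻¹ := hp.inv.isHermitian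
  have h1 : (1 + S) * (1 + S)⁻¹ = 1 := Matrix.mul_nonsing_inv _ hu
  have h2 : (1 + S)⁻¹ * (1 + S) = 1 := Matrix.nonsing_inv_mul _ hu
  have hSh : Sᴴ = S := hS.isHermitian
  have hps : (1 - S)ᴴ = 1 - S := by simp [hSh]
  generalize (1 + S)⁻¹ = R at hR h1 h2
  refine ⟨R, hR, ?_, ?_⟩
  · have e : 1 - (4 : ℂ) • (R * S * R) = ((1 - S) * R)ᴴ * ((1 - S) * R) := by
      have : (1 : Matrix β β ℂ) = R * ((1 + S) * (1 + S)) * R := by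
        rw [← Matrix.mul_assoc, h2, Matrix.one_mul, h1]
      rw [conjTranspose_mul, hR, hps]
      conv_lhs => rw [this]
      have e2 : (1 + S) * (1 + S) = (1 - S) * (1 - S) + (4 : ℂ) • S := by
        simp only [Matrix.add_mul, Matrix.mul_add, Matrix.sub_mul, Matrix.mul_sub, Matrix.mul_one,
          Matrix.one_mul]
        module
      rw [e2, Matrix.mul_add, Matrix.add_mul]
      simp only [Matrix.mul_smul, Matrix.smul_mul, Matrix.mul_assoc]
      abel
    rw [e]
    exact posSemidef_conjTranspose_mul_self _
  · have e : (4 : ℂ) • R - (3 : ℂ) • 1 + S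
        = ((1 - S) * R)ᴴ * (1 + S) * ((1 - S) * R) := by
      rw [conjTranspose_mul, hR, hps]
      have c1 : (1 - S) * (1 + S) * (1 - S) = (1 + S) * ((4 : ℂ) • R - (3 : ℂ) • 1 + S) * (1 + S) := by
        have : (1 + S) * ((4 : ℂ) • R - (3 : ℂ) • 1 + S) * (1 + S)
          = (4 : ℂ) • ((1 + S) * R * (1 + S)) - (1 + S) * ((3 : ℂ) • 1 - S) * (1 + S) := by
          simp only [Matrix.mul_add, Matrix.add_mul, Matrix.sub_mul, Matrix.mul_sub, Matrix.mul_smul,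
            Matrix.smul_mul, Matrix.mul_one, Matrix.one_mul]
          module
        rw [this, h1]
        simp only [Matrix.mul_add, Matrix.add_mul, Matrix.sub_mul, Matrix.mul_sub, Matrix.mul_smul,
            Matrix.smul_mul, Matrix.mul_one, Matrix.one_mul]
        module
      calc _ = (R * (1 + S)) * ((4 : ℂ) • R - (3 : ℂ) • 1 + S) * ((1 + S) * R) := by
            rw [h1, h2, Matrix.one_mul, Matrix.mul_one]
        _ = R * ((1 + S) * ((4 : ℂ) • R - (3 : ℂ) • 1 + S) * (1 + S)) * R := by
            simp only [Matrix.mul_assoc]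
        _ = _ := by rw [← c1]; simp only [Matrix.mul_assoc]
    rw [e]
    exact hp.posSemidef.conjTranspose_mul_mul_same _

end Core

/-! ### Pretty good measurement and packing -/

/-- Squared Euclidean norm of a complex vector. -/
def vsq {β : Type*} [Fintype β] (v : β → ℂ) : ℝ := ∑ i, Complex.normSq (v i)

section PGM
variable {β : Type*} [Fintype β]

lemma vsq_nonneg (v : β → ℂ) : 0 ≤ vsq v := Finset.sum_nonneg fun _ _ => Complex.normSq_nonneg _

lemma dot_self_eq_vsq (v : β → ℂ) : star v ⬝ᵥ v = (vsq v : ℂ) := by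
  simp only [dotProduct, vsq, Complex.ofReal_sum, Pi.star_apply]
  exact Finset.sum_congr rfl fun i _ => by rw [Complex.normSq_eq_conj_mul_self]; rfl

/-- Young's inequality with weight `a`. -/
lemma two_re_dot_ge (m x : β → ℂ) {a : ℝ} (ha : 0 < a) :
    -(a * vsq m) - vsq x / a ≤ 2 * (star m ⬝ᵥ x).re := by
  simp only [dotProduct, vsq, Complex.re_sum, Finset.mul_sum, Finset.sum_div,
    ← Finset.sum_neg_distrib, ← Finset.sum_sub_distrib]
  refine Finset.sum_le_sum fun i _ => ?_
  simp only [Pi.star_apply, Complex.star_def, Complex.mul_re, Complex.conj_re, Complex.conj_im,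
    Complex.normSq_apply]
  have : 2 * ((m i).re * (x i).re - -(m i).im * (x i).im)
     - (-(a * ((m i).re * (m i).re + (m i).im * (m i).im)) -
      ((x i).re * (x i).re + (x i).im * (x i).im) / a)
     = ((a * (m i).re + (x i).re) ^ 2 + (a * (m i).im + (x i).im) ^ 2) / a := by
    field_simp
    ring
  have h2 : 0 ≤ ((a * (m i).re + (x i).re) ^ 2 + (a * (m i).im + (x i).im) ^ 2) / a := by
    positivity
  linarith

lemma dot_conj (x y : β → ℂ) : star (star x ⬝ᵥ y) = star y ⬝ᵥ x := by
  simp [dotProduct, star_sum, mul_comm]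

/-- The quadratic form of the rank-one operator attached to `m`. -/
lemma vecMulVec_quad (m x : β → ℂ) :
    star x ⬝ᵥ (vecMulVec m (star m) *ᵥ x) = (Complex.normSq (star m ⬝ᵥ x) : ℂ) := by
  rw [vecMulVec_mulVec]
  simp only [dotProduct_smul, MulOpposite.smul_eq_mul_unop, MulOpposite.unop_op]
  rw [Complex.normSq_eq_conj_mul_self, ← dot_conj]
  rfl

variable [DecidableEq β] {J : Type*} [Fintype J]

/-- A pretty good measurement without square roots: the vectors `μ j = 2 (1 + S)⁻¹ b j`, with
`S` the Gram operator of the family `b`, form a sub-normalised rank-one POVM. -/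
lemma pgm (b : J → β → ℂ) : ∃ μ : J → β → ℂ,
    (1 - ∑ j, vecMulVec (μ j) (star (μ j))).PosSemidef ∧ (∀ j, vsq (μ j) ≤ 1) ∧
    ∀ j, 3 * vsq (b j) - ∑ k, Complex.normSq (star (b k) ⬝ᵥ b j) ≤ 2 * (star (μ j) ⬝ᵥ b j).re := by
  have hS : (∑ j, vecMulVec (b j) (star (b j))).PosSemidef :=
    posSemidef_sum _ fun j _ => posSemidef_vecMulVec_self_star _
  obtain ⟨R, hR, h1, h2⟩ := exists_resolvent hS
  have hrank : ∀ j, vecMulVec ((2 : ℂ) • (R *ᵥ b j)) (star ((2 : ℂ) • (R *ᵥ b j)))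
      = (4 : ℂ) • (R * vecMulVec (b j) (star (b j)) * R) := by
    intro j
    rw [star_smul, star_mulVec, hR, vecMulVec_smul, smul_vecMulVec, smul_smul, mul_vecMulVec,
      vecMulVec_mul]
    congr 1
    simp
    norm_num
  have hsum : ∑ j, vecMulVec ((2 : ℂ) • (R *ᵥ b j)) (star ((2 : ℂ) • (R *ᵥ b j)))
      = (4 : ℂ) • (R * (∑ j, vecMulVec (b j) (star (b j))) * R) := by
    simp only [hrank, Finset.mul_sum, Finset.sum_mul, Finset.smul_sum]
  refine ⟨fun j => (2 : ℂ) • (R *ᵥ b j), by rw [hsum]; exact h1, fun j => ?_, fun j => ?_⟩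
  · rw [← hsum] at h1
    set m := (fun j => (2 : ℂ) • (R *ᵥ b j)) with hm
    change (1 - ∑ j, vecMulVec (m j) (star (m j))).PosSemidef at h1
    change vsq (m j) ≤ 1
    have h := h1.re_dotProduct_nonneg (m j)
    rw [Matrix.sub_mulVec, Matrix.one_mulVec, dotProduct_sub, Matrix.sum_mulVec, dotProduct_sum,
      dot_self_eq_vsq] at h
    simp only [vecMulVec_quad] at h
    simp only [RCLike.re_to_complex, Complex.sub_re, Complex.ofReal_re, Complex.re_sum] at h
    have h3 := Finset.single_le_sum (f := fun k => Complex.normSq (star (m k) ⬝ᵥ m j))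
      (fun k _ => Complex.normSq_nonneg _) (Finset.mem_univ j)
    simp only [dot_self_eq_vsq, Complex.normSq_ofReal] at h3
    have := vsq_nonneg (m j)
    nlinarith
  · have h := h2.re_dotProduct_nonneg (b j)
    rw [Matrix.add_mulVec, Matrix.sub_mulVec, smul_mulVec, smul_mulVec, Matrix.one_mulVec,
      dotProduct_add, dotProduct_sub, Matrix.sum_mulVec, dotProduct_sum, dotProduct_smul,
      dotProduct_smul, dot_self_eq_vsq] at h
    simp only [vecMulVec_quad] at h
    have e : star ((2 : ℂ) • (R *ᵥ b j)) ⬝ᵥ b j = 2 * (star (b j) ⬝ᵥ (R *ᵥ b j)) := by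
      rw [star_smul, star_mulVec, hR, smul_dotProduct, ← dotProduct_mulVec]
      simp
    rw [e]
    simp at h ⊢
    linarith

end PGM

section Packing
variable {α β : Type*} [Fintype α] [Fintype β] [DecidableEq β] {I : Type*} [Fintype I]

/-- Packing lemma for projectors. The operators `K i = 2 (1 + ∑ P)⁻¹ P i` are Kraus operators of a
sub-normalised measurement, and `K i` hardly disturbs vectors supported on `P i` which are
nearly orthogonal to the other `P k`. -/
lemma packing (P : I → Matrix β β ℂ) (hP : ∀ i, (P i)ᴴ = P i) (hP2 : ∀ i, P i * P i = P i) :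
    ∃ K : I → Matrix β β ℂ, (1 - ∑ i, K i * (K i)ᴴ).PosSemidef ∧
      ∀ (i : I) (X : Matrix α β ℂ), X * P i = X →
        fro (X * K i - X) ≤ ∑ k ∈ Finset.univ.erase i, fro (X * P k) := by
  have hpsd : ∀ i, (P i).PosSemidef := fun i => by
    rw [← hP2 i]; nth_rewrite 1 [← hP i]; exact posSemidef_conjTranspose_mul_self _
  obtain ⟨R, hR, h1, h2⟩ := exists_resolvent (posSemidef_sum Finset.univ fun i _ => hpsd i)
  have hKK : ∀ i, ((2 : ℂ) • (R * P i)) * ((2 : ℂ) • (R * P i))ᴴ = (4 : ℂ) • (R * P i * R) := by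
    intro i
    rw [conjTranspose_smul, conjTranspose_mul, hR, hP, Matrix.smul_mul, Matrix.mul_smul, smul_smul,
      ← Matrix.mul_assoc, Matrix.mul_assoc R, hP2]
    congr 1
    simp
    norm_num
  have hsum : ∑ i, ((2 : ℂ) • (R * P i)) * ((2 : ℂ) • (R * P i))ᴴ
      = (4 : ℂ) • (R * (∑ i, P i) * R) := by
    simp only [hKK, Finset.mul_sum, Finset.sum_mul, Finset.smul_sum]
  refine ⟨fun i => (2 : ℂ) • (R * P i), by rw [hsum]; exact h1, fun i X hX => ?_⟩
  have hc : fro (X * ((2 : ℂ) • (R * P i))) ≤ fro X := by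
    apply fro_mul_contraction
    have : 1 - ((2 : ℂ) • (R * P i)) * ((2 : ℂ) • (R * P i))ᴴ
        = (1 - ∑ i, ((2 : ℂ) • (R * P i)) * ((2 : ℂ) • (R * P i))ᴴ)
          + ∑ k ∈ Finset.univ.erase i, ((2 : ℂ) • (R * P k)) * ((2 : ℂ) • (R * P k))ᴴ := by
      rw [← Finset.add_sum_erase _ _ (Finset.mem_univ i)]
      abel
    rw [this]
    refine PosSemidef.add (by rw [hsum]; exact h1) (posSemidef_sum _ fun k _ => ?_)
    exact posSemidef_self_mul_conjTranspose _
  have hfro : ∀ k, trace (X * P k * Xᴴ) = (fro (X * P k) : ℂ) := by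
    intro k
    rw [← trace_self_eq_fro', conjTranspose_mul, hP, ← Matrix.mul_assoc, Matrix.mul_assoc X (P k) (P k), hP2]
  have h := (Complex.le_def.mp (h2.mul_mul_conjTranspose_same X).trace_nonneg).1
  have e1 : trace (X * ((4 : ℂ) • R - (3 : ℂ) • 1 + ∑ k, P k) * Xᴴ)
      = 4 * trace (X * R * Xᴴ) - 3 * (fro X : ℂ) + ∑ k, (fro (X * P k) : ℂ) := by
    rw [← trace_self_eq_fro' X]
    simp only [← hfro]
    simp only [Matrix.mul_add, Matrix.mul_sub, Matrix.add_mul, Matrix.sub_mul, Matrix.mul_smul,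
      Matrix.smul_mul, Matrix.mul_one, trace_add, trace_sub, trace_smul, Matrix.mul_sum,
      Matrix.sum_mul, trace_sum, smul_eq_mul]
  rw [e1] at h
  -- `Xᴴ = P i * Xᴴ` turns the cross terms into the quadratic form of `R`.
  have hX' : P i * Xᴴ = Xᴴ := by rw [← hP i, ← conjTranspose_mul, hX]
  have e2 : (fro (X * ((2 : ℂ) • (R * P i)) - X) : ℂ)
      = (fro (X * ((2 : ℂ) • (R * P i))) : ℂ) - 4 * trace (X * R * Xᴴ) + fro X := by
    rw [← trace_self_eq_fro', ← trace_self_eq_fro', ← trace_self_eq_fro']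
    rw [conjTranspose_sub, Matrix.sub_mul, Matrix.mul_sub, Matrix.mul_sub]
    have c1 : X * ((2 : ℂ) • (R * P i)) * Xᴴ = (2 : ℂ) • (X * R * Xᴴ) := by
      rw [Matrix.mul_smul, Matrix.smul_mul, ← Matrix.mul_assoc, Matrix.mul_assoc _ (P i), hX']
    have c2 : X * (X * ((2 : ℂ) • (R * P i)))ᴴ = (2 : ℂ) • (X * R * Xᴴ) := by
      have := congrArg conjTranspose c1
      rw [conjTranspose_mul, conjTranspose_conjTranspose] at this
      rw [this, conjTranspose_smul, conjTranspose_mul, conjTranspose_mul, hR]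
      simp [Matrix.mul_assoc]
    rw [c1, c2]
    simp only [trace_sub, trace_smul, smul_eq_mul]
    ring
  have e3 := congrArg Complex.re e2
  have hi : fro (X * P i) = fro X := by rw [hX]
  have hs := Finset.add_sum_erase Finset.univ (fun k => fro (X * P k)) (Finset.mem_univ i)
  simp only [Complex.ofReal_re, Complex.add_re, Complex.sub_re, Complex.mul_re, Complex.re_ofNat,
    Complex.im_ofNat, zero_mul, sub_zero, Complex.zero_re, Complex.re_sum] at e3 h
  change fro (X * ((2 : ℂ) • (R * P i)) - X) ≤ _
  linarith

end Packing

/-! ### Random phases -/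

/-- Average of a real function over a finite type. -/
def av {Ω : Type*} [Fintype Ω] (f : Ω → ℝ) : ℝ := (∑ s, f s) / Fintype.card Ω

section Av
variable {Ω : Type*} [Fintype Ω]

lemma av_mono {f g : Ω → ℝ} (h : ∀ s, f s ≤ g s) : av f ≤ av g :=
  div_le_div_of_nonneg_right (Finset.sum_le_sum fun s _ => h s) (Nat.cast_nonneg _)

lemma av_add (f g : Ω → ℝ) : av (fun s => f s + g s) = av f + av g := by
  simp [av, Finset.sum_add_distrib, add_div]

lemma av_sum {ι : Type*} (t : Finset ι) (f : ι → Ω → ℝ) :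
    av (fun s => ∑ i ∈ t, f i s) = ∑ i ∈ t, av (f i) := by
  simp only [av]
  rw [Finset.sum_comm, Finset.sum_div]

lemma av_mul_left (c : ℝ) (f : Ω → ℝ) : av (fun s => c * f s) = c * av f := by
  simp only [av, ← Finset.mul_sum]
  ring

lemma av_const [Nonempty Ω] (c : ℝ) : av (fun _ : Ω => c) = c := by
  have : (Fintype.card Ω : ℝ) ≠ 0 := Nat.cast_ne_zero.mpr Fintype.card_ne_zero
  simp [av]

lemma exists_le_av [Nonempty Ω] (f : Ω → ℝ) : ∃ s, f s ≤ av f := by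
  by_contra! h
  have : ∑ s : Ω, av f < ∑ s, f s := Finset.sum_lt_sum_of_nonempty Finset.univ_nonempty fun s _ => h s
  have hc : (0 : ℝ) < Fintype.card Ω := Nat.cast_pos.mpr Fintype.card_pos
  simp only [Finset.sum_const, Finset.card_univ, nsmul_eq_mul] at this
  rw [av, mul_div_cancel₀ _ hc.ne'] at this
  exact lt_irrefl _ this

lemma av_nonneg {f : Ω → ℝ} (h : ∀ s, 0 ≤ f s) : 0 ≤ av f :=
  div_nonneg (Finset.sum_nonneg fun s _ => h s) (Nat.cast_nonneg _)

/-- Averaging may be carried out first over one resampled coordinate. -/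
lemma av_resample {I S : Type*} [Fintype I] [DecidableEq I] [Fintype S] [Nonempty S]
    (i : I) (F : (I → S) → ℝ) (c : ℝ) (h : ∀ s, av (fun a => F (Function.update s i a)) ≤ c) :
    av F ≤ c := by
  have hS : (0 : ℝ) < Fintype.card S := Nat.cast_pos.mpr Fintype.card_pos
  have hI : (0 : ℝ) < Fintype.card (I → S) := Nat.cast_pos.mpr Fintype.card_pos
  rw [av, div_le_iff₀ hI]
  have key : ∑ s : I → S, ∑ a, F (Function.update s i a) = Fintype.card S * ∑ s, F s := by
    rw [← (Equiv.funSplitAt i S).symm.sum_comp, ← (Equiv.funSplitAt i S).symm.sum_comp,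
      Fintype.sum_prod_type, Fintype.sum_prod_type]
    have : ∀ (b a : S) (r : {j // j ≠ i} → S),
        Function.update ((Equiv.funSplitAt i S).symm (b, r)) i a
          = (Equiv.funSplitAt i S).symm (a, r) := by
      intro b a r
      ext j
      by_cases hj : j = i
      · subst hj; simp [Equiv.funSplitAt, Equiv.piSplitAt]
      · simp [Equiv.funSplitAt, Equiv.piSplitAt, hj]
    simp only [this, Finset.sum_const, Finset.card_univ, nsmul_eq_mul]
    rw [Finset.sum_comm]
  have h2 : ∑ s : I → S, ∑ a, F (Function.update s i a) ≤ ∑ s : I → S, c * Fintype.card S :=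
    Finset.sum_le_sum fun s _ => (div_le_iff₀ hS).mp (h s)
  rw [key] at h2
  simp only [Finset.sum_const, Finset.card_univ, nsmul_eq_mul] at h2
  nlinarith

end Av

/-- The fourth root of unity attached to `k`; independent uniform values serve as random phases. -/
def ph (k : ZMod 4) : ℂ := Complex.I ^ k.val

lemma ph_add_one (k : ZMod 4) : ph (k + 1) = Complex.I * ph k := by
  have h : ∀ k : ZMod 4, (k + 1).val = k.val + 1 ∨ ((k + 1).val = 0 ∧ k.val = 3) := by decide
  rcases h k with h | ⟨h, h'⟩
  · rw [ph, ph, h, pow_succ, mul_comm]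
  · rw [ph, ph, h, h']
    simp [pow_succ]

lemma normSq_ph (k : ZMod 4) : Complex.normSq (ph k) = 1 := by
  simp [ph]

lemma ph_mul_conj (k : ZMod 4) : ph k * star (ph k) = 1 := by
  rw [Complex.star_def, Complex.mul_conj, normSq_ph]; simp

section Phases
variable {T : Type*} [Fintype T] [DecidableEq T]

omit [Fintype T] in
lemma ph_shift (s : T → ZMod 4) (k t : T) :
    ph ((s + Pi.single k 1 : T → ZMod 4) t) = (if t = k then Complex.I else 1) * ph (s t) := by
  by_cases h : t = k
  · subst h; simp [ph_add_one]
  · simp [h]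

/-- A function on phases which is an eigenvector of a coordinate shift, with eigenvalue not `1`,
sums to zero. -/
lemma sum_eq_zero_of_shift (F : (T → ZMod 4) → ℂ) (k : T) (w : ℂ) (hw : w ≠ 1)
    (h : ∀ s, F (s + Pi.single k 1) = w * F s) : ∑ s, F s = 0 := by
  have e : ∑ s, F s = w * ∑ s, F s := by
    have := Equiv.sum_comp (Equiv.addRight (Pi.single k 1 : T → ZMod 4)) F
    rw [Finset.mul_sum, ← this]
    exact Finset.sum_congr rfl fun s _ => h s
  have : (1 - w) * ∑ s, F s = 0 := by linear_combination e
  rcases mul_eq_zero.mp this with h | h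
  · exact absurd (sub_eq_zero.mp h).symm hw
  · exact h

lemma I_ne_one : Complex.I ≠ 1 := fun h => by simpa using congrArg Complex.re h

/-- Orthogonality of the phases of two distinct coordinates. -/
lemma phase_two {a b : T} (hab : a ≠ b) :
    ∑ s : T → ZMod 4, ph (s a) * star (ph (s b)) = 0 := by
  refine sum_eq_zero_of_shift _ a Complex.I I_ne_one fun s => ?_
  rw [ph_shift, ph_shift, if_pos rfl, if_neg hab.symm, one_mul]
  ring

/-- Orthogonality of the products `conj (ph a) * ph b`, `a ≠ b`, for distinct ordered pairs. Fourth
roots of unity suffice: square roots would identify the pairs `(a, b)` and `(b, a)`. -/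
lemma phase_four {a b c d : T} (hab : a ≠ b) (hcd : c ≠ d) (h : ¬ (a = c ∧ b = d)) :
    ∑ s : T → ZMod 4, (star (ph (s a)) * ph (s b)) * star (star (ph (s c)) * ph (s d)) = 0 := by
  have n1 : (-Complex.I) ≠ 1 := fun h => by simpa using congrArg Complex.re h
  have n2 : (-1 : ℂ) ≠ 1 := by norm_num
  by_cases hac : a = c
  · have hbd : b ≠ d := fun hbd => h ⟨hac, hbd⟩
    subst hac
    refine sum_eq_zero_of_shift _ b Complex.I I_ne_one fun s => ?_
    simp only [ph_shift, if_true, if_neg hab, if_neg hbd.symm]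
    simp only [star_mul', star_star, star_one]
    ring
  · by_cases had : a = d
    · subst had
      refine sum_eq_zero_of_shift _ a (-1) n2 fun s => ?_
      simp only [ph_shift, if_true, if_neg hab.symm, if_neg hcd]
      simp only [star_mul', star_one, Complex.star_def, Complex.conj_I, Complex.conj_conj]
      linear_combination (-(starRingEnd ℂ) (ph (s a)) * ph (s b) * (ph (s c)
        * (starRingEnd ℂ) (ph (s a))) ) * (- Complex.I_sq)
    · refine sum_eq_zero_of_shift _ a (-Complex.I) n1 fun s => ?_
      simp only [ph_shift, if_true, if_neg hab.symm, if_neg (Ne.symm hac), if_neg (Ne.symm had)]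
      simp only [star_mul', star_one, Complex.star_def, Complex.conj_I, Complex.conj_conj]
      ring

/-- Parseval's identity for an orthogonal family of unimodular functions. -/
lemma parseval {Ω X : Type*} [Fintype Ω] [Fintype X] (e : X → Ω → ℂ)
    (h1 : ∀ x s, e x s * star (e x s) = 1)
    (h2 : ∀ x y, x ≠ y → ∑ s, e x s * star (e y s) = 0) (A : X → ℂ) :
    ∑ s, Complex.normSq (∑ x, e x s * A x) = Fintype.card Ω * ∑ x, Complex.normSq (A x) := by
  have key : ∀ x, ∑ y, ∑ s, (e x s * A x) * star (e y s * A y)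
      = (Fintype.card Ω * Complex.normSq (A x) : ℂ) := by
    intro x
    rw [Finset.sum_eq_single x]
    · have : ∀ s, (e x s * A x) * star (e x s * A x) = (Complex.normSq (A x) : ℂ) := by
        intro s
        rw [star_mul', ← Complex.mul_conj]
        calc _ = (e x s * star (e x s)) * (A x * star (A x)) := by ring
          _ = _ := by rw [h1]; simp
      rw [Finset.sum_congr rfl fun s _ => this s]
      simp
    · intro y _ hy
      have : ∀ s, (e x s * A x) * star (e y s * A y) = (e x s * star (e y s)) * (A x * star (A y)) := by
        intro s
        rw [star_mul']; ring
      simp only [this, ← Finset.sum_mul, h2 x y hy.symm, zero_mul]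
    · simp
  have : (∑ s, ((Complex.normSq (∑ x, e x s * A x) : ℝ) : ℂ))
      = ∑ x, ((Fintype.card Ω : ℂ) * ((Complex.normSq (A x) : ℝ) : ℂ)) := by
    simp only [← key]
    calc _ = ∑ s, ∑ x, ∑ y, (e x s * A x) * star (e y s * A y) := by
          refine Finset.sum_congr rfl fun s _ => ?_
          rw [← Complex.mul_conj, map_sum, Finset.sum_mul_sum]
          rfl
      _ = _ := by
          rw [Finset.sum_comm]
          refine Finset.sum_congr rfl fun x _ => ?_
          rw [Finset.sum_comm]
  rw [Finset.mul_sum]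
  exact_mod_cast this

lemma phase_parseval (A : T → ℂ) :
    av (fun s : T → ZMod 4 => Complex.normSq (∑ t, ph (s t) * A t)) = ∑ t, Complex.normSq (A t) := by
  have hI : (Fintype.card (T → ZMod 4) : ℝ) ≠ 0 := Nat.cast_ne_zero.mpr Fintype.card_ne_zero
  rw [av, parseval (fun t (s : T → ZMod 4) => ph (s t)) (fun _ _ => ph_mul_conj _)
    (fun _ _ h => phase_two h), mul_div_cancel_left₀ _ hI]

/-- Second moment of a quadratic form in random phases. -/
lemma phase_quadratic (A : Matrix T T ℂ) :
    av (fun s : T → ZMod 4 => Complex.normSq (∑ a, ∑ b, star (ph (s a)) * ph (s b) * A a b))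
      ≤ Complex.normSq (trace A) + fro A := by
  have hI : (Fintype.card (T → ZMod 4) : ℝ) ≠ 0 := Nat.cast_ne_zero.mpr Fintype.card_ne_zero
  let e : Option {p : T × T // p.1 ≠ p.2} → (T → ZMod 4) → ℂ := fun x s =>
    match x with
    | none => 1
    | some p => star (ph (s p.1.1)) * ph (s p.1.2)
  let B : Option {p : T × T // p.1 ≠ p.2} → ℂ := fun x =>
    match x with
    | none => trace A
    | some p => A p.1.1 p.1.2
  have hone : ∀ k l, star (ph k) * ph l * star (star (ph k) * ph l) = 1 := by
    intro k l
    rw [star_mul', star_star]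
    calc _ = (ph k * star (ph k)) * (ph l * star (ph l)) := by ring
      _ = 1 := by rw [ph_mul_conj, ph_mul_conj, one_mul]
  have he1 : ∀ x s, e x s * star (e x s) = 1 := by
    rintro (_ | p) s
    · simp [e]
    · exact hone _ _
  have he2 : ∀ x y, x ≠ y → ∑ s, e x s * star (e y s) = 0 := by
    rintro (_ | p) (_ | q) hxy
    · exact absurd rfl hxy
    · simp only [e, one_mul, star_mul', star_star]
      exact phase_two q.2
    · simp only [e, star_one, mul_one]
      rw [← phase_two p.2.symm]
      exact Finset.sum_congr rfl fun s _ => mul_comm _ _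
    · refine phase_four p.2 q.2 fun h => hxy ?_
      rw [Subtype.ext (Prod.ext h.1 h.2)]
  have hsplit : ∀ s : T → ZMod 4, ∑ a, ∑ b, star (ph (s a)) * ph (s b) * A a b = ∑ x, e x s * B x := by
    intro s
    rw [Fintype.sum_option, ← Fintype.sum_prod_type' (f := fun a b => star (ph (s a)) * ph (s b) * A a b),
      ← Finset.sum_filter_add_sum_filter_not _ (fun p : T × T => p.1 = p.2)]
    congr 1
    · rw [Finset.sum_filter, Fintype.sum_prod_type]
      simp only [e, B, one_mul, trace, diag]
      refine Finset.sum_congr rfl fun a _ => ?_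
      simp only [Finset.sum_ite_eq, Finset.mem_univ, if_true]
      rw [mul_comm (star _), ph_mul_conj, one_mul]
    · rw [← Finset.sum_subtype (Finset.univ.filter fun p : T × T => ¬ p.1 = p.2) (by simp)
        (fun p => star (ph (s p.1)) * ph (s p.2) * A p.1 p.2)]
  simp only [hsplit]
  rw [av, parseval e he1 he2 B, mul_div_cancel_left₀ _ hI, Fintype.sum_option]
  have : ∑ p : {p : T × T // p.1 ≠ p.2}, Complex.normSq (B (some p)) ≤ fro A := by
    rw [fro, ← Fintype.sum_prod_type' (f := fun a b => Complex.normSq (A a b)),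
      ← Finset.sum_subtype (Finset.univ.filter fun p : T × T => ¬ p.1 = p.2) (by simp)
        (fun p => Complex.normSq (A p.1 p.2))]
    exact Finset.sum_le_sum_of_subset_of_nonneg (Finset.subset_univ _)
      fun _ _ _ => Complex.normSq_nonneg _
  simpa [B] using this

lemma phase_fro {α β : Type*} [Fintype α] [Fintype β] (Z : T → Matrix α β ℂ) :
    av (fun s : T → ZMod 4 => fro (∑ t, ph (s t) • Z t)) = ∑ t, fro (Z t) := by
  simp only [fro, av_sum, Matrix.sum_apply, Matrix.smul_apply, smul_eq_mul, phase_parseval]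
  calc _ = ∑ i, ∑ t, ∑ j, Complex.normSq (Z t i j) :=
        Finset.sum_congr rfl fun i _ => Finset.sum_comm
    _ = _ := Finset.sum_comm

end Phases

/-! ### Phased one-way protocols -/

/-- A one-way protocol in which Charlie measures `M` on his system and announces the outcome `y`,
and Bob then measures `Bo y` to guess a message in `J`. Both measurements may be incomplete. -/
structure SubProtocol (β γ J : Type) [Fintype β] [Fintype γ] [Fintype J] where
  Y : Type
  fin : Fintype Y
  M : Y → Matrix γ γ ℂ
  Bo : Y → J → Matrix β β ℂ
  M_psd : ∀ y, (M y).PosSemidef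
  M_le : (1 - ∑ y, M y).PosSemidef
  Bo_psd : ∀ y j, (Bo y j).PosSemidef
  Bo_le : ∀ y, (1 - ∑ j, Bo y j).PosSemidef

attribute [instance] SubProtocol.fin

/-- Probability that Bob guesses `j` when the shared pure state has coefficient matrix `W`
(rows indexed by Bob's basis); Charlie's operators enter transposed. -/
def SubProtocol.success {β γ J : Type} [Fintype β] [Fintype γ] [Fintype J]
    (Q : SubProtocol β γ J) (j : J) (W : Matrix β γ ℂ) : ℝ :=
  ∑ y, (trace (Wᴴ * Q.Bo y j * W * Q.M y)).re

section Phased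
variable {β γ : Type} [Fintype β] [Fintype γ]

/-- The vector of random phases in Charlie's space. -/
def phv (y : γ → ZMod 4) : γ → ℂ := fun z => ph (y z)

/-- Second moment of `X` applied to a random-phase vector. -/
lemma av_vsq_phv (X : Matrix β γ ℂ) : av (fun y => vsq (X *ᵥ phv y)) = fro X := by
  simp only [vsq, av_sum, mulVec, dotProduct, phv, fro]
  refine Finset.sum_congr rfl fun i _ => ?_
  rw [← phase_parseval]
  simp only [mul_comm]

/-- Second moment of the overlap of two conditional vectors of Bob, given Charlie's phases. -/
lemma av_ip_phv (X Z : Matrix β γ ℂ) :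
    av (fun y => Complex.normSq (star (X *ᵥ phv y) ⬝ᵥ (Z *ᵥ phv y)))
      ≤ Complex.normSq (trace (Xᴴ * Z)) + fro (Xᴴ * Z) := by
  refine le_trans (le_of_eq ?_) (phase_quadratic (Xᴴ * Z))
  congr 1
  funext y
  congr 1
  rw [star_mulVec, ← dotProduct_mulVec, mulVec_mulVec]
  simp only [dotProduct, mulVec, phv, Pi.star_apply, Finset.mul_sum]
  refine Finset.sum_congr rfl fun a _ => Finset.sum_congr rfl fun b _ => ?_
  ring

/-- The uniformly weighted random-phase vectors resolve the identity, so that they form a rank-one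
measurement. -/
lemma sum_phv : ∑ y : γ → ZMod 4, ((Fintype.card (γ → ZMod 4) : ℂ)⁻¹) •
    vecMulVec (phv y) (star (phv y)) = 1 := by
  have hI : (Fintype.card (γ → ZMod 4) : ℂ) ≠ 0 := Nat.cast_ne_zero.mpr Fintype.card_ne_zero
  ext a b
  rw [← Finset.smul_sum, Matrix.smul_apply, Matrix.sum_apply]
  simp only [vecMulVec_apply, phv, Pi.star_apply, smul_eq_mul]
  by_cases h : a = b
  · subst h
    simp only [ph_mul_conj, Finset.sum_const, Finset.card_univ, nsmul_eq_mul, mul_one,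
      one_apply_eq]
    exact inv_mul_cancel₀ hI
  · rw [phase_two h, one_apply_ne h, mul_zero]

/-- Joint outcome probability of two rank-one measurements. -/
lemma trace_rank_one (W : Matrix β γ ℂ) (m : β → ℂ) (c : γ → ℂ) :
    trace (Wᴴ * vecMulVec m (star m) * W * vecMulVec c (star c))
      = (Complex.normSq (star m ⬝ᵥ (W *ᵥ c)) : ℂ) := by
  rw [← vecMulVec_quad, mul_vecMulVec, trace_vecMulVec, star_mulVec, ← dotProduct_mulVec,
    dotProduct_comm]
  simp only [mulVec_mulVec, Matrix.mul_assoc]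

/-- Charlie measures with the random-phase vectors and Bob uses the pretty good measurement `pgm` of
the resulting conditional vectors. The success probability is controlled by the overlaps of the targets
`W k`, by the purities of the cross terms, and by the deviation of the actual state `V`. -/
lemma phased_protocol {J : Type} [Fintype J] (W : J → Matrix β γ ℂ) :
    ∃ Q : SubProtocol β γ J, ∀ (j : J) (V : Matrix β γ ℂ) (a : ℝ), 0 < a →
      3 * fro (W j) - 1 - ∑ k, (Complex.normSq (trace ((W k)ᴴ * W j)) + fro ((W k)ᴴ * W j))
        - a - fro (V - W j) / a ≤ Q.success j V := by
  choose μ h1 h2 h3 using fun y : γ → ZMod 4 => pgm fun j => W j *ᵥ phv y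
  have hI : (0 : ℝ) < Fintype.card (γ → ZMod 4) := Nat.cast_pos.mpr Fintype.card_pos
  have hI' : (0 : ℂ) ≤ (Fintype.card (γ → ZMod 4) : ℂ)⁻¹ := by
    have : ((Fintype.card (γ → ZMod 4) : ℂ)⁻¹) = (((Fintype.card (γ → ZMod 4) : ℝ)⁻¹ : ℝ) : ℂ) := by
      push_cast; rfl
    rw [this]
    exact_mod_cast (inv_pos.mpr hI).le
  refine ⟨⟨γ → ZMod 4, inferInstance,
    fun y => ((Fintype.card (γ → ZMod 4) : ℂ)⁻¹) • vecMulVec (phv y) (star (phv y)),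
    fun y j => vecMulVec (μ y j) (star (μ y j)),
    fun y => (posSemidef_vecMulVec_self_star _).smul hI', ?_,
    fun y j => posSemidef_vecMulVec_self_star _, h1⟩, ?_⟩
  · rw [sum_phv, sub_self]; exact PosSemidef.zero
  intro j V a ha
  have hs : ∀ y : γ → ZMod 4, 3 * vsq (W j *ᵥ phv y)
      + -(∑ k, Complex.normSq (star (W k *ᵥ phv y) ⬝ᵥ (W j *ᵥ phv y)) )
      + -(a + a⁻¹ * vsq ((V - W j) *ᵥ phv y) + 1)
      ≤ Complex.normSq (star (μ y j) ⬝ᵥ (V *ᵥ phv y)) := by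
    intro y
    have e : star (μ y j) ⬝ᵥ (V *ᵥ phv y)
        = star (μ y j) ⬝ᵥ (W j *ᵥ phv y) + star (μ y j) ⬝ᵥ ((V - W j) *ᵥ phv y) := by
      rw [← dotProduct_add, ← add_mulVec, add_sub_cancel]
    have i1 := h3 y j
    have i2 := two_re_dot_ge (μ y j) ((V - W j) *ᵥ phv y) ha
    have i3 := mul_le_mul_of_nonneg_left (h2 y j) ha.le
    have i4 : ∀ z : ℂ, 2 * z.re - 1 ≤ Complex.normSq z := fun z => by
      rw [Complex.normSq_apply]; nlinarith [sq_nonneg (z.re - 1), sq_nonneg z.im]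
    have i5 := i4 (star (μ y j) ⬝ᵥ (V *ᵥ phv y))
    have i6 := congrArg Complex.re e
    rw [Complex.add_re] at i6
    rw [div_eq_inv_mul] at i2
    linarith
  have hav := av_mono hs
  have e1 : av (fun y => Complex.normSq (star (μ y j) ⬝ᵥ (V *ᵥ phv y)))
      = ∑ y, (trace (Vᴴ * vecMulVec (μ y j) (star (μ y j)) * V *
        (((Fintype.card (γ → ZMod 4) : ℂ)⁻¹) • vecMulVec (phv y) (star (phv y))))).re := by
    rw [av, div_eq_inv_mul, Finset.mul_sum]
    refine Finset.sum_congr rfl fun y _ => ?_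
    rw [Matrix.mul_smul, trace_smul, trace_rank_one, smul_eq_mul]
    have : ((Fintype.card (γ → ZMod 4) : ℂ)⁻¹) = (((Fintype.card (γ → ZMod 4) : ℝ)⁻¹ : ℝ) : ℂ) := by
      push_cast; rfl
    rw [this, ← Complex.ofReal_mul, Complex.ofReal_re]
  rw [SubProtocol.success]
  refine le_trans ?_ (hav.trans e1.le)
  have neg : ∀ f : (γ → ZMod 4) → ℝ, av (fun y => -(f y)) = - av f := fun f => by
    have := av_mul_left (-1) f; simpa using this
  rw [av_add, av_add, av_mul_left, av_vsq_phv, neg, neg, av_sum, av_add, av_add, av_mul_left,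
    av_vsq_phv, av_const, av_const]
  have := Finset.sum_le_sum fun k (_ : k ∈ Finset.univ) => av_ip_phv (W k) (W j)
  rw [div_eq_inv_mul]
  linarith

end Phased

/-! ### Composition and completion of protocols -/

section Protocols
variable {β γ : Type} [Fintype β] [Fintype γ]

/-- A message-free second layer: with a single message Bob always guesses it. -/
lemma trivial_protocol {J : Type} [Fintype J] [Subsingleton J] :
    ∃ Q : SubProtocol β γ J, ∀ (j : J) (V : Matrix β γ ℂ), Q.success j V = fro V := by
  refine ⟨⟨Unit, inferInstance, fun _ => 1, fun _ _ => 1, fun _ => PosSemidef.one, ?_,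
    fun _ _ => PosSemidef.one, fun _ => ?_⟩, fun j V => ?_⟩
  · simpa using PosSemidef.zero
  · rcases isEmpty_or_nonempty J with h | ⟨⟨j⟩⟩
    · simpa using PosSemidef.one
    · have : Unique J := uniqueOfSubsingleton j
      simpa using PosSemidef.zero
  · simp [SubProtocol.success, trace_self_eq_fro]

/-- Charlie first applies the instrument with Kraus operators `K i` (acting from the right on
coefficient matrices) and both parties then run the protocol `Q i`. -/
lemma sequential_protocol {I J : Type} [Fintype I] [Fintype J] (K : I → Matrix γ γ ℂ)
    (hK : (1 - ∑ i, K i * (K i)ᴴ).PosSemidef) (Q : I → SubProtocol β γ J) :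
    ∃ R : SubProtocol β γ (I × J), ∀ i j (V : Matrix β γ ℂ),
      R.success (i, j) V = (Q i).success j (V * K i) := by
  refine ⟨⟨Σ i, (Q i).Y, inferInstance, fun y => K y.1 * (Q y.1).M y.2 * (K y.1)ᴴ,
    fun y p => if p.1 = y.1 then (Q y.1).Bo y.2 p.2 else 0,
    fun y => ((Q y.1).M_psd y.2).mul_mul_conjTranspose_same _, ?_, fun y p => ?_, fun y => ?_⟩, ?_⟩
  · have e : (1 - ∑ y : Σ i, (Q i).Y, K y.1 * (Q y.1).M y.2 * (K y.1)ᴴ)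
        = (1 - ∑ i, K i * (K i)ᴴ) + ∑ i, K i * (1 - ∑ y, (Q i).M y) * (K i)ᴴ := by
      rw [Fintype.sum_sigma]
      simp only [Matrix.mul_sub, Matrix.sub_mul, Matrix.mul_one, Finset.sum_sub_distrib,
        Matrix.mul_sum, Matrix.sum_mul]
      abel
    rw [e]
    exact hK.add (posSemidef_sum _ fun i _ => ((Q i).M_le).mul_mul_conjTranspose_same _)
  · split_ifs
    · exact (Q y.1).Bo_psd _ _
    · exact PosSemidef.zero
  · have : ∑ p : I × J, (if p.1 = y.1 then (Q y.1).Bo y.2 p.2 else 0)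
        = ∑ j, (Q y.1).Bo y.2 j := by
      rw [Fintype.sum_prod_type, Finset.sum_comm]
      simp
    rw [this]
    exact (Q y.1).Bo_le y.2
  · intro i j V
    simp only [SubProtocol.success]
    rw [Fintype.sum_sigma, Finset.sum_eq_single i]
    · refine Finset.sum_congr rfl fun y _ => ?_
      rw [if_pos rfl, conjTranspose_mul]
      congr 1
      rw [show (K i)ᴴ * Vᴴ * (Q i).Bo y j * (V * K i) * (Q i).M y
        = (K i)ᴴ * (Vᴴ * (Q i).Bo y j * V * (K i * (Q i).M y)) by simp only [Matrix.mul_assoc],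
        trace_mul_comm (K i)ᴴ]
      simp only [Matrix.mul_assoc]
    · intro i' _ hi'
      refine Finset.sum_eq_zero fun y _ => ?_
      simp [hi'.symm]
    · simp

/-- Local changes of basis, including relabelings of the bases. -/
lemma rotate_protocol {β' γ' : Type} [Fintype β'] [Fintype γ'] {J : Type} [Fintype J]
    (Q : SubProtocol β γ J) (Vb : Matrix β' β ℂ) (Vc : Matrix γ γ' ℂ)
    (hb : Vbᴴ * Vb = 1) (hb' : Vb * Vbᴴ = 1) (hc : Vc * Vcᴴ = 1) (hc' : Vcᴴ * Vc = 1) :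
    ∃ R : SubProtocol β' γ' J, ∀ j (W : Matrix β γ ℂ),
      R.success j (Vb * W * Vc) = Q.success j W := by
  refine ⟨⟨Q.Y, Q.fin, fun y => Vcᴴ * Q.M y * Vc, fun y j => Vb * Q.Bo y j * Vbᴴ,
    fun y => (Q.M_psd y).conjTranspose_mul_mul_same _, ?_,
    fun y j => (Q.Bo_psd y j).mul_mul_conjTranspose_same _, fun y => ?_⟩, fun j W => ?_⟩
  · have := (Q.M_le).conjTranspose_mul_mul_same Vc
    simpa only [Matrix.mul_sub, Matrix.sub_mul, Matrix.mul_one, hc', Matrix.mul_sum,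
      Matrix.sum_mul] using this
  · have := (Q.Bo_le y).mul_mul_conjTranspose_same Vb
    simpa only [Matrix.mul_sub, Matrix.sub_mul, Matrix.mul_one, hb', Matrix.mul_sum,
      Matrix.sum_mul] using this
  · simp only [SubProtocol.success]
    refine Finset.sum_congr rfl fun y _ => ?_
    congr 1
    have : (Vb * W * Vc)ᴴ * (Vb * Q.Bo y j * Vbᴴ) * (Vb * W * Vc) * (Vcᴴ * Q.M y * Vc)
        = Vcᴴ * (Wᴴ * ((Vbᴴ * Vb) * Q.Bo y j * (Vbᴴ * Vb)) * W * (Vc * Vcᴴ) * Q.M y * Vc) := by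
      simp only [conjTranspose_mul, Matrix.mul_assoc]
    rw [this, trace_mul_comm, hb, hc]
    simp only [Matrix.mul_assoc, Matrix.mul_one, Matrix.one_mul, hc]

/-- Incomplete measurements may be completed without lowering any success probability. -/
lemma complete_protocol {J : Type} [Fintype J] [Nonempty J] (Q : SubProtocol β γ J) :
    ∃ R : SubProtocol β γ J, ∑ y, R.M y = 1 ∧ (∀ y, ∑ j, R.Bo y j = 1) ∧
      ∀ j W, Q.success j W ≤ R.success j W := by
  obtain ⟨j₀⟩ := ‹Nonempty J›
  have s1 : ∀ X : Matrix β β ℂ, ∑ j, (if j = j₀ then X else 0) = X := fun X => by simp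
  have hp : ∀ (X : Matrix β β ℂ) j, X.PosSemidef → (if j = j₀ then X else 0).PosSemidef := by
    intro X j h
    split_ifs
    exacts [h, PosSemidef.zero]
  let M : Option Q.Y → Matrix γ γ ℂ := fun y => y.elim (1 - ∑ y, Q.M y) Q.M
  let Bo : Option Q.Y → J → Matrix β β ℂ := fun y j =>
    y.elim (if j = j₀ then 1 else 0) fun y => Q.Bo y j + if j = j₀ then 1 - ∑ j, Q.Bo y j else 0
  have hM : ∑ y, M y = 1 := by
    rw [Fintype.sum_option]; simp [M]
  have hMp : ∀ y, (M y).PosSemidef := by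
    rintro (_ | y)
    exacts [Q.M_le, Q.M_psd y]
  have hB : ∀ y, ∑ j, Bo y j = 1 := by
    rintro (_ | y)
    · exact s1 1
    · simp only [Bo, Option.elim, Finset.sum_add_distrib, s1, add_sub_cancel]
  have hBp : ∀ y j, (Bo y j).PosSemidef := by
    rintro (_ | y) j
    · exact hp _ _ PosSemidef.one
    · exact (Q.Bo_psd y j).add (hp _ _ (Q.Bo_le y))
  refine ⟨⟨Option Q.Y, inferInstance, M, Bo, hMp, ?_, hBp, fun y => ?_⟩, hM, hB, fun j W => ?_⟩
  · rw [hM, sub_self]; exact PosSemidef.zero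
  · rw [hB, sub_self]; exact PosSemidef.zero
  · simp only [SubProtocol.success]
    rw [Fintype.sum_option]
    refine le_add_of_nonneg_of_le ?_ (Finset.sum_le_sum fun y _ => ?_)
    · exact trace_mul_re_nonneg ((hBp _ _).conjTranspose_mul_mul_same W) (hMp _)
    · have e : Bo (some y) j = Q.Bo y j + if j = j₀ then 1 - ∑ j, Q.Bo y j else 0 := rfl
      rw [e, Matrix.mul_add, Matrix.add_mul, Matrix.add_mul, trace_add, Complex.add_re]
      have := trace_mul_re_nonneg ((hp _ j (Q.Bo_le y)).conjTranspose_mul_mul_same W) (Q.M_psd y)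
      simp only [M, Option.elim] at this ⊢
      linarith

end Protocols

/-- A complete protocol on the `n`-fold systems is a one-way LOCC measurement, with the
same success probabilities. -/
lemma locc_of_protocol {dB dC n N : ℕ}
    (Q : SubProtocol (Fin n → Fin dB) (Fin n → Fin dC) (Fin N))
    (hM : ∑ y, Q.M y = 1) (hB : ∀ y, ∑ j, Q.Bo y j = 1) :
    ∃ Np : Fin N → Matrix (Fin n → Fin dB × Fin dC) (Fin n → Fin dB × Fin dC) ℂ,
      IsOneWayLOCC Np ∧ ∀ j (φ : (Fin n → Fin dB × Fin dC) → ℂ),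
        (trace (pureState φ * Np j)).re
          = Q.success j (fun b c => φ fun k => (b k, c k)) := by
  let e := Fintype.equivFin Q.Y
  refine ⟨fun j f g => ∑ y, Q.Bo y j (fun k => (f k).1) (fun k => (g k).1)
    * (Q.M y)ᵀ (fun k => (f k).2) (fun k => (g k).2),
    ⟨Fintype.card Q.Y, fun x => (Q.M (e.symm x))ᵀ, fun x j => Q.Bo (e.symm x) j,
      fun x => (Q.M_psd _).transpose, ?_, fun x j => Q.Bo_psd _ _, fun x => hB _,
      fun j f g => ?_⟩, fun j φ => ?_⟩
  · rw [← transpose_sum, e.symm.sum_comp (fun y => Q.M y), hM, transpose_one]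
  · exact (e.symm.sum_comp fun y => Q.Bo y j (fun k => (f k).1) (fun k => (g k).1)
      * (Q.M y)ᵀ (fun k => (f k).2) (fun k => (g k).2)).symm
  · simp only [SubProtocol.success]
    rw [← Complex.re_sum]
    congr 1
    have key : ∀ F : (Fin n → Fin dB × Fin dC) → ℂ,
        ∑ f, F f = ∑ b : Fin n → Fin dB, ∑ c : Fin n → Fin dC, F fun k => (b k, c k) := by
      intro F
      rw [← Fintype.sum_prod_type' (f := fun (b : Fin n → Fin dB) (c : Fin n → Fin dC) =>
        F fun k => (b k, c k))]
      exact ((Equiv.arrowProdEquivProdArrow (Fin n) (fun _ => Fin dB)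
        (fun _ => Fin dC)).symm.sum_comp F).symm
    have t1 : ∀ N : Matrix (Fin n → Fin dB × Fin dC) (Fin n → Fin dB × Fin dC) ℂ,
        trace (pureState φ * N) = ∑ f, ∑ g, φ f * star (φ g) * N g f := fun N => by
      simp only [trace, diag, mul_apply, pureState, vecMulVec_apply, Pi.star_apply]
    have t2 : ∀ (W : Matrix (Fin n → Fin dB) (Fin n → Fin dC) ℂ) (B : Matrix _ _ ℂ)
        (M : Matrix _ _ ℂ), trace (Wᴴ * B * W * M)
          = ∑ b, ∑ c, ∑ b', ∑ c', W b c * star (W b' c') * (B b' b * M c c') := by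
      intro W B M
      rw [Matrix.mul_assoc, trace_mul_comm]
      simp only [trace, diag, mul_apply, conjTranspose_apply, Finset.mul_sum, Finset.sum_mul]
      refine Finset.sum_congr rfl fun b _ => ?_
      calc _ = ∑ b', ∑ c', ∑ c, W b c * M c c' * (star (W b' c') * B b' b) := by
            rw [Finset.sum_comm]
        _ = ∑ b', ∑ c, ∑ c', W b c * star (W b' c') * (B b' b * M c c') := by
            refine Finset.sum_congr rfl fun b' _ => ?_
            rw [Finset.sum_comm]
            refine Finset.sum_congr rfl fun c _ => Finset.sum_congr rfl fun c' _ => ?_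
            ring
        _ = _ := Finset.sum_comm
    refine (t1 _).trans ?_
    symm
    refine (Finset.sum_congr rfl fun y _ => t2 _ _ _).trans ?_
    simp only [key, transpose_apply, Finset.mul_sum]
    rw [Finset.sum_comm]
    refine Finset.sum_congr rfl fun b _ => ?_
    rw [Finset.sum_comm]
    refine Finset.sum_congr rfl fun c _ => ?_
    rw [Finset.sum_comm]
    refine Finset.sum_congr rfl fun b' _ => ?_
    rw [Finset.sum_comm]

/-! ### Ensembles, truncation and row projectors -/

/-- A pure-state ensemble in local eigenbases: orthonormal coefficient matrices `A t` with
probabilities `p t`, whose average marginals are diagonal with entries `q` (Bob) and `r`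
(Charlie). -/
structure Ens (T β γ : Type) [Fintype T] [Fintype β] [Fintype γ] where
  p : T → ℝ
  q : β → ℝ
  r : γ → ℝ
  A : T → Matrix β γ ℂ
  p_nonneg : ∀ t, 0 ≤ p t
  p_sum : ∑ t, p t = 1
  ortho : ∀ s t, trace ((A s)ᴴ * A t) = if s = t then 1 else 0
  margB : ∑ t, (p t : ℂ) • (A t * (A t)ᴴ) = diagonal fun b => (q b : ℂ)
  margC : ∑ t, (p t : ℂ) • ((A t)ᴴ * A t) = diagonal fun c => (r c : ℂ)

/-- Truncation sets for an ensemble, with upper bounds on the retained probabilities, on the number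
of retained indices of Bob, and on the discarded mass. -/
structure Typical {T β γ : Type} [Fintype T] [Fintype β] [Fintype γ] (E : Ens T β γ) where
  TA : Finset T
  TB : Finset β
  TC : Finset γ
  pm : ℝ
  qm : ℝ
  rm : ℝ
  nB : ℝ
  er : ℝ
  pm_nonneg : 0 ≤ pm
  qm_nonneg : 0 ≤ qm
  rm_nonneg : 0 ≤ rm
  hp : ∀ t ∈ TA, E.p t ≤ pm
  hq : ∀ b ∈ TB, E.q b ≤ qm
  hr : ∀ c ∈ TC, E.r c ≤ rm
  card_le : (TB.card : ℝ) ≤ nB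
  mass_le : ∑ t ∈ TAᶜ, E.p t + ∑ b ∈ TBᶜ, E.q b + ∑ c ∈ TCᶜ, E.r c ≤ er

section General
variable {α β γ : Type*} [Fintype α] [Fintype β] [Fintype γ]

lemma fro_smul (c : ℂ) (X : Matrix α β ℂ) : fro (c • X) = Complex.normSq c * fro X := by
  simp [fro, Complex.normSq_mul, Finset.mul_sum]

/-- Coordinate truncation of a matrix. -/
def cut (TB : Finset β) (TC : Finset γ) (X : Matrix β γ ℂ) : Matrix β γ ℂ :=
  Matrix.of fun b c => if b ∈ TB ∧ c ∈ TC then X b c else 0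

lemma fro_cut_le (TB : Finset β) (TC : Finset γ) (X : Matrix β γ ℂ) :
    fro (cut TB TC X) ≤ fro X := by
  refine Finset.sum_le_sum fun b _ => Finset.sum_le_sum fun c _ => ?_
  simp only [cut, of_apply]
  split_ifs
  · rfl
  · simpa using Complex.normSq_nonneg _

lemma cut_eq_mul (TB : Finset β) (TC : Finset γ) (X : Matrix β γ ℂ) :
    cut TB TC X = diagonal (fun b => if b ∈ TB then (1 : ℂ) else 0) * X *
      diagonal (fun c => if c ∈ TC then (1 : ℂ) else 0) := by
  ext b c
  simp only [cut, of_apply, mul_diagonal, diagonal_mul]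
  by_cases hb : b ∈ TB <;> by_cases hc : c ∈ TC <;> simp [hb, hc]

lemma sum_compl_ite (S : Finset α) (f : α → ℝ) :
    ∑ x ∈ Sᶜ, f x = ∑ x, if x ∈ S then 0 else f x := by
  rw [Finset.sum_ite, Finset.sum_const_zero, zero_add]
  exact Finset.sum_congr (by ext; simp) fun _ _ => rfl

/-- Truncation discards at most the weight on the discarded rows plus that on the discarded columns. -/
lemma fro_cut_ge (TB : Finset β) (TC : Finset γ) (X : Matrix β γ ℂ) :
    fro (X - cut TB TC X) ≤ ∑ b ∈ TBᶜ, ∑ c, Complex.normSq (X b c)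
      + ∑ c ∈ TCᶜ, ∑ b, Complex.normSq (X b c) := by
  have e1 : ∑ b ∈ TBᶜ, ∑ c, Complex.normSq (X b c)
      = ∑ b, ∑ c, if b ∈ TB then 0 else Complex.normSq (X b c) := by
    rw [sum_compl_ite]
    refine Finset.sum_congr rfl fun b _ => ?_
    split_ifs <;> simp
  have e2 : ∑ c ∈ TCᶜ, ∑ b, Complex.normSq (X b c)
      = ∑ b, ∑ c, if c ∈ TC then 0 else Complex.normSq (X b c) := by
    rw [Finset.sum_comm]
    exact Finset.sum_congr rfl fun b _ => sum_compl_ite _ _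
  rw [e1, e2, ← Finset.sum_add_distrib]
  refine Finset.sum_le_sum fun b _ => ?_
  rw [← Finset.sum_add_distrib]
  refine Finset.sum_le_sum fun c _ => ?_
  have := Complex.normSq_nonneg (X b c)
  by_cases hb : b ∈ TB <;> by_cases hc : c ∈ TC <;> simp [cut, hb, hc, this]

/-- The orthogonal projection onto the row space of a matrix supported on the rows `TB`. -/
lemma exists_row_projector [DecidableEq γ] (TB : Finset β) (X : Matrix β γ ℂ)
    (hX : ∀ b, b ∉ TB → ∀ c, X b c = 0) :
    ∃ P : Matrix γ γ ℂ, Pᴴ = P ∧ P * P = P ∧ X * P = X ∧ fro P ≤ TB.card := by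
  have hH : (Xᴴ * X).IsHermitian := isHermitian_conjTranspose_mul_self X
  set V : Matrix γ γ ℂ := hH.eigenvectorUnitary.1 with hV
  have hV1 : Vᴴ * V = 1 := (Unitary.mem_iff.mp hH.eigenvectorUnitary.2).1
  have hV2 : V * Vᴴ = 1 := (Unitary.mem_iff.mp hH.eigenvectorUnitary.2).2
  have hspec : Xᴴ * X = V * diagonal (fun i => (hH.eigenvalues i : ℂ)) * Vᴴ := by
    have := hH.spectral_theorem
    rw [Unitary.conjStarAlgAut_apply] at this
    exact this
  set d : γ → ℂ := fun i => if hH.eigenvalues i = 0 then 0 else 1 with hd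
  have hdd : ∀ i, d i * d i = d i := fun i => by simp only [hd]; split_ifs <;> simp
  have hP : (V * diagonal d * Vᴴ)ᴴ = V * diagonal d * Vᴴ := by
    have : (diagonal d)ᴴ = diagonal d := by
      rw [diagonal_conjTranspose]; congr 1; ext i; simp only [hd, Pi.star_apply]; split_ifs <;> simp
    simp only [conjTranspose_mul, conjTranspose_conjTranspose, this, Matrix.mul_assoc]
  have hP2 : (V * diagonal d * Vᴴ) * (V * diagonal d * Vᴴ) = V * diagonal d * Vᴴ := by
    calc _ = V * diagonal d * (Vᴴ * V) * diagonal d * Vᴴ := by simp only [Matrix.mul_assoc]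
      _ = V * (diagonal d * diagonal d) * Vᴴ := by
        rw [hV1, Matrix.mul_one]; simp only [Matrix.mul_assoc]
      _ = _ := by rw [diagonal_mul_diagonal]; simp only [hdd]
  refine ⟨V * diagonal d * Vᴴ, hP, hP2, ?_, ?_⟩
  · have h0 : (Xᴴ * X) * (1 - V * diagonal d * Vᴴ) = 0 := by
      rw [Matrix.mul_sub, Matrix.mul_one, hspec]
      have : V * diagonal (fun i => (hH.eigenvalues i : ℂ)) * Vᴴ * (V * diagonal d * Vᴴ)
          = V * (diagonal (fun i => (hH.eigenvalues i : ℂ)) * ((Vᴴ * V) * diagonal d)) * Vᴴ := by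
        simp only [Matrix.mul_assoc]
      rw [this, hV1, Matrix.one_mul, diagonal_mul_diagonal]
      have : (fun i => (hH.eigenvalues i : ℂ) * d i) = fun i => (hH.eigenvalues i : ℂ) := by
        ext i; simp only [hd]; split_ifs with h <;> simp [h]
      rw [this, sub_self]
    have h1 : X * (1 - V * diagonal d * Vᴴ) = 0 := by
      rw [← Matrix.conjTranspose_mul_self_eq_zero, conjTranspose_mul, Matrix.mul_assoc,
        ← Matrix.mul_assoc Xᴴ, h0, Matrix.mul_zero]
    rw [Matrix.mul_sub, Matrix.mul_one, sub_eq_zero] at h1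
    exact h1.symm
  · have hr : (Xᴴ * X).rank ≤ TB.card := by
      rw [rank_conjTranspose_mul_self]
      have e : X = (Matrix.of fun (b : β) (b' : TB) => if b = b' then (1 : ℂ) else 0)
          * (Matrix.of fun (b' : TB) c => X b' c) := by
        ext b c
        simp only [mul_apply, of_apply, ite_mul, one_mul, zero_mul]
        by_cases hb : b ∈ TB
        · rw [Finset.sum_eq_single ⟨b, hb⟩]
          · simp
          · intro b' _ hb'
            rw [if_neg]
            rintro rfl
            exact hb' rfl
          · simp
        · rw [hX b hb, Finset.sum_eq_zero]
          rintro ⟨b', hb'⟩ _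
          rw [if_neg]
          rintro rfl
          exact hb hb'
      rw [e]
      refine (rank_mul_le_left _ _).trans ((rank_le_card_width _).trans ?_)
      simp
    have hf : fro (V * diagonal d * Vᴴ) = Fintype.card {i // hH.eigenvalues i ≠ 0} := by
      have : ((fro (V * diagonal d * Vᴴ) : ℝ) : ℂ) = Fintype.card {i // hH.eigenvalues i ≠ 0} := by
        rw [← trace_self_eq_fro, hP, hP2, trace_mul_comm, ← Matrix.mul_assoc, hV1, Matrix.one_mul,
          trace_diagonal, Fintype.card_subtype]
        simp [hd, Finset.sum_ite]
      exact_mod_cast this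
    rw [hf, ← hH.rank_eq_card_non_zero_eigs]
    exact_mod_cast hr

end General

/-! ### Random-phase superpositions of a truncated ensemble -/

section Block
variable {T β γ : Type} [Fintype T] [Fintype β] [Fintype γ] (E : Ens T β γ)

lemma Ens.fro_A (t : T) : fro (E.A t) = 1 := by
  have := E.ortho t t
  rw [trace_self_eq_fro, if_pos rfl] at this
  exact_mod_cast this

lemma Ens.fro_sum (c : T → ℂ) : fro (∑ t, c t • E.A t) = ∑ t, Complex.normSq (c t) := by
  have : ((fro (∑ t, c t • E.A t) : ℝ) : ℂ) = ((∑ t, Complex.normSq (c t) : ℝ) : ℂ) := by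
    rw [← trace_self_eq_fro, conjTranspose_sum, Matrix.sum_mul, trace_sum, Complex.ofReal_sum]
    refine Finset.sum_congr rfl fun s _ => ?_
    rw [Matrix.mul_sum, trace_sum, Finset.sum_eq_single s]
    · rw [conjTranspose_smul, smul_mul, Matrix.mul_smul, trace_smul, trace_smul, E.ortho, if_pos rfl,
        Complex.normSq_eq_conj_mul_self]
      simp
    · intro t _ ht
      rw [conjTranspose_smul, smul_mul, Matrix.mul_smul, trace_smul, trace_smul, E.ortho,
        if_neg ht.symm]
      simp
    · simp
  exact_mod_cast this

/-- Bessel's inequality for the Frobenius inner product. -/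
lemma Ens.bessel (Q : Matrix β γ ℂ) : ∑ t, Complex.normSq (trace (Qᴴ * E.A t)) ≤ fro Q := by
  set c : T → ℂ := fun t => star (trace (Qᴴ * E.A t)) with hc
  have h0 := fro_nonneg (Q - ∑ t, c t • E.A t)
  have h1 : trace (Qᴴ * ∑ t, c t • E.A t) = ((∑ t, Complex.normSq (trace (Qᴴ * E.A t)) : ℝ) : ℂ) := by
    rw [Matrix.mul_sum, trace_sum, Complex.ofReal_sum]
    refine Finset.sum_congr rfl fun t _ => ?_
    rw [Matrix.mul_smul, trace_smul, Complex.normSq_eq_conj_mul_self]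
    rfl
  have h2 : trace ((∑ t, c t • E.A t)ᴴ * Q)
      = ((∑ t, Complex.normSq (trace (Qᴴ * E.A t)) : ℝ) : ℂ) := by
    have := congrArg star h1
    rw [← trace_conjTranspose, conjTranspose_mul, conjTranspose_conjTranspose] at this
    rw [this]
    simp
  have h3 : ((fro (Q - ∑ t, c t • E.A t) : ℝ) : ℂ)
      = ((fro Q - ∑ t, Complex.normSq (trace (Qᴴ * E.A t)) : ℝ) : ℂ) := by
    rw [← trace_self_eq_fro, conjTranspose_sub, Matrix.sub_mul, Matrix.mul_sub, Matrix.mul_sub,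
      trace_sub, trace_sub, trace_sub, h1, h2, trace_self_eq_fro, trace_self_eq_fro, E.fro_sum]
    simp [hc]
  have h4 : fro (Q - ∑ t, c t • E.A t) = fro Q - ∑ t, Complex.normSq (trace (Qᴴ * E.A t)) := by
    exact_mod_cast h3
  linarith

/-- The average of `fro (Z * A t)` is the norm of `Z` weighted by Bob's marginal `q`. -/
lemma Ens.marg_left {α : Type} [Fintype α] (Z : Matrix α β ℂ) :
    ∑ t, E.p t * fro (Z * E.A t) = ∑ i, ∑ b, E.q b * Complex.normSq (Z i b) := by
  have : ((∑ t, E.p t * fro (Z * E.A t) : ℝ) : ℂ)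
      = ((∑ i, ∑ b, E.q b * Complex.normSq (Z i b) : ℝ) : ℂ) := by
    calc _ = trace (Z * (∑ t, (E.p t : ℂ) • (E.A t * (E.A t)ᴴ)) * Zᴴ) := by
          rw [Matrix.mul_sum, Matrix.sum_mul, trace_sum, Complex.ofReal_sum]
          refine Finset.sum_congr rfl fun t _ => ?_
          rw [Complex.ofReal_mul, ← trace_self_eq_fro', conjTranspose_mul, Matrix.mul_smul,
            smul_mul, trace_smul, smul_eq_mul]
          simp only [Matrix.mul_assoc]
      _ = _ := by
          rw [E.margB]
          simp only [trace, diag, Complex.ofReal_sum, Complex.ofReal_mul]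
          refine Finset.sum_congr rfl fun i _ => Finset.sum_congr rfl fun b _ => ?_
          rw [← Complex.mul_conj]
          change (Z * diagonal fun b => (E.q b : ℂ) : Matrix α β ℂ) i b * Zᴴ b i = _
          rw [mul_diagonal, conjTranspose_apply, Complex.star_def]
          ring
  exact_mod_cast this

/-- The average of `fro (A t * Z)` is the norm of `Z` weighted by Charlie's marginal `r`. -/
lemma Ens.marg_right {α : Type} [Fintype α] (Z : Matrix γ α ℂ) :
    ∑ t, E.p t * fro (E.A t * Z) = ∑ c, ∑ j, E.r c * Complex.normSq (Z c j) := by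
  have : ((∑ t, E.p t * fro (E.A t * Z) : ℝ) : ℂ)
      = ((∑ c, ∑ j, E.r c * Complex.normSq (Z c j) : ℝ) : ℂ) := by
    calc _ = trace (Zᴴ * (∑ t, (E.p t : ℂ) • ((E.A t)ᴴ * E.A t)) * Z) := by
          rw [Matrix.mul_sum, Matrix.sum_mul, trace_sum, Complex.ofReal_sum]
          refine Finset.sum_congr rfl fun t _ => ?_
          rw [Complex.ofReal_mul, ← trace_self_eq_fro, conjTranspose_mul, Matrix.mul_smul,
            smul_mul, trace_smul, smul_eq_mul]
          simp only [Matrix.mul_assoc]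
      _ = _ := by
          rw [E.margC, Finset.sum_comm]
          simp only [trace, diag, Complex.ofReal_sum, Complex.ofReal_mul]
          refine Finset.sum_congr rfl fun i _ => Finset.sum_congr rfl fun b _ => ?_
          rw [← Complex.mul_conj]
          change (Zᴴ * diagonal fun c => (E.r c : ℂ) : Matrix α γ ℂ) i b * Z b i = _
          rw [mul_diagonal, conjTranspose_apply, Complex.star_def]
          ring
  exact_mod_cast this

/-- The diagonal of the marginal condition on Bob's side. -/
lemma Ens.q_eq (b : β) : ∑ t, E.p t * ∑ c, Complex.normSq (E.A t b c) = E.q b := by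
  have := congrFun (congrFun E.margB b) b
  rw [diagonal_apply_eq, Matrix.sum_apply] at this
  have h : ((∑ t, E.p t * ∑ c, Complex.normSq (E.A t b c) : ℝ) : ℂ) = (E.q b : ℂ) := by
    rw [← this, Complex.ofReal_sum]
    refine Finset.sum_congr rfl fun t _ => ?_
    simp only [Matrix.smul_apply, mul_apply, conjTranspose_apply, Complex.ofReal_mul,
      Complex.ofReal_sum, smul_eq_mul, ← Complex.mul_conj, Complex.star_def]
  exact_mod_cast h

/-- The diagonal of the marginal condition on Charlie's side. -/
lemma Ens.r_eq (c : γ) : ∑ t, E.p t * ∑ b, Complex.normSq (E.A t b c) = E.r c := by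
  have := congrFun (congrFun E.margC c) c
  rw [diagonal_apply_eq, Matrix.sum_apply] at this
  have h : ((∑ t, E.p t * ∑ b, Complex.normSq (E.A t b c) : ℝ) : ℂ) = (E.r c : ℂ) := by
    rw [← this, Complex.ofReal_sum]
    refine Finset.sum_congr rfl fun t _ => ?_
    simp only [Matrix.smul_apply, mul_apply, conjTranspose_apply, Complex.ofReal_mul,
      Complex.ofReal_sum, smul_eq_mul, Complex.normSq_eq_conj_mul_self, Complex.star_def]
  exact_mod_cast h

/-- The random-phase superposition of the ensemble; every choice of phases gives a unit vector. -/
def Ens.X (s : T → ZMod 4) : Matrix β γ ℂ := ∑ t, ph (s t) • ((Real.sqrt (E.p t) : ℂ) • E.A t)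

lemma Ens.normSq_sqrt (t : T) : Complex.normSq (Real.sqrt (E.p t) : ℂ) = E.p t := by
  rw [Complex.normSq_ofReal, Real.mul_self_sqrt (E.p_nonneg t)]

lemma Ens.fro_X (s : T → ZMod 4) : fro (E.X s) = 1 := by
  simp only [Ens.X, smul_smul]
  rw [E.fro_sum]
  simp only [Complex.normSq_mul, normSq_ph, one_mul, E.normSq_sqrt, E.p_sum]

variable {E} (Y : Typical E)

/-- The truncated ensemble members. -/
def Typical.B (t : T) : Matrix β γ ℂ := if t ∈ Y.TA then cut Y.TB Y.TC (E.A t) else 0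

/-- The truncation of the random-phase superposition. -/
def Typical.X (s : T → ZMod 4) : Matrix β γ ℂ := ∑ t, ph (s t) • ((Real.sqrt (E.p t) : ℂ) • Y.B t)

lemma cut_sum {ι : Type*} (S : Finset ι) (TB : Finset β) (TC : Finset γ) (f : ι → Matrix β γ ℂ) :
    cut TB TC (∑ i ∈ S, f i) = ∑ i ∈ S, cut TB TC (f i) := by
  simp only [cut_eq_mul, Matrix.mul_sum, Matrix.sum_mul]

lemma cut_smul (c : ℂ) (TB : Finset β) (TC : Finset γ) (f : Matrix β γ ℂ) :
    cut TB TC (c • f) = c • cut TB TC f := by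
  simp only [cut_eq_mul, Matrix.mul_smul, Matrix.smul_mul]

lemma Typical.X_eq_cut (s : T → ZMod 4) : Y.X s = cut Y.TB Y.TC
    (∑ t, (if t ∈ Y.TA then ph (s t) * Real.sqrt (E.p t) else 0) • E.A t) := by
  rw [cut_sum, Typical.X]
  refine Finset.sum_congr rfl fun t _ => ?_
  rw [cut_smul, Typical.B]
  split_ifs
  · rw [smul_smul]
  · simp

lemma Typical.fro_X_le (s : T → ZMod 4) : fro (Y.X s) ≤ 1 := by
  rw [Y.X_eq_cut]
  refine (fro_cut_le _ _ _).trans ?_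
  rw [E.fro_sum, ← E.p_sum]
  refine Finset.sum_le_sum fun t _ => ?_
  split_ifs
  · rw [Complex.normSq_mul, normSq_ph, one_mul, E.normSq_sqrt]
  · simpa using E.p_nonneg t

lemma Typical.X_apply_eq_zero (s : T → ZMod 4) (b : β) (hb : b ∉ Y.TB) (c : γ) : Y.X s b c = 0 := by
  rw [Y.X_eq_cut]
  simp [cut, hb]

lemma Typical.B_left {α : Type} [Fintype α] (Q : Matrix α β ℂ) :
    ∑ t, E.p t * fro (Q * Y.B t) ≤ Y.qm * fro Q := by
  have h : ∀ t, fro (Q * Y.B t)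
      ≤ fro (Q * diagonal (fun b => if b ∈ Y.TB then (1 : ℂ) else 0) * E.A t) := by
    intro t
    rw [Typical.B]
    split_ifs
    · rw [cut_eq_mul, ← Matrix.mul_assoc, ← Matrix.mul_assoc]
      refine Finset.sum_le_sum fun i _ => Finset.sum_le_sum fun c _ => ?_
      rw [mul_diagonal]
      split_ifs
      · rw [mul_one]
      · simpa using Complex.normSq_nonneg _
    · simpa [fro] using fro_nonneg _
  refine (Finset.sum_le_sum fun t _ => mul_le_mul_of_nonneg_left (h t) (E.p_nonneg t)).trans ?_
  rw [E.marg_left, fro, Finset.mul_sum]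
  refine Finset.sum_le_sum fun i _ => ?_
  rw [Finset.mul_sum]
  refine Finset.sum_le_sum fun b _ => ?_
  rw [mul_diagonal]
  split_ifs with hb
  · rw [mul_one]
    exact mul_le_mul_of_nonneg_right (Y.hq b hb) (Complex.normSq_nonneg _)
  · simpa using mul_nonneg Y.qm_nonneg (Complex.normSq_nonneg _)

lemma Typical.B_right {α : Type} [Fintype α] (Q : Matrix γ α ℂ) :
    ∑ t, E.p t * fro (Y.B t * Q) ≤ Y.rm * fro Q := by
  have h : ∀ t, fro (Y.B t * Q)
      ≤ fro (E.A t * (diagonal (fun c => if c ∈ Y.TC then (1 : ℂ) else 0) * Q)) := by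
    intro t
    rw [Typical.B]
    split_ifs
    · rw [cut_eq_mul, Matrix.mul_assoc, Matrix.mul_assoc]
      refine Finset.sum_le_sum fun i _ => Finset.sum_le_sum fun c _ => ?_
      rw [diagonal_mul]
      split_ifs
      · rw [one_mul]
      · simpa using Complex.normSq_nonneg _
    · simpa [fro] using fro_nonneg _
  refine (Finset.sum_le_sum fun t _ => mul_le_mul_of_nonneg_left (h t) (E.p_nonneg t)).trans ?_
  rw [E.marg_right, fro, Finset.mul_sum]
  refine Finset.sum_le_sum fun c _ => ?_
  rw [Finset.mul_sum]
  refine Finset.sum_le_sum fun j _ => ?_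
  rw [diagonal_mul]
  split_ifs with hb
  · rw [one_mul]
    exact mul_le_mul_of_nonneg_right (Y.hr c hb) (Complex.normSq_nonneg _)
  · simpa using mul_nonneg Y.rm_nonneg (Complex.normSq_nonneg _)

/-- Bob's side of the truncated superposition is spread out: a fixed operator `Q` captures on average
at most the fraction `qm` of its norm. -/
lemma Typical.av_left {α : Type} [Fintype α] (Q : Matrix α β ℂ) :
    av (fun s => fro (Q * Y.X s)) ≤ Y.qm * fro Q := by
  refine le_trans (le_of_eq ?_) (Y.B_left Q)
  have : ∀ s : T → ZMod 4, Q * Y.X s = ∑ t, ph (s t) • ((Real.sqrt (E.p t) : ℂ) • (Q * Y.B t)) := by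
    intro s
    simp only [Typical.X, Matrix.mul_sum, Matrix.mul_smul]
  simp only [this]
  rw [phase_fro]
  simp only [fro_smul, E.normSq_sqrt]

/-- The counterpart of `Typical.av_left` on Charlie's side, with `rm`. -/
lemma Typical.av_right {α : Type} [Fintype α] (Q : Matrix γ α ℂ) :
    av (fun s => fro (Y.X s * Q)) ≤ Y.rm * fro Q := by
  refine le_trans (le_of_eq ?_) (Y.B_right Q)
  have : ∀ s : T → ZMod 4, Y.X s * Q = ∑ t, ph (s t) • ((Real.sqrt (E.p t) : ℂ) • (Y.B t * Q)) := by
    intro s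
    simp only [Typical.X, Matrix.sum_mul, Matrix.smul_mul]
  simp only [this]
  rw [phase_fro]
  simp only [fro_smul, E.normSq_sqrt]

lemma trace_cut (TB : Finset β) (TC : Finset γ) (Q X : Matrix β γ ℂ) :
    trace (Qᴴ * cut TB TC X) = trace ((cut TB TC Q)ᴴ * X) := by
  simp only [trace, diag, mul_apply, conjTranspose_apply, cut, of_apply]
  refine Finset.sum_congr rfl fun c _ => Finset.sum_congr rfl fun b _ => ?_
  split_ifs <;> simp

/-- A truncated superposition with random phases is nearly orthogonal to any fixed `Q`, by Bessel's
inequality and the bound `pm` on the retained weights. -/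
lemma Typical.av_ip (Q : Matrix β γ ℂ) :
    av (fun s => Complex.normSq (trace (Qᴴ * Y.X s))) ≤ Y.pm * fro Q := by
  have e : ∀ s : T → ZMod 4, trace (Qᴴ * Y.X s)
      = ∑ t, ph (s t) * ((Real.sqrt (E.p t) : ℂ) * trace (Qᴴ * Y.B t)) := by
    intro s
    simp only [Typical.X, Matrix.mul_sum, Matrix.mul_smul, trace_sum, trace_smul, smul_eq_mul]
  simp only [e]
  rw [phase_parseval]
  refine le_trans ?_ (mul_le_mul_of_nonneg_left
    ((E.bessel (cut Y.TB Y.TC Q)).trans (fro_cut_le _ _ _)) Y.pm_nonneg)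
  rw [Finset.mul_sum]
  refine Finset.sum_le_sum fun t _ => ?_
  rw [Complex.normSq_mul, E.normSq_sqrt, Typical.B]
  split_ifs with h
  · rw [trace_cut]
    exact mul_le_mul_of_nonneg_right (Y.hp t h) (Complex.normSq_nonneg _)
  · simpa using mul_nonneg Y.pm_nonneg (Complex.normSq_nonneg _)

/-- The average truncation error is at most the discarded probability. -/
lemma Typical.av_err :
    av (fun s => fro (E.X s - Y.X s)) ≤ Y.er := by
  refine le_trans (le_of_eq_of_le ?_ (?_ : ∑ t, E.p t * fro (E.A t - Y.B t) ≤ _)) Y.mass_le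
  · have : ∀ s : T → ZMod 4, E.X s - Y.X s
        = ∑ t, ph (s t) • ((Real.sqrt (E.p t) : ℂ) • (E.A t - Y.B t)) := by
      intro s
      simp only [Ens.X, Typical.X, smul_sub, Finset.sum_sub_distrib]
    simp only [this]
    rw [phase_fro]
    simp only [fro_smul, E.normSq_sqrt]
  · have h : ∀ t, E.p t * fro (E.A t - Y.B t) ≤ (if t ∈ Y.TA then 0 else E.p t)
        + (E.p t * ∑ b ∈ Y.TBᶜ, ∑ c, Complex.normSq (E.A t b c)
          + E.p t * ∑ c ∈ Y.TCᶜ, ∑ b, Complex.normSq (E.A t b c)) := by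
      intro t
      rw [← mul_add]
      by_cases h : t ∈ Y.TA
      · rw [if_pos h, zero_add, Typical.B, if_pos h]
        exact mul_le_mul_of_nonneg_left (fro_cut_ge _ _ _) (E.p_nonneg t)
      · rw [if_neg h, Typical.B, if_neg h, sub_zero, E.fro_A, mul_one]
        refine le_add_of_nonneg_right (mul_nonneg (E.p_nonneg t) (add_nonneg ?_ ?_)) <;>
        exact Finset.sum_nonneg fun _ _ => Finset.sum_nonneg fun _ _ => Complex.normSq_nonneg _
    refine (Finset.sum_le_sum fun t _ => h t).trans (le_of_eq ?_)
    rw [Finset.sum_add_distrib, Finset.sum_add_distrib, ← sum_compl_ite, add_assoc]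
    congr 1
    congr 1
    · simp only [← E.q_eq]
      rw [Finset.sum_comm]
      simp only [Finset.mul_sum]
    · simp only [← E.r_eq]
      rw [Finset.sum_comm]
      simp only [Finset.mul_sum]

lemma Typical.fro_B_le (t : T) : fro (Y.B t) ≤ 1 := by
  rw [Typical.B]
  split_ifs
  · exact (fro_cut_le _ _ _).trans (E.fro_A t).le
  · simp [fro]

lemma fro_gram {α : Type*} [Fintype α] (V : Matrix α γ ℂ) : fro (Vᴴ * V) = fro (V * Vᴴ) := by
  have : ((fro (Vᴴ * V) : ℝ) : ℂ) = ((fro (V * Vᴴ) : ℝ) : ℂ) := by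
    rw [← trace_self_eq_fro, ← trace_self_eq_fro, conjTranspose_mul, conjTranspose_mul,
      conjTranspose_conjTranspose, trace_mul_comm (Vᴴ * V), Matrix.mul_assoc, trace_mul_comm]
    simp only [Matrix.mul_assoc]
  exact_mod_cast this

/-- The reduced states of the truncated superpositions are close to maximally mixed: on average
their purity is at most the sum of the largest marginal probabilities. -/
lemma Typical.av_purity : av (fun s => fro ((Y.X s)ᴴ * Y.X s)) ≤ Y.qm + Y.rm := by
  let D : T → Matrix β γ ℂ := fun t => (Real.sqrt (E.p t) : ℂ) • Y.B t
  let G : γ → γ → Matrix T T ℂ := fun c c' => Matrix.of fun t t' => ((D t)ᴴ * D t') c c'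
  have e : ∀ (s : T → ZMod 4) c c', ((Y.X s)ᴴ * Y.X s) c c'
      = ∑ a, ∑ b, star (ph (s a)) * ph (s b) * G c c' a b := by
    intro s c c'
    simp only [Typical.X, conjTranspose_sum, Matrix.sum_mul, Matrix.sum_apply, Matrix.mul_sum]
    rw [Finset.sum_comm]
    refine Finset.sum_congr rfl fun a _ => Finset.sum_congr rfl fun b _ => ?_
    rw [conjTranspose_smul, Matrix.smul_mul, Matrix.mul_smul, smul_smul]
    rfl
  have h1 : av (fun s => fro ((Y.X s)ᴴ * Y.X s))
      ≤ ∑ c, ∑ c', (Complex.normSq (trace (G c c')) + fro (G c c')) := by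
    simp only [fro, e, av_sum]
    exact Finset.sum_le_sum fun c _ => Finset.sum_le_sum fun c' _ => phase_quadratic _
  have hD : ∀ t t', fro ((D t)ᴴ * D t') = E.p t * (E.p t' * fro ((Y.B t)ᴴ * Y.B t')) := by
    intro t t'
    simp only [D, conjTranspose_smul, Matrix.smul_mul, Matrix.mul_smul, fro_smul, E.normSq_sqrt]
    rw [Complex.star_def, Complex.normSq_conj, E.normSq_sqrt]
    ring
  have hD' : ∀ t t', fro (D t * (D t')ᴴ) = E.p t' * (E.p t * fro (Y.B t * (Y.B t')ᴴ)) := by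
    intro t t'
    simp only [D, conjTranspose_smul, Matrix.smul_mul, Matrix.mul_smul, fro_smul, E.normSq_sqrt]
    rw [Complex.star_def, Complex.normSq_conj, E.normSq_sqrt]
  have hbound : ∀ (f : T → ℝ) (m : ℝ), 0 ≤ m → (∀ t, f t ≤ m * fro (Y.B t)) → ∑ t, E.p t * f t ≤ m := by
    intro f m hm hf
    calc _ ≤ ∑ t, E.p t * m := Finset.sum_le_sum fun t _ => mul_le_mul_of_nonneg_left
          ((hf t).trans (mul_le_of_le_one_right hm (Y.fro_B_le t))) (E.p_nonneg t)
      _ = m := by rw [← Finset.sum_mul, E.p_sum, one_mul]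
  have h2 : ∑ c, ∑ c', fro (G c c') ≤ Y.qm := by
    have : ∑ c, ∑ c', fro (G c c') = ∑ t, E.p t * ∑ t', E.p t' * fro ((Y.B t)ᴴ * Y.B t') := by
      simp only [Finset.mul_sum, ← hD]
      simp only [fro, G, of_apply]
      rw [← Fintype.sum_prod_type' (f := fun c c' => ∑ t, ∑ t', Complex.normSq (((D t)ᴴ * D t') c c')),
        Finset.sum_comm]
      refine Finset.sum_congr rfl fun t _ => ?_
      rw [Finset.sum_comm]
      refine Finset.sum_congr rfl fun t' _ => ?_
      rw [Fintype.sum_prod_type]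
    rw [this]
    refine hbound _ _ Y.qm_nonneg fun t => ?_
    have := Y.B_left (Y.B t)ᴴ
    rwa [fro_conjTranspose] at this
  have h3 : ∑ c, ∑ c', Complex.normSq (trace (G c c')) ≤ Y.rm := by
    let V : Matrix (T × β) γ ℂ := Matrix.of fun x c => D x.1 x.2 c
    have e1 : ∑ c, ∑ c', Complex.normSq (trace (G c c')) = fro (Vᴴ * V) := by
      simp only [fro]
      refine Finset.sum_congr rfl fun c _ => Finset.sum_congr rfl fun c' _ => ?_
      congr 1
      rw [mul_apply, Fintype.sum_prod_type]
      simp only [trace, diag, G, of_apply, mul_apply]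
      rfl
    have e2 : fro (V * Vᴴ) = ∑ t', E.p t' * ∑ t, E.p t * fro (Y.B t * (Y.B t')ᴴ) := by
      simp only [Finset.mul_sum, ← hD']
      rw [Finset.sum_comm]
      simp only [fro]
      rw [Fintype.sum_prod_type]
      refine Finset.sum_congr rfl fun t _ => ?_
      simp only [Fintype.sum_prod_type]
      exact Finset.sum_comm
    rw [e1, fro_gram, e2]
    refine hbound _ _ Y.rm_nonneg fun t => ?_
    have := Y.B_right (Y.B t)ᴴ
    rwa [fro_conjTranspose] at this
  refine h1.trans ?_
  simp only [Finset.sum_add_distrib]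
  linarith

end Block

/-! ### The random two-layer code -/

section Coord
variable {I S : Type*} [Fintype I] [DecidableEq I] [Fintype S] [Nonempty S]

/-- Average over a single coordinate of a family of independent choices. -/
lemma av_coord (i : I) (f : S → ℝ) {c : ℝ} (h : av f ≤ c) : av (fun s : I → S => f (s i)) ≤ c :=
  av_resample i _ c fun s => by simpa using h

/-- Average over two distinct, hence independent, coordinates. -/
lemma av_pair {i k : I} (hik : i ≠ k) (f : S → S → ℝ) {c : ℝ} (h : ∀ b, av (fun a => f a b) ≤ c) :
    av (fun s : I → S => f (s i) (s k)) ≤ c :=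
  av_resample i _ c fun s => by simpa [Function.update_of_ne hik.symm] using h (s k)

end Coord

section OneShot

lemma kron_mul {l m n l' m' n' : Type*} [Fintype m] [Fintype m'] (A : Matrix l m ℂ)
    (B : Matrix l' m' ℂ) (C : Matrix m n ℂ) (D : Matrix m' n' ℂ) :
    kronecker A B * kronecker C D = kronecker (A * C) (B * D) := (mul_kronecker_mul ..).symm

lemma kron_conjTranspose {l m l' m' : Type*} (A : Matrix l m ℂ) (B : Matrix l' m' ℂ) :
    (kronecker A B)ᴴ = kronecker Aᴴ Bᴴ := conjTranspose_kronecker ..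

lemma kron_apply {l m l' m' : Type*} (A : Matrix l m ℂ) (B : Matrix l' m' ℂ) (x : l × l')
    (y : m × m') : kronecker A B x y = A x.1 y.1 * B x.2 y.2 := rfl

lemma fro_sub_comm {α β : Type*} [Fintype α] [Fintype β] (X Y : Matrix α β ℂ) :
    fro (X - Y) = fro (Y - X) := by
  rw [← neg_sub, fro, fro]
  simp only [Matrix.neg_apply, Complex.normSq_neg]

/-- The interference suffered by message `j` in the second layer; a single message suffers none. -/
def interference {J β γ : Type} [Fintype J] [Fintype β] [Fintype γ] (W : J → Matrix β γ ℂ) (j : J) :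
    ℝ :=
  if Subsingleton J then 0 else
    ∑ k ∈ Finset.univ.erase j, Complex.normSq (trace ((W k)ᴴ * W j)) + ∑ k, fro ((W k)ᴴ * W j)

/-- The second layer: `phased_protocol` for several messages, `trivial_protocol` for a single one. A
single message needs no decoding, hence no condition on the interference; this covers the case where
the entropy of Bob vanishes. -/
lemma layer_protocol {J β γ : Type} [Fintype J] [Fintype β] [Fintype γ] (W : J → Matrix β γ ℂ)
    (hW : ∀ j, fro (W j) ≤ 1) :
    ∃ Q : SubProtocol β γ J, ∀ (j : J) (V : Matrix β γ ℂ) (a : ℝ), 0 < a →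
      1 - Q.success j V ≤ 3 * (1 - fro (W j)) + interference W j + a + fro (V - W j) / a := by
  by_cases hJ : Subsingleton J
  · obtain ⟨Q, hQ⟩ := trivial_protocol (β := β) (γ := γ) (J := J)
    refine ⟨Q, fun j V a ha => ?_⟩
    rw [hQ, interference, if_pos hJ]
    have h1 := fro_add_ge (W j) (V - W j) ha
    rw [add_sub_cancel] at h1
    have h2 := mul_le_mul_of_nonneg_left (hW j) ha.le
    have h3 := hW j
    linarith
  · obtain ⟨Q, hQ⟩ := phased_protocol W
    refine ⟨Q, fun j V a ha => ?_⟩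
    rw [interference, if_neg hJ]
    have h1 := hQ j V a ha
    rw [Finset.sum_add_distrib, ← Finset.add_sum_erase _ _ (Finset.mem_univ j)] at h1
    have h2 : Complex.normSq (trace ((W j)ᴴ * W j)) ≤ 1 := by
      rw [trace_self_eq_fro, Complex.normSq_ofReal]
      nlinarith [hW j, fro_nonneg (W j)]
    linarith

variable {T₁ β₁ γ₁ T₂ β₂ γ₂ : Type} [Fintype T₁] [Fintype β₁] [Fintype γ₁] [Fintype T₂]
  [Fintype β₂] [Fintype γ₂] {E₁ : Ens T₁ β₁ γ₁} {E₂ : Ens T₂ β₂ γ₂}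

/-- A truncation close to the unit vector `E.X s` has norm close to one. -/
lemma Typical.one_sub_fro_le {E : Ens T₁ β₁ γ₁} (Y : Typical E) (s : T₁ → ZMod 4) {a : ℝ} (ha : 0 < a) :
    1 - fro (Y.X s) ≤ a + fro (E.X s - Y.X s) / a := by
  have := fro_add_ge (E.X s) (Y.X s - E.X s) ha
  rw [add_sub_cancel, E.fro_X, fro_sub_comm] at this
  linarith

/-- Interference in the second layer when the first-block factor `X` is known. -/
def interference₂ {J : Type} [Fintype J] (X : Matrix β₁ γ₁ ℂ) (Z : J → Matrix β₂ γ₂ ℂ) (j : J) : ℝ :=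
  if Subsingleton J then 0 else
    ∑ k ∈ Finset.univ.erase j, Complex.normSq (trace ((Z k)ᴴ * Z j))
      + fro (Xᴴ * X) * ∑ k, fro ((Z k)ᴴ * Z j)

lemma interference₂_nonneg {J : Type} [Fintype J] (X : Matrix β₁ γ₁ ℂ) (Z : J → Matrix β₂ γ₂ ℂ)
    (j : J) : 0 ≤ interference₂ X Z j := by
  rw [interference₂]
  split_ifs
  · rfl
  · exact add_nonneg (Finset.sum_nonneg fun _ _ => Complex.normSq_nonneg _)
      (mul_nonneg (fro_nonneg _) (Finset.sum_nonneg fun _ _ => fro_nonneg _))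

/-- The known first-block factor `X` leaves overlaps no larger and multiplies the purities by the
purity of `X`. -/
lemma interference_kronecker_le {J : Type} [Fintype J] (X : Matrix β₁ γ₁ ℂ)
    (Z : J → Matrix β₂ γ₂ ℂ) (hX : fro X ≤ 1) (j : J) :
    interference (fun j => kronecker X (Z j)) j ≤ interference₂ X Z j := by
  rw [interference, interference₂]
  split_ifs
  · rfl
  have e : ∀ k, (kronecker X (Z k))ᴴ * kronecker X (Z j) = kronecker (Xᴴ * X) ((Z k)ᴴ * Z j) :=
    fun k => by rw [kron_conjTranspose, kron_mul]
  simp only [e, fro_kronecker, ← Finset.mul_sum]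
  gcongr with k
  rw [show trace (kronecker (Xᴴ * X) ((Z k)ᴴ * Z j)) = trace (Xᴴ * X) * trace ((Z k)ᴴ * Z j) from
    trace_kronecker .., Complex.normSq_mul, trace_self_eq_fro, Complex.normSq_ofReal]
  exact mul_le_of_le_one_left (Complex.normSq_nonneg _) (mul_le_one₀ hX (fro_nonneg _) hX)

/-- Expected interference over independent random phases in the second block. -/
lemma av_interference₂ (Y₂ : Typical E₂) {I J : Type} [Fintype I] [Fintype J]
    (hJ : ¬ Subsingleton J) (X : Matrix β₁ γ₁ ℂ) (i : I) (j : J) :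
    av (fun t : I × J → T₂ → ZMod 4 => interference₂ X (fun j => Y₂.X (t (i, j))) j)
      ≤ Fintype.card J * Y₂.pm + fro (Xᴴ * X) * (Fintype.card J * Y₂.qm + Y₂.qm + Y₂.rm) := by
  simp only [interference₂, if_neg hJ]
  rw [av_add, av_mul_left, av_sum, av_sum]
  have hcard : ((Finset.univ.erase j).card : ℝ) ≤ Fintype.card J := by
    exact_mod_cast (Finset.card_le_card (Finset.erase_subset _ _))
  have h1 : ∑ k ∈ Finset.univ.erase j, av (fun t : I × J → T₂ → ZMod 4 =>
      Complex.normSq (trace ((Y₂.X (t (i, k)))ᴴ * Y₂.X (t (i, j))))) ≤ Fintype.card J * Y₂.pm := by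
    refine (Finset.sum_le_card_nsmul _ _ Y₂.pm fun k hk => ?_).trans ?_
    · have hne : (i, j) ≠ (i, k) := fun h => (Finset.ne_of_mem_erase hk) (Prod.mk.inj h).2.symm
      refine av_pair hne (fun a b => Complex.normSq (trace ((Y₂.X b)ᴴ * Y₂.X a))) fun b => ?_
      exact (Y₂.av_ip _).trans (mul_le_of_le_one_right Y₂.pm_nonneg (Y₂.fro_X_le _))
    · rw [nsmul_eq_mul]
      exact mul_le_mul_of_nonneg_right hcard Y₂.pm_nonneg
  have h2 : ∑ k, av (fun t : I × J → T₂ → ZMod 4 =>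
      fro ((Y₂.X (t (i, k)))ᴴ * Y₂.X (t (i, j)))) ≤ Fintype.card J * Y₂.qm + Y₂.qm + Y₂.rm := by
    rw [← Finset.add_sum_erase _ _ (Finset.mem_univ j)]
    have h3 : av (fun t : I × J → T₂ → ZMod 4 => fro ((Y₂.X (t (i, j)))ᴴ * Y₂.X (t (i, j))))
        ≤ Y₂.qm + Y₂.rm :=
      av_coord (i, j) (fun a => fro ((Y₂.X a)ᴴ * Y₂.X a)) Y₂.av_purity
    have h4 : ∑ k ∈ Finset.univ.erase j, av (fun t : I × J → T₂ → ZMod 4 =>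
        fro ((Y₂.X (t (i, k)))ᴴ * Y₂.X (t (i, j)))) ≤ Fintype.card J * Y₂.qm := by
      refine (Finset.sum_le_card_nsmul _ _ Y₂.qm fun k hk => ?_).trans ?_
      · have hne : (i, j) ≠ (i, k) := fun h => (Finset.ne_of_mem_erase hk) (Prod.mk.inj h).2.symm
        refine av_pair hne (fun a b => fro ((Y₂.X b)ᴴ * Y₂.X a)) fun b => ?_
        refine (Y₂.av_left _).trans (mul_le_of_le_one_right Y₂.qm_nonneg ?_)
        rw [fro_conjTranspose]
        exact Y₂.fro_X_le _
      · rw [nsmul_eq_mul]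
        exact mul_le_mul_of_nonneg_right hcard Y₂.qm_nonneg
    linarith
  exact add_le_add h1 (mul_le_mul_of_nonneg_left h2 (fro_nonneg _))

lemma posSemidef_sub_single {α I : Type} [Fintype α] [Fintype I] (K : I → Matrix α α ℂ)
    (hK : (1 - ∑ i, K i * (K i)ᴴ).PosSemidef) (i : I) : (1 - K i * (K i)ᴴ).PosSemidef := by
  have h : 1 - K i * (K i)ᴴ
      = (1 - ∑ i, K i * (K i)ᴴ) + ∑ k ∈ Finset.univ.erase i, K k * (K k)ᴴ := by
    rw [← Finset.add_sum_erase _ _ (Finset.mem_univ i)]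
    abel
  rw [h]
  exact hK.add (posSemidef_sum _ fun k _ => posSemidef_self_mul_conjTranspose _)

/-- A sub-normalised instrument on the first block, extended to both blocks. -/
lemma posSemidef_kronecker_one {I : Type} [Fintype I] (K : I → Matrix γ₁ γ₁ ℂ)
    (hK : (1 - ∑ i, K i * (K i)ᴴ).PosSemidef) :
    (1 - ∑ i, kronecker (K i) (1 : Matrix γ₂ γ₂ ℂ)
      * (kronecker (K i) (1 : Matrix γ₂ γ₂ ℂ))ᴴ).PosSemidef := by
  have : (1 - ∑ i, kronecker (K i) (1 : Matrix γ₂ γ₂ ℂ) * (kronecker (K i) (1 : Matrix γ₂ γ₂ ℂ))ᴴ)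
      = kronecker (1 - ∑ i, K i * (K i)ᴴ) (1 : Matrix γ₂ γ₂ ℂ) := by
    simp only [kron_conjTranspose, kron_mul, conjTranspose_one, Matrix.mul_one]
    have hs : ∑ i, kronecker (K i * (K i)ᴴ) (1 : Matrix γ₂ γ₂ ℂ)
        = kronecker (∑ i, K i * (K i)ᴴ) (1 : Matrix γ₂ γ₂ ℂ) := by
      ext ⟨a, b⟩ ⟨c, d⟩
      simp only [Matrix.sum_apply, kron_apply, Finset.sum_mul]
    rw [hs]
    ext ⟨a, b⟩ ⟨c, d⟩
    simp only [Matrix.sub_apply, kron_apply, sub_mul, one_apply, Prod.mk.injEq]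
    by_cases h1 : a = c <;> by_cases h2 : b = d <;> simp [h1, h2]
  rw [this]
  exact hK.kronecker PosSemidef.one

/-- Deviation from the target `X' ⊗ Z'` of the state `X ⊗ Z` after the Kraus operator `K ⊗ 1`: the
truncation errors of the blocks and the disturbance of `X'` by `K`. -/
lemma fro_deviation_le (X X' : Matrix β₁ γ₁ ℂ) (Z Z' : Matrix β₂ γ₂ ℂ) (K : Matrix γ₁ γ₁ ℂ)
    (hK : (1 - K * Kᴴ).PosSemidef) (hX' : fro X' ≤ 1) (hZ : fro Z ≤ 1) :
    fro (kronecker X Z * kronecker K (1 : Matrix γ₂ γ₂ ℂ) - kronecker X' Z')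
      ≤ 3 * (fro (X - X') + fro (X' * K - X') + fro (Z - Z')) := by
  have e : kronecker X Z * kronecker K (1 : Matrix γ₂ γ₂ ℂ) - kronecker X' Z'
      = kronecker ((X - X') * K) Z + kronecker (X' * K - X') Z + kronecker X' (Z - Z') := by
    rw [kron_mul, Matrix.mul_one, Matrix.sub_mul]
    ext ⟨a, b⟩ ⟨c, d⟩
    simp only [Matrix.sub_apply, Matrix.add_apply, kron_apply]
    ring
  rw [e]
  refine (fro_add3_le _ _ _).trans ?_
  simp only [fro_kronecker]
  have h1 : fro ((X - X') * K) * fro Z ≤ fro (X - X') :=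
    (mul_le_of_le_one_right (fro_nonneg _) hZ).trans (fro_mul_contraction _ _ hK)
  have h2 : fro (X' * K - X') * fro Z ≤ fro (X' * K - X') := mul_le_of_le_one_right (fro_nonneg _) hZ
  have h3 : fro X' * fro (Z - Z') ≤ fro (Z - Z') := mul_le_of_le_one_left (fro_nonneg _) hX'
  linarith

/-- Error of the two-layer protocol for fixed codewords. -/
lemma two_layer (Y₁ : Typical E₁) (Y₂ : Typical E₂) {I J : Type} [Fintype I] [Fintype J]
    (P : (T₁ → ZMod 4) → Matrix γ₁ γ₁ ℂ) (hP : ∀ s, (P s)ᴴ = P s) (hP2 : ∀ s, P s * P s = P s)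
    (hXP : ∀ s, Y₁.X s * P s = Y₁.X s)
    {a : ℝ} (ha : 0 < a) (s : I → T₁ → ZMod 4) (t : I × J → T₂ → ZMod 4) :
    ∃ R : SubProtocol (β₁ × β₂) (γ₁ × γ₂) (I × J), ∀ i j,
      1 - R.success (i, j) (kronecker (E₁.X (s i)) (E₂.X (t (i, j)))) ≤
        7 * a + (6 * a⁻¹) * fro (E₁.X (s i) - Y₁.X (s i))
          + (6 * a⁻¹) * fro (E₂.X (t (i, j)) - Y₂.X (t (i, j)))
          + (3 * a⁻¹) * ∑ k ∈ Finset.univ.erase i, fro (Y₁.X (s i) * P (s k))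
          + interference₂ (Y₁.X (s i)) (fun j => Y₂.X (t (i, j))) j := by
  have ha' : 0 < a⁻¹ := inv_pos.mpr ha
  obtain ⟨K, hK1, hK2⟩ := packing (α := β₁) (fun i => P (s i)) (fun i => hP _) (fun i => hP2 _)
  have hWle : ∀ i j, fro (kronecker (Y₁.X (s i)) (Y₂.X (t (i, j)))) ≤ 1 := fun i j => by
    rw [fro_kronecker]
    exact mul_le_one₀ (Y₁.fro_X_le _) (fro_nonneg _) (Y₂.fro_X_le _)
  choose Q hQ using fun i => layer_protocol
    (fun j => kronecker (Y₁.X (s i)) (Y₂.X (t (i, j)))) (hWle i)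
  have hK1' := posSemidef_kronecker_one (γ₂ := γ₂) K (by convert hK1)
  obtain ⟨R, hR⟩ := sequential_protocol (fun i => kronecker (K i) (1 : Matrix γ₂ γ₂ ℂ))
    (by convert hK1') Q
  refine ⟨R, fun i j => ?_⟩
  rw [hR]
  refine (hQ i j _ a ha).trans ?_
  have hInt := interference_kronecker_le (Y₁.X (s i)) (fun j => Y₂.X (t (i, j))) (Y₁.fro_X_le _) j
  have hKi : (1 - K i * (K i)ᴴ).PosSemidef := by
    convert posSemidef_sub_single K (by convert hK1) i
  have hdev := (fro_deviation_le (E₁.X (s i)) (Y₁.X (s i)) (E₂.X (t (i, j))) (Y₂.X (t (i, j))) (K i)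
    (by convert hKi) (Y₁.fro_X_le _) (E₂.fro_X _).le)
  have hpack : fro (Y₁.X (s i) * K i - Y₁.X (s i))
      ≤ ∑ k ∈ Finset.univ.erase i, fro (Y₁.X (s i) * P (s k)) := by
    convert hK2 i (Y₁.X (s i)) (hXP _)
  have hf1 := Y₁.one_sub_fro_le (s i) ha
  have hf2 := Y₂.one_sub_fro_le (t (i, j)) ha
  have hf : 1 - fro (kronecker (Y₁.X (s i)) (Y₂.X (t (i, j))))
      ≤ (1 - fro (Y₁.X (s i))) + (1 - fro (Y₂.X (t (i, j)))) := by
    rw [fro_kronecker]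
    nlinarith [Y₁.fro_X_le (s i), Y₂.fro_X_le (t (i, j))]
  beta_reduce at *
  generalize fro (kronecker (Y₁.X (s i)) (Y₂.X (t (i, j)))) = w at *
  generalize interference (fun j => kronecker (Y₁.X (s i)) (Y₂.X (t (i, j)))) j = v at *
  generalize interference₂ (Y₁.X (s i)) (fun j => Y₂.X (t (i, j))) j = v' at *
  generalize ∑ k ∈ Finset.univ.erase i, fro (Y₁.X (s i) * P (s k)) = u at *
  generalize fro (Y₁.X (s i) * K i - Y₁.X (s i)) = u' at *
  generalize fro (E₁.X (s i) - Y₁.X (s i)) = d₁ at *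
  generalize fro (E₂.X (t (i, j)) - Y₂.X (t (i, j))) = d₂ at *
  generalize fro (kronecker (E₁.X (s i)) (E₂.X (t (i, j))) * kronecker (K i) (1 : Matrix γ₂ γ₂ ℂ)
    - kronecker (Y₁.X (s i)) (Y₂.X (t (i, j)))) = d at *
  generalize fro (Y₁.X (s i)) = x at *
  generalize fro (Y₂.X (t (i, j))) = y at *
  have h5 : a⁻¹ * d ≤ a⁻¹ * (3 * (d₁ + u + d₂)) :=
    mul_le_mul_of_nonneg_left (hdev.trans (by linarith)) ha'.le
  rw [div_eq_inv_mul] at hf1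
  rw [div_eq_inv_mul] at hf2
  rw [div_eq_inv_mul]
  linarith

/-- Random two-layer code: Charlie's first measurement identifies `i`, after which the parties
identify `j` by the phased protocol. `a` is a free parameter trading additive losses. -/
lemma one_shot (Y₁ : Typical E₁) (Y₂ : Typical E₂) (I J : Type) [Fintype I] [Fintype J]
    {a : ℝ} (ha : 0 < a) {η : ℝ} (hη0 : 0 ≤ η)
    (hη : ¬ Subsingleton J → Fintype.card J * Y₂.pm
      + (Y₁.qm + Y₁.rm) * (Fintype.card J * Y₂.qm + Y₂.qm + Y₂.rm) ≤ η) :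
    ∃ (s₁ : I → T₁ → ZMod 4) (s₂ : I × J → T₂ → ZMod 4)
      (R : SubProtocol (β₁ × β₂) (γ₁ × γ₂) (I × J)) (G : I × J → ℝ), (∀ p, 0 ≤ G p) ∧
      (∀ p, 1 - R.success p (kronecker (E₁.X (s₁ p.1)) (E₂.X (s₂ p))) ≤ G p) ∧
      ∑ p, G p ≤ Fintype.card (I × J) *
        (7 * a + (6 * Y₁.er + 6 * Y₂.er + 3 * (Fintype.card I * (Y₁.rm * Y₁.nB))) / a + η) := by
  choose P hP hP2 hXP hPf using fun s => exists_row_projector Y₁.TB (Y₁.X s) (Y₁.X_apply_eq_zero s)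
  have ha' : 0 < a⁻¹ := inv_pos.mpr ha
  obtain ⟨G, hGdef⟩ : ∃ G : (I → T₁ → ZMod 4) → (I × J → T₂ → ZMod 4) → I × J → ℝ, ∀ s t p, G s t p =
      7 * a + (6 * a⁻¹) * fro (E₁.X (s p.1) - Y₁.X (s p.1))
          + (6 * a⁻¹) * fro (E₂.X (t p) - Y₂.X (t p))
          + (3 * a⁻¹) * ∑ k ∈ Finset.univ.erase p.1, fro (Y₁.X (s p.1) * P (s k))
          + interference₂ (Y₁.X (s p.1)) (fun j => Y₂.X (t (p.1, j))) p.2 := ⟨_, fun _ _ _ => rfl⟩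
  have hG : ∀ s t p, 0 ≤ G s t p := by
    intro s t p
    have h1 := mul_nonneg ha'.le (fro_nonneg (E₁.X (s p.1) - Y₁.X (s p.1)))
    have h2 := mul_nonneg ha'.le (fro_nonneg (E₂.X (t p) - Y₂.X (t p)))
    have h3 := mul_nonneg ha'.le (Finset.sum_nonneg fun k (_ : k ∈ Finset.univ.erase p.1) =>
      fro_nonneg (Y₁.X (s p.1) * P (s k)))
    have h4 := interference₂_nonneg (Y₁.X (s p.1)) (fun j => Y₂.X (t (p.1, j))) p.2
    rw [hGdef]
    linarith
  have hG1 : ∀ p, av (fun s => av (fun t => G s t p)) ≤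
      7 * a + (6 * Y₁.er + 6 * Y₂.er + 3 * (Fintype.card I * (Y₁.rm * Y₁.nB))) / a + η := by
    rintro ⟨i, j⟩
    have b1 : av (fun s : I → T₁ → ZMod 4 => fro (E₁.X (s i) - Y₁.X (s i))) ≤ Y₁.er :=
      av_coord i (fun s => fro (E₁.X s - Y₁.X s)) Y₁.av_err
    have b2 : av (fun t : I × J → T₂ → ZMod 4 => fro (E₂.X (t (i, j)) - Y₂.X (t (i, j)))) ≤ Y₂.er :=
      av_coord (i, j) (fun s => fro (E₂.X s - Y₂.X s)) Y₂.av_err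
    have b3 : av (fun s : I → T₁ → ZMod 4 => ∑ k ∈ Finset.univ.erase i, fro (Y₁.X (s i) * P (s k)))
        ≤ Fintype.card I * (Y₁.rm * Y₁.nB) := by
      rw [av_sum]
      have hnB : 0 ≤ Y₁.rm * Y₁.nB := mul_nonneg Y₁.rm_nonneg ((Nat.cast_nonneg _).trans Y₁.card_le)
      refine (Finset.sum_le_card_nsmul _ _ (Y₁.rm * Y₁.nB) fun k hk => ?_).trans ?_
      · refine av_pair (Finset.ne_of_mem_erase hk).symm (fun a b => fro (Y₁.X a * P b)) fun b => ?_
        exact (Y₁.av_right _).trans (mul_le_mul_of_nonneg_left ((hPf b).trans Y₁.card_le) Y₁.rm_nonneg)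
      · rw [nsmul_eq_mul]
        refine mul_le_mul_of_nonneg_right ?_ hnB
        exact_mod_cast (Finset.card_le_card (Finset.erase_subset _ _))
    have b4 : av (fun s : I → T₁ → ZMod 4 => av (fun t : I × J → T₂ → ZMod 4 =>
        interference₂ (Y₁.X (s i)) (fun j => Y₂.X (t (i, j))) j)) ≤ η := by
      by_cases hJ : Subsingleton J
      · simp only [interference₂, if_pos hJ, av_const]
        exact hη0
      · refine le_trans (av_mono fun s => av_interference₂ Y₂ hJ (Y₁.X (s i)) i j) ?_
        refine le_trans (le_of_eq ?_) ((add_le_add_right (mul_le_mul_of_nonneg_right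
          (av_coord i (fun s => fro ((Y₁.X s)ᴴ * Y₁.X s)) Y₁.av_purity) ?_) _).trans (hη hJ))
        · rw [av_add, av_const]
          congr 1
          generalize (Fintype.card J * Y₂.qm + Y₂.qm + Y₂.rm : ℝ) = c
          rw [mul_comm, ← av_mul_left]
          congr 1
          funext s
          exact mul_comm _ _
        · have := mul_nonneg (Nat.cast_nonneg (α := ℝ) (Fintype.card J)) Y₂.qm_nonneg
          linarith [Y₂.qm_nonneg, Y₂.rm_nonneg]
    simp only [hGdef, av_add, av_const, av_mul_left]
    have b1' := mul_le_mul_of_nonneg_left b1 ha'.le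
    have b2' := mul_le_mul_of_nonneg_left b2 ha'.le
    have b3' := mul_le_mul_of_nonneg_left b3 ha'.le
    rw [div_eq_inv_mul]
    linarith
  have hG2 : av (fun s => av (fun t => ∑ p, G s t p)) ≤ Fintype.card (I × J) *
        (7 * a + (6 * Y₁.er + 6 * Y₂.er + 3 * (Fintype.card I * (Y₁.rm * Y₁.nB))) / a + η) := by
    simp only [av_sum]
    refine (Finset.sum_le_sum fun p _ => hG1 p).trans (le_of_eq ?_)
    rw [Finset.sum_const, Finset.card_univ, nsmul_eq_mul]
  obtain ⟨s, hs⟩ := exists_le_av fun s => av (fun t => ∑ p, G s t p)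
  obtain ⟨t, ht⟩ := exists_le_av fun t => ∑ p, G s t p
  obtain ⟨R, hR⟩ := two_layer Y₁ Y₂ P hP hP2 hXP ha s t
  refine ⟨s, t, R, G s t, hG s t, ?_, ht.trans (hs.trans hG2)⟩
  rintro ⟨i, j⟩
  rw [hGdef]
  exact hR i j

end OneShot

/-! ### Expurgation and tensor powers -/

section Expurgate

/-- Markov's inequality: at least half of the messages have at most twice the average error. -/
lemma expurgate {J : Type} [Fintype J] (G : J → ℝ) (hG : ∀ j, 0 ≤ G j) {c : ℝ} (hc : 0 < c)
    (h : ∑ j, G j ≤ Fintype.card J * c) :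
    ∃ (N : ℕ) (e : Fin N → J), Function.Injective e ∧ (Fintype.card J : ℝ) ≤ 2 * N ∧
      ∀ i, G (e i) ≤ 2 * c := by
  let S : Finset J := Finset.univ.filter fun j => G j ≤ 2 * c
  refine ⟨S.card, fun i => (S.equivFin.symm i : J),
    Subtype.val_injective.comp S.equivFin.symm.injective, ?_, fun i => ?_⟩
  · have h1 : (Sᶜ.card : ℝ) * (2 * c) ≤ Fintype.card J * c := by
      refine le_trans ?_ h
      rw [← nsmul_eq_mul]
      refine (Finset.card_nsmul_le_sum Sᶜ G (2 * c) fun j hj => ?_).trans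
        (Finset.sum_le_sum_of_subset_of_nonneg (Finset.subset_univ _) fun j _ _ => hG j)
      simp only [S, Finset.mem_compl, Finset.mem_filter, Finset.mem_univ, true_and, not_le] at hj
      exact hj.le
    have h2 : (Sᶜ.card : ℝ) = Fintype.card J - S.card := by
      rw [Finset.card_compl, Nat.cast_sub (Finset.card_le_univ S)]
    rw [h2] at h1
    nlinarith
  · have := (S.equivFin.symm i).2
    simp only [S, Finset.mem_filter, Finset.mem_univ, true_and] at this
    exact this

/-- Bob ignores the messages outside the range of `e`. -/
lemma restrict_protocol {β γ J J' : Type} [Fintype β] [Fintype γ] [Fintype J] [Fintype J']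
    (Q : SubProtocol β γ J) (e : J' → J) (he : Function.Injective e) :
    ∃ R : SubProtocol β γ J', ∀ i W, R.success i W = Q.success (e i) W := by
  refine ⟨⟨Q.Y, Q.fin, Q.M, fun y i => Q.Bo y (e i), Q.M_psd, Q.M_le, fun y i => Q.Bo_psd y (e i),
    fun y => ?_⟩, fun i W => rfl⟩
  have h : (1 : Matrix β β ℂ) - ∑ i, Q.Bo y (e i)
      = (1 - ∑ j, Q.Bo y j) + ∑ j ∈ (Finset.univ.image e)ᶜ, Q.Bo y j := by
    rw [← Finset.sum_add_sum_compl (Finset.univ.image e), Finset.sum_image fun a _ b _ h => he h]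
    abel
  rw [h]
  exact (Q.Bo_le y).add (posSemidef_sum _ fun j _ => Q.Bo_psd y j)

end Expurgate

section TensorPower
variable {m : ℕ} {α : Type*} [Fintype α]

/-- The tensor product of a finite family of matrices. -/
def tenProd {α β : Type*} (X : Fin m → Matrix α β ℂ) : Matrix (Fin m → α) (Fin m → β) ℂ :=
  fun f g => ∏ k, X k (f k) (g k)

lemma prod_sum_fin {R : Type*} [CommSemiring R] (f : Fin m → α → R) :
    ∏ k, ∑ j, f k j = ∑ g : Fin m → α, ∏ k, f k (g k) := by
  rw [Finset.prod_univ_sum, Fintype.piFinset_univ]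

lemma tenProd_mul {α β γ : Type*} [Fintype β] (X : Fin m → Matrix α β ℂ) (Z : Fin m → Matrix β γ ℂ) :
    tenProd X * tenProd Z = tenProd fun k => X k * Z k := by
  ext f g
  simp only [tenProd, mul_apply, ← Finset.prod_mul_distrib]
  rw [prod_sum_fin]

lemma tenProd_conjTranspose {α β : Type*} (X : Fin m → Matrix α β ℂ) :
    (tenProd X)ᴴ = tenProd fun k => (X k)ᴴ := by
  ext f g
  simp only [tenProd, conjTranspose_apply, star_prod]

lemma trace_tenProd (X : Fin m → Matrix α α ℂ) : trace (tenProd X) = ∏ k, trace (X k) := by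
  simp only [trace, diag, tenProd, prod_sum_fin]

lemma prod_ite_eq {α : Type*} [DecidableEq α] (f : α → ℂ) (s t : Fin m → α) :
    (∏ k, if s k = t k then f (s k) else 0) = if s = t then ∏ k, f (s k) else 0 := by
  split_ifs with h
  · subst h; simp
  · obtain ⟨k, hk⟩ := Function.ne_iff.mp h
    exact Finset.prod_eq_zero (Finset.mem_univ k) (if_neg hk)

lemma tenProd_one {α : Type*} [DecidableEq α] : tenProd (fun _ : Fin m => (1 : Matrix α α ℂ)) = 1 := by
  ext f g
  have := prod_ite_eq (fun _ => 1) f g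
  simpa [tenProd, one_apply] using this

lemma tenProd_unitary {α β : Type*} [Fintype α] [DecidableEq β] (X : Matrix α β ℂ) (h : Xᴴ * X = 1) :
    (tenProd fun _ : Fin m => X)ᴴ * (tenProd fun _ : Fin m => X) = 1 := by
  rw [tenProd_conjTranspose, tenProd_mul, h, tenProd_one]

lemma tenProd_unitary' {α β : Type*} [Fintype β] [DecidableEq α] (X : Matrix α β ℂ) (h : X * Xᴴ = 1) :
    (tenProd fun _ : Fin m => X) * (tenProd fun _ : Fin m => X)ᴴ = 1 := by
  rw [tenProd_conjTranspose, tenProd_mul, h, tenProd_one]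

end TensorPower

/-- The `m`-fold independent ensemble. -/
def Ens.pow {T β γ : Type} [Fintype T] [Fintype β] [Fintype γ] (E : Ens T β γ) (m : ℕ) :
    Ens (Fin m → T) (Fin m → β) (Fin m → γ) where
  p t := ∏ k, E.p (t k)
  q b := ∏ k, E.q (b k)
  r c := ∏ k, E.r (c k)
  A t := tenProd fun k => E.A (t k)
  p_nonneg t := Finset.prod_nonneg fun k _ => E.p_nonneg _
  p_sum := by rw [← prod_sum_fin (fun _ t => E.p t), E.p_sum, Finset.prod_const_one]
  ortho s t := by
    rw [tenProd_conjTranspose, tenProd_mul, trace_tenProd]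
    simp only [E.ortho]
    refine Eq.trans ?_ ((prod_ite_eq (fun _ => (1 : ℂ)) s t).trans (by simp))
    congr!
  margB := by
    ext b b'
    have h : ∀ k, ∑ t, (E.p t : ℂ) * (E.A t * (E.A t)ᴴ) (b k) (b' k)
        = if b k = b' k then (E.q (b k) : ℂ) else 0 := fun k => by
      have := congrFun (congrFun E.margB (b k)) (b' k)
      simpa only [Matrix.sum_apply, Matrix.smul_apply, smul_eq_mul, diagonal_apply] using this
    simp only [tenProd_conjTranspose, tenProd_mul, Matrix.sum_apply, Matrix.smul_apply, tenProd,
      smul_eq_mul, Complex.ofReal_prod, ← Finset.prod_mul_distrib, diagonal_apply]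
    rw [← prod_sum_fin (fun k t => (E.p t : ℂ) * (E.A t * (E.A t)ᴴ) (b k) (b' k))]
    simp only [h]
    convert prod_ite_eq (fun x => (E.q x : ℂ)) b b'
  margC := by
    ext c c'
    have h : ∀ k, ∑ t, (E.p t : ℂ) * ((E.A t)ᴴ * E.A t) (c k) (c' k)
        = if c k = c' k then (E.r (c k) : ℂ) else 0 := fun k => by
      have := congrFun (congrFun E.margC (c k)) (c' k)
      simpa only [Matrix.sum_apply, Matrix.smul_apply, smul_eq_mul, diagonal_apply] using this
    simp only [tenProd_conjTranspose, tenProd_mul, Matrix.sum_apply, Matrix.smul_apply, tenProd,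
      smul_eq_mul, Complex.ofReal_prod, ← Finset.prod_mul_distrib, diagonal_apply]
    rw [← prod_sum_fin (fun k t => (E.p t : ℂ) * ((E.A t)ᴴ * E.A t) (c k) (c' k))]
    simp only [h]
    convert prod_ite_eq (fun x => (E.r x : ℂ)) c c'

/-! ### Typical sequences -/

section TypicalSets
variable {β : Type} [Fintype β]

lemma sum_fin_cons {m : ℕ} (F : (Fin (m + 1) → β) → ℝ) :
    ∑ b, F b = ∑ x : β, ∑ b : Fin m → β, F (Fin.cons x b) := by
  rw [← (Fin.consEquiv fun _ => β).sum_comp, Fintype.sum_prod_type]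
  rfl

/-- First two moments of a sum of independent centred variables. -/
lemma iid_moments (q f : β → ℝ) (hq : ∑ b, q b = 1) (hf : ∑ b, q b * f b = 0) (m : ℕ) :
    ∑ b : Fin m → β, ∏ k, q (b k) = 1 ∧
    ∑ b : Fin m → β, (∏ k, q (b k)) * ∑ k, f (b k) = 0 ∧
    ∑ b : Fin m → β, (∏ k, q (b k)) * (∑ k, f (b k)) ^ 2 = m * ∑ b, q b * f b ^ 2 := by
  induction m with
  | zero => simp
  | succ m ih =>
    obtain ⟨h0, h1, h2⟩ := ih
    refine ⟨?_, ?_, ?_⟩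
    · rw [sum_fin_cons]
      simp only [Fin.prod_univ_succ, Fin.cons_zero, Fin.cons_succ, ← Finset.mul_sum, h0, mul_one, hq]
    · rw [sum_fin_cons]
      simp only [Fin.prod_univ_succ, Fin.sum_univ_succ, Fin.cons_zero, Fin.cons_succ]
      have : ∀ x : β, ∑ b : Fin m → β, q x * (∏ k, q (b k)) * (f x + ∑ k, f (b k)) = q x * f x := by
        intro x
        calc _ = q x * f x * (∑ b : Fin m → β, ∏ k, q (b k))
              + q x * ∑ b : Fin m → β, (∏ k, q (b k)) * ∑ k, f (b k) := by
              rw [Finset.mul_sum, Finset.mul_sum, ← Finset.sum_add_distrib]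
              exact Finset.sum_congr rfl fun b _ => by ring
          _ = _ := by rw [h0, h1]; ring
      simp only [this, hf]
    · rw [sum_fin_cons]
      simp only [Fin.prod_univ_succ, Fin.sum_univ_succ, Fin.cons_zero, Fin.cons_succ]
      have : ∀ x : β, ∑ b : Fin m → β, q x * (∏ k, q (b k)) * (f x + ∑ k, f (b k)) ^ 2
          = q x * f x ^ 2 + q x * (m * ∑ b, q b * f b ^ 2) := by
        intro x
        calc _ = q x * f x ^ 2 * (∑ b : Fin m → β, ∏ k, q (b k))
              + 2 * q x * f x * (∑ b : Fin m → β, (∏ k, q (b k)) * ∑ k, f (b k))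
              + q x * ∑ b : Fin m → β, (∏ k, q (b k)) * (∑ k, f (b k)) ^ 2 := by
              rw [Finset.mul_sum, Finset.mul_sum, Finset.mul_sum, ← Finset.sum_add_distrib,
                ← Finset.sum_add_distrib]
              exact Finset.sum_congr rfl fun b _ => by ring
          _ = _ := by rw [h0, h1, h2]; ring
      simp only [this]
      rw [Finset.sum_add_distrib, ← Finset.sum_mul, hq]
      push_cast
      ring

/-- The variance of the surprisal of a probability vector. -/
def surprisalVar (q : β → ℝ) : ℝ := ∑ b, q b * (-Real.logb 2 (q b) - shannonEntropy q) ^ 2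

lemma surprisalVar_nonneg (q : β → ℝ) (h : ∀ b, 0 ≤ q b) : 0 ≤ surprisalVar q :=
  Finset.sum_nonneg fun b _ => mul_nonneg (h b) (sq_nonneg _)

/-- The entropy-typical sequences of a memoryless source; the deviation bound is Chebyshev's
inequality for the surprisal. -/
lemma exists_typical_set (q : β → ℝ) (h0 : ∀ b, 0 ≤ q b) (h1 : ∑ b, q b = 1) (m : ℕ) {Δ : ℝ}
    (hΔ : 0 < Δ) : ∃ S : Finset (Fin m → β),
      (∀ b ∈ S, ∏ k, q (b k) ≤ 2 ^ (-(m * shannonEntropy q) + Δ)) ∧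
      (S.card : ℝ) ≤ 2 ^ (m * shannonEntropy q + Δ) ∧
      ∑ b ∈ Sᶜ, ∏ k, q (b k) ≤ m * surprisalVar q / Δ ^ 2 := by
  set H := shannonEntropy q with hH
  let f : β → ℝ := fun b => -Real.logb 2 (q b) - H
  have hf : ∑ b, q b * f b = 0 := by
    simp only [f, mul_sub, Finset.sum_sub_distrib, ← Finset.sum_mul, h1, mul_neg,
      Finset.sum_neg_distrib, hH, shannonEntropy]
    ring
  obtain ⟨m0, -, m2⟩ := iid_moments q f h1 hf m
  have hP : ∀ b : Fin m → β, 0 ≤ ∏ k, q (b k) := fun b => Finset.prod_nonneg fun k _ => h0 _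
  let S : Finset (Fin m → β) :=
    Finset.univ.filter fun b => 0 < ∏ k, q (b k) ∧ |∑ k, f (b k)| ≤ Δ
  have hS : ∀ b ∈ S, ∃ x, |x| ≤ Δ ∧ ∏ k, q (b k) = 2 ^ (-(m * H) - x) := by
    intro b hb
    simp only [S, Finset.mem_filter, Finset.mem_univ, true_and] at hb
    refine ⟨_, hb.2, ?_⟩
    have hne : ∀ k, q (b k) ≠ 0 := fun k h => hb.1.ne' (Finset.prod_eq_zero (Finset.mem_univ k) h)
    have e : ∑ k, f (b k) = -Real.logb 2 (∏ k, q (b k)) - m * H := by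
      rw [Real.logb_prod _ _ fun k _ => hne k]
      simp [f, Finset.sum_sub_distrib]
    rw [e, show -(m * H) - (-Real.logb 2 (∏ k, q (b k)) - m * H) = Real.logb 2 (∏ k, q (b k)) by ring,
      Real.rpow_logb (by norm_num) (by norm_num) hb.1]
  refine ⟨S, fun b hb => ?_, ?_, ?_⟩
  · obtain ⟨x, hx, e⟩ := hS b hb
    rw [e]
    exact Real.rpow_le_rpow_of_exponent_le (by norm_num) (by linarith [(abs_le.mp hx).1])
  · have hl : (S.card : ℝ) * 2 ^ (-(m * H) - Δ) ≤ 1 := by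
      rw [← m0, ← nsmul_eq_mul]
      refine (Finset.card_nsmul_le_sum S _ _ fun b hb => ?_).trans
        (Finset.sum_le_sum_of_subset_of_nonneg (Finset.subset_univ _) fun b _ _ => hP b)
      obtain ⟨x, hx, e⟩ := hS b hb
      rw [e]
      exact Real.rpow_le_rpow_of_exponent_le (by norm_num) (by linarith [(abs_le.mp hx).2])
    rw [show m * H + Δ = -(-(m * H) - Δ) by ring, Real.rpow_neg (by norm_num), ← one_div,
      le_div_iff₀ (Real.rpow_pos_of_pos (by norm_num) _)]
    exact hl
  · rw [le_div_iff₀ (by positivity), surprisalVar, ← m2, Finset.sum_mul]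
    refine (Finset.sum_le_sum fun b hb => ?_).trans
      (Finset.sum_le_sum_of_subset_of_nonneg (Finset.subset_univ Sᶜ)
        fun b _ _ => mul_nonneg (hP b) (sq_nonneg _))
    rcases (hP b).eq_or_lt with h | h
    · simp [← h]
    · refine mul_le_mul_of_nonneg_left ?_ (hP b)
      simp only [S, Finset.mem_compl, Finset.mem_filter, Finset.mem_univ, true_and, not_and,
        not_le] at hb
      rw [← sq_abs (∑ k, f (b k))]
      exact pow_le_pow_left₀ hΔ.le (hb h).le 2

end TypicalSets

section EnsTypical
variable {T β γ : Type} [Fintype T] [Fintype β] [Fintype γ] (E : Ens T β γ)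

lemma Ens.q_nonneg (b : β) : 0 ≤ E.q b := by
  rw [← E.q_eq]
  exact Finset.sum_nonneg fun t _ => mul_nonneg (E.p_nonneg t)
    (Finset.sum_nonneg fun _ _ => Complex.normSq_nonneg _)

lemma Ens.r_nonneg (c : γ) : 0 ≤ E.r c := by
  rw [← E.r_eq]
  exact Finset.sum_nonneg fun t _ => mul_nonneg (E.p_nonneg t)
    (Finset.sum_nonneg fun _ _ => Complex.normSq_nonneg _)

lemma Ens.q_sum : ∑ b, E.q b = 1 := by
  simp only [← E.q_eq]
  rw [Finset.sum_comm]
  simp only [← Finset.mul_sum]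
  rw [← E.p_sum]
  refine Finset.sum_congr rfl fun t _ => ?_
  have := E.fro_A t
  rw [fro] at this
  rw [this, mul_one]

lemma Ens.r_sum : ∑ c, E.r c = 1 := by
  simp only [← E.r_eq]
  rw [Finset.sum_comm]
  simp only [← Finset.mul_sum]
  rw [← E.p_sum]
  refine Finset.sum_congr rfl fun t _ => ?_
  have := E.fro_A t
  rw [fro, Finset.sum_comm] at this
  rw [this, mul_one]

/-- The sum of the surprisal variances of the three spectra of an ensemble. -/
def Ens.var : ℝ := surprisalVar E.p + surprisalVar E.q + surprisalVar E.r

lemma Ens.var_nonneg : 0 ≤ E.var :=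
  add_nonneg (add_nonneg (surprisalVar_nonneg _ E.p_nonneg) (surprisalVar_nonneg _ E.q_nonneg))
    (surprisalVar_nonneg _ E.r_nonneg)

/-- Entropy-typical sequences in the three eigenbases give truncation sets for the `m`-fold ensemble. -/
lemma Ens.exists_typical (m : ℕ) {Δ : ℝ} (hΔ : 0 < Δ) : ∃ Y : Typical (E.pow m),
    Y.pm = 2 ^ (-(m * shannonEntropy E.p) + Δ) ∧ Y.qm = 2 ^ (-(m * shannonEntropy E.q) + Δ) ∧
    Y.rm = 2 ^ (-(m * shannonEntropy E.r) + Δ) ∧ Y.nB = 2 ^ (m * shannonEntropy E.q + Δ) ∧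
    Y.er = m * E.var / Δ ^ 2 := by
  obtain ⟨TA, a1, -, a3⟩ := exists_typical_set E.p E.p_nonneg E.p_sum m hΔ
  obtain ⟨TB, b1, b2, b3⟩ := exists_typical_set E.q E.q_nonneg E.q_sum m hΔ
  obtain ⟨TC, c1, -, c3⟩ := exists_typical_set E.r E.r_nonneg E.r_sum m hΔ
  refine ⟨⟨TA, TB, TC, _, _, _, _, _, by positivity, by positivity, by positivity, a1, b1, c1, b2, ?_⟩,
    rfl, rfl, rfl, rfl, rfl⟩
  have e : m * E.var / Δ ^ 2 = m * surprisalVar E.p / Δ ^ 2 + m * surprisalVar E.q / Δ ^ 2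
      + m * surprisalVar E.r / Δ ^ 2 := by
    rw [Ens.var]; ring
  rw [e]
  refine add_le_add (add_le_add ?_ ?_) ?_
  · exact le_trans (le_of_eq (Finset.sum_congr (by congr!) fun _ _ => rfl)) a3
  · exact le_trans (le_of_eq (Finset.sum_congr (by congr!) fun _ _ => rfl)) b3
  · exact le_trans (le_of_eq (Finset.sum_congr (by congr!) fun _ _ => rfl)) c3

end EnsTypical

/-! ### Spectral form of the isometry -/

section Spectral

lemma transpose_conjT {α : Type*} (P : Matrix α α ℂ) : (Pᴴ)ᵀ = (Pᵀ)ᴴ := rfl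

lemma sum_smul_mul {α β τ : Type*} [Fintype α] [Fintype τ] (p : τ → ℂ) (X : Matrix β α ℂ)
    (M : τ → Matrix α α ℂ) (Z : Matrix α β ℂ) :
    ∑ t, p t • (X * M t * Z) = X * (∑ t, p t • M t) * Z := by
  rw [Matrix.mul_sum, Matrix.sum_mul]
  simp only [Matrix.mul_smul, Matrix.smul_mul]

/-- A positive semidefinite matrix is unitarily diagonal, and its von Neumann entropy is the Shannon
entropy of its spectrum. -/
lemma exists_diagonalization {α : Type} [Fintype α] [DecidableEq α] (X : Matrix α α ℂ)
    (hX : X.PosSemidef) : ∃ (q : α → ℝ) (Q : Matrix α α ℂ), (∀ i, 0 ≤ q i) ∧ Qᴴ * Q = 1 ∧ Q * Qᴴ = 1 ∧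
      X = Q * diagonal (fun i => (q i : ℂ)) * Qᴴ ∧ vnEntropy X = shannonEntropy q := by
  have hH := hX.isHermitian
  refine ⟨hH.eigenvalues, (hH.eigenvectorUnitary : Matrix α α ℂ), hX.eigenvalues_nonneg, ?_, ?_, ?_, ?_⟩
  · exact Unitary.coe_star_mul_self hH.eigenvectorUnitary
  · exact Unitary.coe_mul_star_self hH.eigenvectorUnitary
  · have := hH.spectral_theorem
    rw [Unitary.conjStarAlgAut_apply] at this
    exact this
  · rw [vnEntropy, dif_pos hH]
    rfl

/-- The isometry `U`, in the eigenbasis of `ρ` at the input and the eigenbases of the two marginals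
at the outputs, is the family of coefficient matrices of an ensemble. -/
lemma spectral_ens {dA dB dC : ℕ} (U : Matrix (Fin dB × Fin dC) (Fin dA) ℂ) (hU : Uᴴ * U = 1)
    (ρ : Matrix (Fin dA) (Fin dA) ℂ) (hρ : IsDensityMatrix ρ) :
    ∃ (E : Ens (Fin dA) (Fin dB) (Fin dC)) (W : Matrix (Fin dA) (Fin dA) ℂ)
      (Q : Matrix (Fin dB) (Fin dB) ℂ) (V : Matrix (Fin dC) (Fin dC) ℂ),
      Qᴴ * Q = 1 ∧ Q * Qᴴ = 1 ∧ V * Vᴴ = 1 ∧ Vᴴ * V = 1 ∧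
      (∀ b c t, (U * W) (b, c) t = (Q * E.A t * V) b c) ∧
      vnEntropy ρ = shannonEntropy E.p ∧ vnEntropy (ptraceC (U * ρ * Uᴴ)) = shannonEntropy E.q ∧
      vnEntropy (ptraceB (U * ρ * Uᴴ)) = shannonEntropy E.r := by
  obtain ⟨p, W, hp, hW, hW', eρ, sA⟩ := exists_diagonalization ρ hρ.1
  let A : Fin dA → Matrix (Fin dB) (Fin dC) ℂ := fun t b c => (U * W) (b, c) t
  have key : ∀ b c b' c', (U * ρ * Uᴴ) (b, c) (b', c') = ∑ t, (p t : ℂ) * (A t b c * star (A t b' c')) := by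
    intro b c b' c'
    have : U * ρ * Uᴴ = (U * W) * diagonal (fun i => (p i : ℂ)) * (U * W)ᴴ := by
      rw [eρ, conjTranspose_mul]; simp only [Matrix.mul_assoc]
    rw [this, mul_apply]
    refine Finset.sum_congr rfl fun t _ => ?_
    rw [mul_diagonal, conjTranspose_apply]
    simp only [A]; ring
  have eB : ptraceC (U * ρ * Uᴴ) = ∑ t, (p t : ℂ) • (A t * (A t)ᴴ) := by
    ext b b'
    simp only [ptraceC, key, Matrix.sum_apply, Matrix.smul_apply, mul_apply, conjTranspose_apply, smul_eq_mul,
      Finset.mul_sum]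
    exact Finset.sum_comm
  have eC : ptraceB (U * ρ * Uᴴ) = (∑ t, (p t : ℂ) • ((A t)ᴴ * A t))ᵀ := by
    ext c c'
    simp only [ptraceB, key, transpose_apply, Matrix.sum_apply, Matrix.smul_apply, mul_apply, conjTranspose_apply, smul_eq_mul,
      Finset.mul_sum]
    rw [Finset.sum_comm]
    refine Finset.sum_congr rfl fun t _ => Finset.sum_congr rfl fun b _ => ?_
    ring
  have pB : (ptraceC (U * ρ * Uᴴ)).PosSemidef := by
    rw [eB]
    exact posSemidef_sum _ fun t _ => (posSemidef_self_mul_conjTranspose _).smul (by exact_mod_cast hp t)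
  have pC : (ptraceB (U * ρ * Uᴴ)).PosSemidef := by
    rw [eC]
    exact (posSemidef_sum _ fun t _ =>
      (posSemidef_conjTranspose_mul_self _).smul (by exact_mod_cast hp t)).transpose
  obtain ⟨q, Q, -, hQ, hQ', eQ, sB⟩ := exists_diagonalization _ pB
  obtain ⟨r, P, -, hP, hP', eP, sC⟩ := exists_diagonalization _ pC
  -- Charlie's marginal is the transpose of the average of `AᴴA`, hence the transposed eigenbasis.
  have hV : Pᵀ * (Pᵀ)ᴴ = 1 := by
    have := congrArg transpose hP
    rw [transpose_mul, transpose_one] at this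
    rwa [transpose_conjT] at this
  have hV' : (Pᵀ)ᴴ * Pᵀ = 1 := by
    have := congrArg transpose hP'
    rw [transpose_mul, transpose_one] at this
    rwa [transpose_conjT] at this
  have eC' : ∑ t, (p t : ℂ) • ((A t)ᴴ * A t) = (Pᵀ)ᴴ * diagonal (fun i => (r i : ℂ)) * Pᵀ := by
    have := congrArg transpose (eC.symm.trans eP)
    rw [transpose_transpose] at this
    rw [this, transpose_mul, transpose_mul, diagonal_transpose, transpose_conjT, Matrix.mul_assoc]
  refine ⟨⟨p, q, r, fun t => Qᴴ * A t * (Pᵀ)ᴴ, hp, ?_, ?_, ?_, ?_⟩, W, Q, Pᵀ, hQ, hQ', hV, hV', ?_, sA, sB, sC⟩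
  · have h := hρ.2
    rw [eρ, trace_mul_comm, ← Matrix.mul_assoc, hW, Matrix.one_mul, trace_diagonal] at h
    exact_mod_cast h
  · intro s t
    have h : (U * W)ᴴ * (U * W) = 1 := by
      rw [conjTranspose_mul, Matrix.mul_assoc, ← Matrix.mul_assoc Uᴴ, hU, Matrix.one_mul, hW]
    have h' := congrFun (congrFun h s) t
    rw [one_apply] at h'
    have e : (Qᴴ * A s * (Pᵀ)ᴴ)ᴴ * (Qᴴ * A t * (Pᵀ)ᴴ) = Pᵀ * ((A s)ᴴ * A t * (Pᵀ)ᴴ) := by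
      simp only [conjTranspose_mul, conjTranspose_conjTranspose, Matrix.mul_assoc]
      rw [← Matrix.mul_assoc Q, hQ', Matrix.one_mul]
    rw [e, trace_mul_comm, Matrix.mul_assoc, hV', Matrix.mul_one]
    refine Eq.trans ?_ (h'.trans (by congr!))
    rw [mul_apply, trace, Fintype.sum_prod_type, Finset.sum_comm]
    refine Finset.sum_congr rfl fun c _ => ?_
    rw [diag_apply, mul_apply]
    rfl
  · have e : ∀ t, (Qᴴ * A t * (Pᵀ)ᴴ) * (Qᴴ * A t * (Pᵀ)ᴴ)ᴴ = Qᴴ * (A t * (A t)ᴴ) * Q := fun t => by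
      simp only [conjTranspose_mul, conjTranspose_conjTranspose, Matrix.mul_assoc]
      rw [← Matrix.mul_assoc (Pᵀ)ᴴ, hV', Matrix.one_mul]
    simp only [e, sum_smul_mul]
    rw [← eB, eQ]
    simp only [Matrix.mul_assoc]
    rw [hQ, Matrix.mul_one, ← Matrix.mul_assoc, hQ, Matrix.one_mul]
    congr!
  · have e : ∀ t, (Qᴴ * A t * (Pᵀ)ᴴ)ᴴ * (Qᴴ * A t * (Pᵀ)ᴴ) = Pᵀ * ((A t)ᴴ * A t) * (Pᵀ)ᴴ := fun t => by
      simp only [conjTranspose_mul, conjTranspose_conjTranspose, Matrix.mul_assoc]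
      rw [← Matrix.mul_assoc Q, hQ', Matrix.one_mul]
    simp only [e, sum_smul_mul]
    rw [eC']
    simp only [Matrix.mul_assoc]
    rw [hV, Matrix.mul_one, ← Matrix.mul_assoc, hV, Matrix.one_mul]
    congr!
  · intro b c t
    have : Q * (Qᴴ * A t * (Pᵀ)ᴴ) * Pᵀ = A t := by
      simp only [Matrix.mul_assoc]
      rw [hV', Matrix.mul_one, ← Matrix.mul_assoc, hQ', Matrix.one_mul]
    exact (congrFun (congrFun this b) c).symm

end Spectral

/-! ### Block codes -/

section Coding

/-- The Frobenius norm is invariant under local isometries. -/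
lemma fro_unitary {β γ β' γ' : Type*} [Fintype β] [Fintype γ] [Fintype β'] [Fintype γ']
    [DecidableEq β] [DecidableEq γ] (Vb : Matrix β' β ℂ) (Vc : Matrix γ γ' ℂ) (hb : Vbᴴ * Vb = 1)
    (hc : Vc * Vcᴴ = 1) (X : Matrix β γ ℂ) : fro (Vb * X * Vc) = fro X := by
  have h : trace ((Vb * X * Vc)ᴴ * (Vb * X * Vc)) = trace (Xᴴ * X) := by
    have e : (Vb * X * Vc)ᴴ * (Vb * X * Vc) = Vcᴴ * (Xᴴ * X * Vc) := by
      simp only [conjTranspose_mul, Matrix.mul_assoc]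
      rw [← Matrix.mul_assoc Vbᴴ, hb, Matrix.one_mul]
    rw [e, trace_mul_comm, Matrix.mul_assoc, hc, Matrix.mul_one]
  rw [trace_self_eq_fro, trace_self_eq_fro] at h
  exact_mod_cast h

/-- Concatenating index sequences turns a Kronecker product of tensor products over two blocks into a
tensor product over all copies. -/
lemma kron_tenProd {T β γ : Type} (A : T → Matrix β γ ℂ) {n₁ n₂ : ℕ} (t₁ : Fin n₁ → T) (t₂ : Fin n₂ → T) :
    kronecker (tenProd fun k => A (t₁ k)) (tenProd fun k => A (t₂ k))
      = (tenProd fun k => A (Fin.append t₁ t₂ k)).submatrix (Fin.appendEquiv n₁ n₂)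
        (Fin.appendEquiv n₁ n₂) := by
  ext x y
  rw [kron_apply, submatrix_apply]
  simp only [tenProd, Fin.appendEquiv, Equiv.coe_fn_mk, Fin.prod_univ_add, Fin.append_left, Fin.append_right]

variable {T β γ : Type} [Fintype T] [Fintype β] [Fintype γ]

/-- Coefficients of the random-phase superposition. -/
def Ens.coef (E : Ens T β γ) (s : T → ZMod 4) (t : T) : ℂ := ph (s t) * (Real.sqrt (E.p t) : ℂ)

/-- A tensor product of two superpositions over blocks of lengths `n₁`, `n₂`, in rotated local bases,
as a matrix over the `n₁ + n₂` copies. -/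
lemma rotated_state (E : Ens T β γ) {n₁ n₂ : ℕ} (Q : Matrix β β ℂ) (V : Matrix γ γ ℂ)
    (s₁ : (Fin n₁ → T) → ZMod 4) (s₂ : (Fin n₂ → T) → ZMod 4) :
    (tenProd fun _ : Fin (n₁ + n₂) => Q).submatrix id (Fin.appendEquiv n₁ n₂) *
      kronecker ((E.pow n₁).X s₁) ((E.pow n₂).X s₂) *
      (tenProd fun _ : Fin (n₁ + n₂) => V).submatrix (Fin.appendEquiv n₁ n₂) id
    = ∑ t₁, ∑ t₂, ((E.pow n₁).coef s₁ t₁ * (E.pow n₂).coef s₂ t₂) •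
        tenProd fun k => Q * E.A (Fin.append t₁ t₂ k) * V := by
  have e : kronecker ((E.pow n₁).X s₁) ((E.pow n₂).X s₂)
      = ∑ t₁, ∑ t₂, ((E.pow n₁).coef s₁ t₁ * (E.pow n₂).coef s₂ t₂) •
        (tenProd fun k => E.A (Fin.append t₁ t₂ k)).submatrix (Fin.appendEquiv n₁ n₂)
        (Fin.appendEquiv n₁ n₂) := by
    ext x y
    simp only [← kron_tenProd, kron_apply, Ens.X, Matrix.sum_apply, Matrix.smul_apply, smul_eq_mul,
      Finset.sum_mul_sum, Ens.coef]
    refine Finset.sum_congr rfl fun t₁ _ => Finset.sum_congr rfl fun t₂ _ => ?_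
    simp only [Ens.pow]
    ring
  rw [e]
  simp only [Matrix.mul_sum, Matrix.sum_mul, Matrix.mul_smul, Matrix.smul_mul, submatrix_mul_equiv,
    submatrix_id_id, tenProd_mul]

/-- Block code from the one-shot code: expurgated, completed to a one-way LOCC measurement, and
written on the `n₁ + n₂` uses of the channel. -/
lemma block_code {dA dB dC : ℕ} (U : Matrix (Fin dB × Fin dC) (Fin dA) ℂ)
    (E : Ens (Fin dA) (Fin dB) (Fin dC)) (W : Matrix (Fin dA) (Fin dA) ℂ)
    (Q : Matrix (Fin dB) (Fin dB) ℂ) (V : Matrix (Fin dC) (Fin dC) ℂ)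
    (hQ : Qᴴ * Q = 1) (hQ' : Q * Qᴴ = 1) (hV : V * Vᴴ = 1) (hV' : Vᴴ * V = 1)
    (hU : ∀ b c t, (U * W) (b, c) t = (Q * E.A t * V) b c) {n₁ n₂ : ℕ}
    (Y₁ : Typical (E.pow n₁)) (Y₂ : Typical (E.pow n₂)) {N₁ N₂ : ℕ} (hN₁ : 0 < N₁) (hN₂ : 0 < N₂)
    {a : ℝ} (ha : 0 < a) {η : ℝ} (hη0 : 0 ≤ η)
    (hη : N₂ ≠ 1 → N₂ * Y₂.pm + (Y₁.qm + Y₁.rm) * (N₂ * Y₂.qm + Y₂.qm + Y₂.rm) ≤ η) {c : ℝ}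
    (hc : 0 < c)
    (hcc : 7 * a + (6 * Y₁.er + 6 * Y₂.er + 3 * (N₁ * (Y₁.rm * Y₁.nB))) / a + η ≤ c) :
    ∃ (N : ℕ) (φ : Fin N → (Fin (n₁ + n₂) → Fin dB × Fin dC) → ℂ)
      (Np : Fin N → Matrix (Fin (n₁ + n₂) → Fin dB × Fin dC) (Fin (n₁ + n₂) → Fin dB × Fin dC) ℂ),
      (N₁ : ℝ) * N₂ ≤ 2 * N ∧
      (∀ i, IsUnitVec (φ i)) ∧
      (∀ i, ∃ ψ, (tensorPow U (n₁ + n₂)).mulVec ψ = φ i) ∧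
      IsOneWayLOCC Np ∧
      (∀ i, 1 - 2 * c ≤ (Matrix.trace (pureState (φ i) * Np i)).re) := by
  obtain ⟨s₁, s₂, R, G, hG, hRG, hsum⟩ := one_shot Y₁ Y₂ (Fin N₁) (Fin N₂) ha hη0 (by
    intro h
    simp only [Fintype.card_fin]
    refine hη ?_
    rintro rfl
    exact h inferInstance)
  simp only [Fintype.card_fin] at hsum
  obtain ⟨N, e, he, hN, hGe⟩ := expurgate G hG hc
    (hsum.trans (mul_le_mul_of_nonneg_left hcc (Nat.cast_nonneg _)))
  have hN' : (N₁ : ℝ) * N₂ ≤ 2 * N := by simpa using hN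
  have : Nonempty (Fin N) := by
    have h : (0 : ℝ) < N₁ * N₂ := by positivity
    have : (0 : ℝ) < N := by linarith
    exact ⟨⟨0, by exact_mod_cast this⟩⟩
  obtain ⟨R₁, h₁⟩ := restrict_protocol R e he
  let Vb := (tenProd fun _ : Fin (n₁ + n₂) => Q).submatrix id (Fin.appendEquiv n₁ n₂)
  let Vc := (tenProd fun _ : Fin (n₁ + n₂) => V).submatrix (Fin.appendEquiv n₁ n₂) id
  have hb : Vbᴴ * Vb = 1 := by
    have := tenProd_unitary (m := n₁ + n₂) Q hQ
    simp only [Vb, conjTranspose_submatrix]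
    rw [submatrix_mul _ _ _ _ _ Function.bijective_id |>.symm, this]
    exact submatrix_one_equiv _
  have hb' : Vb * Vbᴴ = 1 := by
    have := tenProd_unitary' (m := n₁ + n₂) Q hQ'
    simp only [Vb, conjTranspose_submatrix]
    rw [submatrix_mul_equiv, this, submatrix_id_id]
  have hc₁ : Vc * Vcᴴ = 1 := by
    have := tenProd_unitary' (m := n₁ + n₂) V hV
    simp only [Vc, conjTranspose_submatrix]
    rw [submatrix_mul _ _ _ _ _ Function.bijective_id |>.symm, this]
    exact submatrix_one_equiv _
  have hc₂ : Vcᴴ * Vc = 1 := by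
    have := tenProd_unitary (m := n₁ + n₂) V hV'
    simp only [Vc, conjTranspose_submatrix]
    rw [submatrix_mul_equiv, this, submatrix_id_id]
  obtain ⟨R₂, h₂⟩ := rotate_protocol R₁ Vb Vc (by convert hb) (by convert hb') (by convert hc₁) (by convert hc₂)
  obtain ⟨R₃, hM, hB, h₃⟩ := complete_protocol R₂
  obtain ⟨Np, hL, hNp⟩ := locc_of_protocol R₃ (by convert hM) (fun y => by convert hB y)
  let K : Fin N → Matrix (Fin (n₁ + n₂) → Fin dB) (Fin (n₁ + n₂) → Fin dC) ℂ := fun i =>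
    Vb * kronecker ((E.pow n₁).X (s₁ (e i).1)) ((E.pow n₂).X (s₂ (e i))) * Vc
  refine ⟨N, fun i f => K i (fun k => (f k).1) (fun k => (f k).2), Np, hN', fun i => ?_, fun i => ?_, hL, fun i => ?_⟩
  · have h : fro (K i) = 1 := by
      rw [fro_unitary Vb Vc hb hc₁, fro_kronecker, Ens.fro_X, Ens.fro_X, mul_one]
    rw [IsUnitVec, ← h, fro, ← Fintype.sum_prod_type' (fun b c => Complex.normSq (K i b c))]
    exact Equiv.sum_comp (Equiv.arrowProdEquivProdArrow (Fin (n₁ + n₂)) (fun _ => Fin dB) fun _ => Fin dC)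
      fun x => Complex.normSq (K i x.1 x.2)
  · refine ⟨∑ t₁, ∑ t₂, ((E.pow n₁).coef (s₁ (e i).1) t₁ * (E.pow n₂).coef (s₂ (e i)) t₂) •
      fun g => ∏ k, W (g k) (Fin.append t₁ t₂ k), ?_⟩
    ext f
    simp only [K, Vb, Vc, rotated_state, mulVec_sum, mulVec_smul, Finset.sum_apply, Pi.smul_apply,
      Matrix.sum_apply, Matrix.smul_apply]
    refine Finset.sum_congr rfl fun t₁ _ => Finset.sum_congr rfl fun t₂ _ => ?_
    congr 1
    simp only [tenProd, ← hU, mulVec, dotProduct, tensorPow, ← Finset.prod_mul_distrib, mul_apply]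
    rw [prod_sum_fin]
  · rw [hNp]
    have h4 := hRG (e i)
    have h5 := h₃ i (K i)
    have h6 : R₂.success i (K i) = _ := h₂ i _
    rw [h₁] at h6
    have h7 := hGe i
    change _ ≤ R₃.success i (K i)
    linarith

end Coding

/-! ### Asymptotics -/

section Asymptotics

lemma shannonEntropy_nonneg {ι : Type} [Fintype ι] (q : ι → ℝ) (h0 : ∀ i, 0 ≤ q i)
    (h1 : ∑ i, q i = 1) : 0 ≤ shannonEntropy q := by
  rw [shannonEntropy, ← Finset.sum_neg_distrib]
  refine Finset.sum_nonneg fun i _ => ?_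
  have hi : q i ≤ 1 := h1 ▸ Finset.single_le_sum (fun j _ => h0 j) (Finset.mem_univ i)
  have := mul_nonneg (h0 i) (neg_nonneg.mpr (Real.logb_nonpos (b := 2) (by norm_num) (h0 i) hi))
  linarith

/-- Splitting `n` uses into a block for Charlie's code and a block of length `⌈lam * n⌉`. -/
lemma exists_split {lam : ℝ} (h0 : 0 ≤ lam) (h1 : lam ≤ 1) (n : ℕ) :
    ∃ n₁ n₂ : ℕ, n = n₁ + n₂ ∧ lam * n ≤ n₂ ∧ (1 - lam) * n - 1 ≤ n₁ := by
  have hn : (0 : ℝ) ≤ n := Nat.cast_nonneg n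
  have hle : ⌈lam * n⌉₊ ≤ n := Nat.ceil_le.mpr (by nlinarith)
  refine ⟨n - ⌈lam * n⌉₊, ⌈lam * n⌉₊, by omega, Nat.le_ceil _, ?_⟩
  rw [Nat.cast_sub hle]
  have := (Nat.ceil_lt_add_one (mul_nonneg h0 hn)).le
  linarith

/-- The collision term of Charlie's measurement, for the number of first-layer messages chosen below:
`b`, `r` are the entropies of Bob and Charlie per use. -/
lemma first_layer_bound {n n₁ D δ lam r b : ℝ} (hD : 0 ≤ D) (hn : 0 ≤ n)
    (hn₁ : (1 - lam) * n - 1 ≤ n₁) (hδ : 4 * δ ≤ (1 - lam) * D) (hδ0 : 0 ≤ δ) (hrb : b - r = -D) :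
    (⌈(2 : ℝ) ^ (n₁ * D - 3 * (n * δ))⌉₊ : ℝ)
      * ((2 : ℝ) ^ (-(n₁ * r) + n * δ) * (2 : ℝ) ^ (n₁ * b + n * δ))
      ≤ (1 + 2 ^ D) * 2 ^ (-(n * δ)) := by
  have h2 : (0 : ℝ) < 2 := by norm_num
  rw [← Real.rpow_add h2]
  have hc : (⌈(2 : ℝ) ^ (n₁ * D - 3 * (n * δ))⌉₊ : ℝ) ≤ (2 : ℝ) ^ (n₁ * D - 3 * (n * δ)) + 1 :=
    (Nat.ceil_lt_add_one (Real.rpow_nonneg h2.le _)).le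
  refine (mul_le_mul_of_nonneg_right hc (Real.rpow_nonneg h2.le _)).trans ?_
  rw [add_mul, add_mul, one_mul, one_mul, ← Real.rpow_add h2, ← Real.rpow_add h2]
  have e : n₁ * b - n₁ * r = -(n₁ * D) := by rw [← mul_sub, hrb]; ring
  refine add_le_add (Real.rpow_le_rpow_of_exponent_le (by norm_num) (by linarith))
    (Real.rpow_le_rpow_of_exponent_le (by norm_num) ?_)
  have h3 : ((1 - lam) * n - 1) * D ≤ n₁ * D := mul_le_mul_of_nonneg_right hn₁ hD
  have h4 : n * (4 * δ) ≤ n * ((1 - lam) * D) := mul_le_mul_of_nonneg_left hδ hn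
  have h5 : 0 ≤ n * δ := mul_nonneg hn hδ0
  nlinarith

/-- The interference term of the second layer. When more than one message is sent, the exponent is
positive, so that rounding up costs at most a factor two. -/
lemma second_layer_bound {n₁ n₂ SA SB SC Δ : ℝ} (hn₁ : 0 ≤ n₁) (hn₂ : 0 ≤ n₂) (hΔ : 0 ≤ Δ)
    (hBC : SB ≤ SC) (hA : (n₁ + n₂) * SB ≤ n₂ * SA)
    (hN : ⌈(2 : ℝ) ^ ((n₁ + n₂) * SB - 3 * Δ)⌉₊ ≠ 1) :
    (⌈(2 : ℝ) ^ ((n₁ + n₂) * SB - 3 * Δ)⌉₊ : ℝ) * 2 ^ (-(n₂ * SA) + Δ)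
      + (2 ^ (-(n₁ * SB) + Δ) + 2 ^ (-(n₁ * SC) + Δ)) *
        ((⌈(2 : ℝ) ^ ((n₁ + n₂) * SB - 3 * Δ)⌉₊ : ℝ) * 2 ^ (-(n₂ * SB) + Δ)
          + 2 ^ (-(n₂ * SB) + Δ) + 2 ^ (-(n₂ * SC) + Δ)) ≤ 10 * 2 ^ (-Δ) := by
  have h2 : (0 : ℝ) < 2 := by norm_num
  have pos : ∀ x : ℝ, (0 : ℝ) < 2 ^ x := fun x => Real.rpow_pos_of_pos h2 x
  have mono : ∀ {x y : ℝ}, x ≤ y → (2 : ℝ) ^ x ≤ 2 ^ y := fun h =>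
    Real.rpow_le_rpow_of_exponent_le (by norm_num) h
  have hx : 0 < (n₁ + n₂) * SB - 3 * Δ := by
    by_contra h
    refine hN (le_antisymm (Nat.ceil_le.mpr ?_) (Nat.ceil_pos.mpr (pos _)))
    have := mono (not_lt.mp h)
    rw [Real.rpow_zero] at this
    simpa using this
  have hc : (⌈(2 : ℝ) ^ ((n₁ + n₂) * SB - 3 * Δ)⌉₊ : ℝ) ≤ 2 * (2 : ℝ) ^ ((n₁ + n₂) * SB - 3 * Δ) := by
    have h := (Nat.ceil_lt_add_one (pos ((n₁ + n₂) * SB - 3 * Δ)).le).le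
    have h' := mono hx.le
    rw [Real.rpow_zero] at h'
    linarith
  set M : ℝ := (⌈(2 : ℝ) ^ ((n₁ + n₂) * SB - 3 * Δ)⌉₊ : ℝ)
  have i1 : M * 2 ^ (-(n₂ * SA) + Δ) ≤ 2 * 2 ^ (-Δ) := by
    refine (mul_le_mul_of_nonneg_right hc (pos _).le).trans ?_
    rw [mul_assoc, ← Real.rpow_add h2]
    exact mul_le_mul_of_nonneg_left (mono (by linarith)) h2.le
  have i2 : (2 : ℝ) ^ (-(n₁ * SC) + Δ) ≤ 2 ^ (-(n₁ * SB) + Δ) :=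
    mono (by have := mul_le_mul_of_nonneg_left hBC hn₁; linarith)
  have i3 : (2 : ℝ) ^ (-(n₂ * SC) + Δ) ≤ 2 ^ (-(n₂ * SB) + Δ) :=
    mono (by have := mul_le_mul_of_nonneg_left hBC hn₂; linarith)
  have i4 : (2 : ℝ) ^ (-(n₁ * SB) + Δ) * 2 ^ (-(n₂ * SB) + Δ) ≤ 2 ^ (-Δ) := by
    rw [← Real.rpow_add h2]
    exact mono (by linarith)
  have i5 : M * ((2 : ℝ) ^ (-(n₁ * SB) + Δ) * 2 ^ (-(n₂ * SB) + Δ)) ≤ 2 * 2 ^ (-Δ) := by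
    rw [← Real.rpow_add h2]
    refine (mul_le_mul_of_nonneg_right hc (pos _).le).trans ?_
    rw [mul_assoc, ← Real.rpow_add h2]
    exact mul_le_mul_of_nonneg_left (mono (by linarith)) h2.le
  have hM : 0 ≤ M := Nat.cast_nonneg _
  have i6 : ((2 : ℝ) ^ (-(n₁ * SB) + Δ) + 2 ^ (-(n₁ * SC) + Δ)) *
        (M * 2 ^ (-(n₂ * SB) + Δ) + 2 ^ (-(n₂ * SB) + Δ) + 2 ^ (-(n₂ * SC) + Δ))
      ≤ (2 ^ (-(n₁ * SB) + Δ) + 2 ^ (-(n₁ * SB) + Δ)) *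
        (M * 2 ^ (-(n₂ * SB) + Δ) + 2 ^ (-(n₂ * SB) + Δ) + 2 ^ (-(n₂ * SB) + Δ)) := by
    have := pos (-(n₁ * SB) + Δ)
    have := pos (-(n₂ * SB) + Δ)
    have := pos (-(n₂ * SC) + Δ)
    gcongr
  nlinarith

/-- Finite blocklength code, with explicit error and rate. -/
lemma finite_code {dA dB dC : ℕ} (U : Matrix (Fin dB × Fin dC) (Fin dA) ℂ)
    (E : Ens (Fin dA) (Fin dB) (Fin dC)) (W : Matrix (Fin dA) (Fin dA) ℂ)
    (Q : Matrix (Fin dB) (Fin dB) ℂ) (V : Matrix (Fin dC) (Fin dC) ℂ)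
    (hQ : Qᴴ * Q = 1) (hQ' : Q * Qᴴ = 1) (hV : V * Vᴴ = 1) (hV' : Vᴴ * V = 1)
    (hU : ∀ b c t, (U * W) (b, c) t = (Q * E.A t * V) b c) {SA SB SC : ℝ}
    (hSA : SA = shannonEntropy E.p) (hSB : SB = shannonEntropy E.q) (hSC : SC = shannonEntropy E.r)
    (h1 : SB < SC) (h2 : SB < SA) {δ : ℝ} (hδ : 0 < δ)
    (hδ' : 4 * δ ≤ (1 - SB / SA) * (SC - SB)) {n : ℕ} (hn : 0 < n) {a c : ℝ} (ha : 0 < a) (hc : 0 < c)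
    (hcc : 7 * a + (6 * (E.var / (n * δ ^ 2)) + 3 * ((1 + 2 ^ (SC - SB)) * 2 ^ (-(n * δ)))) / a
      + 10 * 2 ^ (-(n * δ)) ≤ c) :
    ∃ (N : ℕ) (φ : Fin N → (Fin n → Fin dB × Fin dC) → ℂ)
      (Np : Fin N → Matrix (Fin n → Fin dB × Fin dC) (Fin n → Fin dB × Fin dC) ℂ),
      (2 : ℝ) ^ (n * ((1 - SB / SA) * SC + SB / SA * SB) - 6 * (n * δ) - (SC - SB) - 1) ≤ N ∧
      (∀ i, IsUnitVec (φ i)) ∧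
      (∀ i, ∃ ψ, (tensorPow U n).mulVec ψ = φ i) ∧
      IsOneWayLOCC Np ∧
      (∀ i, 1 - 2 * c ≤ (Matrix.trace (pureState (φ i) * Np i)).re) := by
  have hB0 : 0 ≤ SB := hSB ▸ shannonEntropy_nonneg _ E.q_nonneg E.q_sum
  have hA0 : 0 < SA := hB0.trans_lt h2
  have hl0 : 0 ≤ SB / SA := div_nonneg hB0 hA0.le
  have hl1 : SB / SA ≤ 1 := (div_le_one hA0).mpr h2.le
  have hnR : (0 : ℝ) < n := by exact_mod_cast hn
  obtain ⟨n₁, n₂, rfl, k₂, k₁⟩ := exists_split hl0 hl1 n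
  have hcast : ((n₁ + n₂ : ℕ) : ℝ) = n₁ + n₂ := by push_cast; rfl
  have hΔ : 0 < ((n₁ + n₂ : ℕ) : ℝ) * δ := mul_pos hnR hδ
  obtain ⟨Y₁, y1p, y1q, y1r, y1B, y1e⟩ := E.exists_typical n₁ hΔ
  obtain ⟨Y₂, y2p, y2q, y2r, y2B, y2e⟩ := E.exists_typical n₂ hΔ
  rw [← hSA] at y1p y2p
  rw [← hSB] at y1q y2q y1B y2B
  rw [← hSC] at y1r y2r
  have p2 : ∀ x : ℝ, (0 : ℝ) < 2 ^ x := fun x => Real.rpow_pos_of_pos (by norm_num) x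
  set n : ℝ := ((n₁ + n₂ : ℕ) : ℝ) with hndef
  have f1 := first_layer_bound (n := n) (n₁ := n₁) (r := SC) (b := SB) (sub_nonneg.mpr h1.le)
    hnR.le k₁ hδ' hδ.le (by ring)
  have hSn : n * SB ≤ n₂ * SA := by
    have := mul_le_mul_of_nonneg_right k₂ hA0.le
    have e : SB / SA * n * SA = n * SB := by field_simp
    linarith
  have f2 := fun h => second_layer_bound (n₁ := n₁) (n₂ := n₂) (SA := SA) (SB := SB) (SC := SC)
    (Δ := n * δ) (Nat.cast_nonneg _) (Nat.cast_nonneg _) hΔ.le h1.le (by rw [← hcast]; exact hSn) h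
  rw [← hcast] at f2
  obtain ⟨N, φ, Np, g1, g2, g3, g4, g5⟩ := block_code U E W Q V hQ hQ' hV hV' hU Y₁ Y₂
    (N₁ := ⌈(2 : ℝ) ^ (n₁ * (SC - SB) - 3 * (n * δ))⌉₊) (N₂ := ⌈(2 : ℝ) ^ (n * SB - 3 * (n * δ))⌉₊)
    (Nat.ceil_pos.mpr (p2 _)) (Nat.ceil_pos.mpr (p2 _)) ha (η := 10 * 2 ^ (-(n * δ)))
    (mul_nonneg (by norm_num) (p2 _).le)
    (fun h => by
      rw [y2p, y1q, y1r, y2q, y2r]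
      exact f2 h) hc (by
      refine le_trans ?_ hcc
      have e : 6 * Y₁.er + 6 * Y₂.er = 6 * (E.var / (n * δ ^ 2)) := by
        rw [y1e, y2e, show (n₁ : ℝ) = n - n₂ by rw [hcast]; ring]
        field_simp
        ring
      rw [y1r, y1B, e]
      gcongr)
  refine ⟨N, φ, Np, ?_, g2, g3, g4, g5⟩
  have g6 : (2 : ℝ) ^ (n₁ * (SC - SB) - 3 * (n * δ)) * 2 ^ (n * SB - 3 * (n * δ)) ≤ 2 * N :=
    (mul_le_mul (Nat.le_ceil _) (Nat.le_ceil _) (p2 _).le (Nat.cast_nonneg _)).trans g1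
  rw [← Real.rpow_add (by norm_num)] at g6
  have g7 := mul_le_mul_of_nonneg_right k₁ (sub_nonneg.mpr h1.le)
  have g8 : (2 : ℝ) ^ (n * ((1 - SB / SA) * SC + SB / SA * SB) - 6 * (n * δ) - (SC - SB) - 1)
      ≤ 2 ^ (n₁ * (SC - SB) - 3 * (n * δ) + (n * SB - 3 * (n * δ)) - 1) :=
    Real.rpow_le_rpow_of_exponent_le (by norm_num) (by nlinarith)
  refine g8.trans ?_
  rw [Real.rpow_sub (by norm_num), Real.rpow_one]
  linarith

end Asymptotics

end Helpers

/-- if S(B) < S(C) and S(B) < S(A), the rate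
(1 − S(B)/S(A))·S(C) + (S(B)/S(A))·S(B) is achievable with one-way LOCC (C→B) decoding. -/
theorem stmt3 (dA dB dC : ℕ) (hA : 0 < dA) (hB : 0 < dB) (hC : 0 < dC)
    (U : Matrix (Fin dB × Fin dC) (Fin dA) ℂ) (hU : Uᴴ * U = 1)
    (ρ : Matrix (Fin dA) (Fin dA) ℂ) (hρ : IsDensityMatrix ρ)
    (SA SB SC : ℝ)
    (hSA : SA = vnEntropy ρ)
    (hSB : SB = vnEntropy (ptraceC (U * ρ * Uᴴ)))
    (hSC : SC = vnEntropy (ptraceB (U * ρ * Uᴴ)))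
    (h1 : SB < SC) (h2 : SB < SA) :
    AchievableOneWayCB U ((1 - SB / SA) * SC + (SB / SA) * SB) := by
  obtain ⟨E, W, Q, V, hQ, hQ', hV, hV', hUW, eA, eB, eC⟩ := spectral_ens U hU ρ hρ
  rw [eA] at hSA
  rw [eB] at hSB
  rw [eC] at hSC
  have hB0 : 0 ≤ SB := hSB ▸ shannonEntropy_nonneg _ E.q_nonneg E.q_sum
  have hA0 : 0 < SA := hB0.trans_lt h2
  have hκ : 0 < (1 - SB / SA) * (SC - SB) :=
    mul_pos (sub_pos.mpr ((div_lt_one hA0).mpr h2)) (sub_pos.mpr h1)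
  intro ε hε
  -- The code loses `6 * δ` of rate; half of `ε` is kept for the rounding constants.
  obtain ⟨δ, hδ, hδ1, hδ2⟩ : ∃ δ : ℝ, 0 < δ ∧ 4 * δ ≤ (1 - SB / SA) * (SC - SB) ∧ 12 * δ ≤ ε := by
    refine ⟨min ((1 - SB / SA) * (SC - SB) / 4) (ε / 12), by positivity, ?_, ?_⟩
    · linarith [min_le_left ((1 - SB / SA) * (SC - SB) / 4) (ε / 12)]
    · linarith [min_le_right ((1 - SB / SA) * (SC - SB) / 4) (ε / 12)]
  have hpow : Filter.Tendsto (fun n : ℕ => (2 : ℝ) ^ (-(n * δ))) Filter.atTop (nhds 0) := by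
    have h : Filter.Tendsto (fun n : ℕ => ((2 : ℝ) ^ (-δ)) ^ n) Filter.atTop (nhds 0) :=
      tendsto_pow_atTop_nhds_zero_of_lt_one (by positivity)
        (Real.rpow_lt_one_of_one_lt_of_neg (by norm_num) (by linarith))
    refine h.congr fun n => ?_
    rw [← Real.rpow_natCast, ← Real.rpow_mul (by norm_num)]
    congr 1; ring
  have hinv : Filter.Tendsto (fun n : ℕ => E.var / (n * δ ^ 2)) Filter.atTop (nhds 0) :=
    (tendsto_natCast_atTop_atTop.atTop_mul_const (by positivity)).const_div_atTop _
  have hlim : Filter.Tendsto (fun n : ℕ => 7 * (ε / 28)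
      + (6 * (E.var / (n * δ ^ 2)) + 3 * ((1 + 2 ^ (SC - SB)) * 2 ^ (-(n * δ)))) / (ε / 28)
      + 10 * (2 : ℝ) ^ (-(n * δ))) Filter.atTop
      (nhds (7 * (ε / 28) + (6 * 0 + 3 * ((1 + 2 ^ (SC - SB)) * 0)) / (ε / 28) + 10 * 0)) :=
    ((((hinv.const_mul 6).add ((hpow.const_mul _).const_mul 3)).div_const _).const_add _).add
      (hpow.const_mul 10)
  have hev := (hlim.eventually_lt_const (u := ε / 2) (by simp; linarith)).and
    ((tendsto_natCast_atTop_atTop (R := ℝ)).eventually_ge_atTop (2 * (SC - SB + 1) / ε))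
  obtain ⟨n₀, hn₀⟩ := Filter.eventually_atTop.mp (hev.and (Filter.eventually_gt_atTop 0))
  refine ⟨n₀, fun n hn => ?_⟩
  obtain ⟨⟨e1, e2⟩, e3⟩ := hn₀ n hn
  obtain ⟨N, φ, Np, g1, g2, g3, g4, g5⟩ := finite_code U E W Q V hQ hQ' hV hV' hUW hSA hSB hSC h1 h2
    hδ hδ1 e3 (a := ε / 28) (c := ε / 2) (by linarith) (by linarith) e1.le
  refine ⟨N, φ, Np, le_trans (Real.rpow_le_rpow_of_exponent_le (by norm_num) ?_) g1, g2, g3, g4,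
    fun i => by have := g5 i; linarith⟩
  rw [div_le_iff₀ hε] at e2
  have : (n : ℝ) * (12 * δ) ≤ n * ε := mul_le_mul_of_nonneg_left hδ2 (Nat.cast_nonneg n)
  linarith
end
end

section
/- Let dB ≤ dC be positive integers, Δ ≥ 0 and ε ≥ 0 real numbers. Let v : (Fin dB) × (Fin dC) → ℂ be a unit vector with E(v) ≥ logb 2 dB − Δ, and let M : Matrix ((Fin dB) × (Fin dC)) ((Fin dB) × (Fin dC)) ℂ satisfy: M is positive semidefinite, 1 − M is positive semidefinite, and M^Γ is positive semidefinite. If Re (Matrix.trace (φ_v * M)) ≥ 1 − ε, then Re (Matrix.trace M) ≥ (1 − ε − √2 · Δ^{1/4}) · dB. -/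
/-! Let `V` be the coefficient matrix of `v`, so that `V Vᴴ` is the reduced state, with eigenvalues
`p`. Let `W` be the partial isometry in the polar decomposition of `V`; then `w = W / √dB` is a
(sub)normalised maximally entangled vector with `⟨v, w⟩ = ∑ √p / √dB` (`exists_contraction`).

* `log x ≤ x - 1` and the entropy hypothesis give `⟨v, w⟩ ≥ 1 - Δ / 2` (`sum_sqrt_ge`), hence
  `‖v - w‖² ≤ 2 - 2 ⟨v, w⟩ ≤ Δ`.
* As `0 ≤ M ≤ 1`, Cauchy–Schwarz gives `⟨v, M v⟩ ≤ ⟨w, M w⟩ + 2 √Δ` (`quadForm_le_add`).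
* Moving the partial transpose from `M` onto the projector of `w` turns the latter into a matrix at
  most `1 / dB`, essentially a swap operator (`one_sub_swapMatrix_posSemidef`), so positivity of the
  partial transpose of `M` yields `⟨w, M w⟩ ≤ tr M / dB` (`quadForm_le_trace`).

Together these give `(1 - ε - 2 √Δ) dB ≤ tr M`. If `√2 Δ^(1/4) ≤ 1`, then `2 √Δ ≤ √2 Δ^(1/4)`;
otherwise the claimed lower bound is nonpositive while `tr M ≥ 0`. -/


open scoped BigOperators Classical ComplexOrder Matrix

noncomputable section

open scoped MatrixOrder Matrix.Norms.L2Operator in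
/-- The trace of a product of two positive semidefinite matrices is nonnegative. -/
lemma re_trace_mul_nonneg {n : Type*} [Fintype n] {A B : Matrix n n ℂ}
    (hA : A.PosSemidef) (hB : B.PosSemidef) : 0 ≤ (Matrix.trace (A * B)).re := by
  obtain ⟨R, rfl⟩ := CStarAlgebra.nonneg_iff_eq_star_mul_self.mp hA.nonneg
  rw [Matrix.star_eq_conjTranspose, Matrix.mul_assoc, Matrix.trace_mul_comm]
  exact (Complex.nonneg_iff.mp (hB.mul_mul_conjTranspose_same R).trace_nonneg).1

lemma trace_pureState_mul {n : Type*} [Fintype n] (v : n → ℂ) (M : Matrix n n ℂ) :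
    Matrix.trace (pureState v * M) = star v ⬝ᵥ M *ᵥ v := by
  rw [pureState, Matrix.vecMulVec_mul, Matrix.trace_vecMulVec, dotProduct_comm,
    Matrix.dotProduct_mulVec]

/-- A detector `0 ≤ M ≤ 1` responds with nearly the same probability to nearby vectors. -/
lemma quadForm_le_add {n : Type*} [Fintype n] [DecidableEq n] {M : Matrix n n ℂ}
    (hM : M.PosSemidef) (hM1 : (1 - M).PosSemidef) (v w : n → ℂ)
    (hv : ∑ x, Complex.normSq (v x) = 1) {δ : ℝ} (hδ : 0 < δ)
    (hvw : ∑ x, Complex.normSq (v x - w x) ≤ δ ^ 2) :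
    (star v ⬝ᵥ M *ᵥ v).re ≤ (star w ⬝ᵥ M *ᵥ w).re + 2 * δ := by
  have hle : ∀ x : n → ℂ, (star x ⬝ᵥ M *ᵥ x).re ≤ ∑ i, Complex.normSq (x i) := by
    intro x
    have h := (Complex.nonneg_iff.mp (hM1.dotProduct_mulVec_nonneg x)).1
    have h2 : star x ⬝ᵥ x = ((∑ i, Complex.normSq (x i) : ℝ) : ℂ) := by
      simp [dotProduct, Complex.normSq_eq_conj_mul_self]
    rw [Matrix.sub_mulVec, Matrix.one_mulVec, dotProduct_sub, h2, Complex.sub_re,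
      Complex.ofReal_re] at h
    linarith
  have hu := hle (v - w)
  have hv' := hle v
  have hu0 := (Complex.nonneg_iff.mp (hM.dotProduct_mulVec_nonneg (v - w))).1
  -- Positivity of `M` at this combination is Cauchy–Schwarz for the pair `v - w`, `v`.
  have h1 := (Complex.nonneg_iff.mp
    (hM.dotProduct_mulVec_nonneg ((v - w) - (δ : ℂ) • v))).1
  simp only [Pi.sub_apply] at hu
  simp only [star_sub, star_smul, Matrix.mulVec_sub, Matrix.mulVec_smul, dotProduct_sub,
    sub_dotProduct, smul_dotProduct, dotProduct_smul, smul_eq_mul, Complex.star_def,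
    Complex.conj_ofReal, Complex.sub_re, Complex.re_ofReal_mul] at h1 hu hu0
  set a := (star v ⬝ᵥ M *ᵥ v).re
  set b := (star w ⬝ᵥ M *ᵥ w).re
  set c := (star v ⬝ᵥ M *ᵥ w).re
  set e := (star w ⬝ᵥ M *ᵥ v).re
  have h3 : δ * (a - b) ≤ δ * (2 * δ) := by nlinarith
  have := le_of_mul_le_mul_left h3 hδ
  linarith

/-- The matrix of the partial transpose of the unnormalised state with coefficient matrix `W`. -/
def swapMatrix {dB dC : ℕ} (W : Matrix (Fin dB) (Fin dC) ℂ) :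
    Matrix (Fin dB × Fin dC) (Fin dB × Fin dC) ℂ :=
  fun p q => W p.1 q.2 * star (W q.1 p.2)

/-- If `W` is a contraction, the partially transposed projector of the corresponding vector is at
most `1`: its quadratic form at `X` is `∑ Y j l * conj (Y l j)` with `Y = Xᴴ W`, which is bounded
by the squared Frobenius norm of `Y`. -/
lemma one_sub_swapMatrix_posSemidef {dB dC : ℕ} {W : Matrix (Fin dB) (Fin dC) ℂ}
    (hW : (1 - W * Wᴴ).PosSemidef) : (1 - swapMatrix W).PosSemidef := by
  have hH : (1 - swapMatrix W).IsHermitian := by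
    refine Matrix.isHermitian_one.sub ?_
    ext p q
    simp [swapMatrix, Matrix.conjTranspose_apply, mul_comm]
  refine Matrix.PosSemidef.of_dotProduct_mulVec_nonneg hH fun x => ?_
  have him : (star x ⬝ᵥ (1 - swapMatrix W) *ᵥ x).im = 0 := by
    simpa using hH.im_star_dotProduct_mulVec_self x
  rw [Complex.nonneg_iff]
  refine ⟨?_, him.symm⟩
  let X : Matrix (Fin dB) (Fin dC) ℂ := fun i j => x (i, j)
  have hX : ∀ i j, x (i, j) = X i j := fun _ _ => rfl
  let Y : Matrix (Fin dC) (Fin dC) ℂ := Xᴴ * W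
  have h1 : star x ⬝ᵥ swapMatrix W *ᵥ x = ∑ j, ∑ l, Y j l * star (Y l j) := by
    simp only [hX, Y, Matrix.mul_apply, Matrix.conjTranspose_apply, dotProduct, Matrix.mulVec,
      swapMatrix, Fintype.sum_prod_type, Pi.star_apply, Finset.mul_sum, Finset.sum_mul, star_sum,
      star_mul', star_star]
    rw [Finset.sum_comm]
    refine Finset.sum_congr rfl fun j _ => ?_
    rw [Finset.sum_comm_cycle]
    refine Finset.sum_congr rfl fun l _ => Finset.sum_comm.trans ?_
    refine Finset.sum_congr rfl fun k _ => Finset.sum_congr rfl fun i _ => ?_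
    ring
  have h2 : star x ⬝ᵥ x = Matrix.trace (Xᴴ * X) := by
    simp only [hX, Matrix.trace, Matrix.diag, Matrix.mul_apply, Matrix.conjTranspose_apply,
      dotProduct, Fintype.sum_prod_type, Pi.star_apply]
    rw [Finset.sum_comm]
  have h3 := (Complex.nonneg_iff.mp (hW.conjTranspose_mul_mul_same X).trace_nonneg).1
  have h4 : Xᴴ * (1 - W * Wᴴ) * X = Xᴴ * X - Y * Yᴴ := by
    simp only [Y, Matrix.conjTranspose_mul, Matrix.conjTranspose_conjTranspose]
    simp only [Matrix.mul_sub, Matrix.sub_mul, Matrix.mul_one, Matrix.mul_assoc]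
  have h5 : (Matrix.trace (Y * Yᴴ)).re = ∑ j, ∑ l, Complex.normSq (Y j l) := by
    simp [Matrix.trace, Matrix.mul_apply, Complex.mul_conj]
  have h6 : (∑ j, ∑ l, Y j l * star (Y l j)).re ≤ ∑ j, ∑ l, Complex.normSq (Y j l) := by
    have hs : ∑ j, ∑ l, Complex.normSq (Y l j) = ∑ j, ∑ l, Complex.normSq (Y j l) :=
      Finset.sum_comm
    have : (∑ j, ∑ l, Y j l * star (Y l j)).re
        ≤ ∑ j, ∑ l, (Complex.normSq (Y j l) + Complex.normSq (Y l j)) / 2 := by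
      simp only [Complex.re_sum]
      refine Finset.sum_le_sum fun j _ => Finset.sum_le_sum fun l _ => ?_
      simp only [Complex.star_def, Complex.mul_re, Complex.conj_re, Complex.conj_im,
        Complex.normSq_apply]
      nlinarith [sq_nonneg ((Y j l).re - (Y l j).re), sq_nonneg ((Y j l).im - (Y l j).im)]
    simp only [← Finset.sum_div, Finset.sum_add_distrib, hs] at this
    linarith
  rw [h4, Matrix.trace_sub, Complex.sub_re, h5] at h3
  rw [Matrix.sub_mulVec, Matrix.one_mulVec, dotProduct_sub, h1, h2, Complex.sub_re]
  linarith

/-- A vector whose coefficient matrix `W` is a contraction is detected by a matrix with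
positive partial transpose with weight at most the trace. -/
lemma quadForm_le_trace {dB dC : ℕ} {W : Matrix (Fin dB) (Fin dC) ℂ}
    (hW : (1 - W * Wᴴ).PosSemidef) {M : Matrix (Fin dB × Fin dC) (Fin dB × Fin dC) ℂ}
    (hMΓ : (ptranspose M).PosSemidef) :
    (star (fun p : Fin dB × Fin dC => W p.1 p.2) ⬝ᵥ M *ᵥ (fun p => W p.1 p.2)).re
      ≤ (Matrix.trace M).re := by
  have h := re_trace_mul_nonneg hMΓ (one_sub_swapMatrix_posSemidef hW)
  have h1 : Matrix.trace (ptranspose M * swapMatrix W)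
      = star (fun p : Fin dB × Fin dC => W p.1 p.2) ⬝ᵥ M *ᵥ (fun p => W p.1 p.2) := by
    simp only [Matrix.trace, Matrix.diag, Matrix.mul_apply, ptranspose, swapMatrix, dotProduct,
      Matrix.mulVec, Fintype.sum_prod_type, Pi.star_apply, Finset.mul_sum]
    refine Finset.sum_congr rfl fun i _ => ?_
    rw [Finset.sum_comm_cycle]
    refine Finset.sum_congr rfl fun l _ => Finset.sum_comm.trans ?_
    refine Finset.sum_congr rfl fun k _ => Finset.sum_congr rfl fun j _ => ?_
    ring
  have h2 : Matrix.trace (ptranspose M) = Matrix.trace M := rfl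
  rw [Matrix.mul_sub, Matrix.mul_one, Matrix.trace_sub, h1, h2, Complex.sub_re] at h
  linarith

/-- The contraction `W = (V Vᴴ)^{-1/2} V` (inverse on the support), i.e. the partial isometry in the
polar decomposition of `V`; its overlap with `V` is the trace norm of `V`. -/
lemma exists_contraction {m n : Type*} [Fintype m] [Fintype n] [DecidableEq m]
    (V : Matrix m n ℂ) (h : (V * Vᴴ).IsHermitian) :
    ∃ W : Matrix m n ℂ, (1 - W * Wᴴ).PosSemidef ∧
      Matrix.trace (V * Wᴴ) = ((∑ i, √(h.eigenvalues i) : ℝ) : ℂ) := by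
  have hpos : (V * Vᴴ).PosSemidef := Matrix.posSemidef_self_mul_conjTranspose V
  have h0 : ∀ i, 0 ≤ h.eigenvalues i := hpos.eigenvalues_nonneg
  let U : Matrix m m ℂ := h.eigenvectorUnitary
  have hU : Uᴴ * U = 1 := Unitary.coe_star_mul_self h.eigenvectorUnitary
  have hU' : U * Uᴴ = 1 := Unitary.coe_mul_star_self h.eigenvectorUnitary
  have hs : V * Vᴴ = U * Matrix.diagonal (fun i => ((h.eigenvalues i : ℝ) : ℂ)) * Uᴴ :=
    h.spectral_theorem
  -- On the kernel the coefficient is `(√0)⁻¹ = 0`, so this is the pseudo-inverse.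
  let D : Matrix m m ℂ := Matrix.diagonal (fun i => (((√(h.eigenvalues i))⁻¹ : ℝ) : ℂ))
  have hD : Dᴴ = D := by
    simp only [D, Matrix.diagonal_conjTranspose]
    congr 1
    ext i
    simp
  have hWW : (U * D * Uᴴ * V) * (U * D * Uᴴ * V)ᴴ = U * (D *
      Matrix.diagonal (fun i => ((h.eigenvalues i : ℝ) : ℂ)) * D) * Uᴴ := by
    calc _ = U * D * Uᴴ * (V * Vᴴ) * (U * D * Uᴴ) := by
          simp only [Matrix.conjTranspose_mul, hD, Matrix.conjTranspose_conjTranspose,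
            Matrix.mul_assoc]
      _ = U * D * (Uᴴ * U) * Matrix.diagonal (fun i => ((h.eigenvalues i : ℝ) : ℂ))
            * (Uᴴ * U) * D * Uᴴ := by
          refine (congrArg (fun Z => U * D * Uᴴ * Z * (U * D * Uᴴ)) hs).trans ?_
          simp only [Matrix.mul_assoc]
      _ = _ := by rw [hU]; simp only [Matrix.mul_assoc, Matrix.mul_one]
  refine ⟨U * D * Uᴴ * V, ?_, ?_⟩
  · have : (1 : Matrix m m ℂ) - (U * D * Uᴴ * V) * (U * D * Uᴴ * V)ᴴ = U * (1 - D *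
      Matrix.diagonal (fun i => ((h.eigenvalues i : ℝ) : ℂ)) * D) * Uᴴ := by
      rw [hWW, Matrix.mul_sub, Matrix.sub_mul, Matrix.mul_one, hU']
    rw [this]
    refine Matrix.PosSemidef.mul_mul_conjTranspose_same ?_ U
    simp only [D, Matrix.diagonal_mul_diagonal]
    rw [← Matrix.diagonal_one, Matrix.diagonal_sub]
    refine Matrix.PosSemidef.diagonal fun i => ?_
    have : (√(h.eigenvalues i))⁻¹ * h.eigenvalues i * (√(h.eigenvalues i))⁻¹ ≤ 1 := by
      nth_rewrite 2 [← Real.mul_self_sqrt (h0 i)]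
      by_cases hz : √(h.eigenvalues i) = 0
      · simp [hz]
      · field_simp; rfl
    simp only [Pi.zero_apply]
    exact_mod_cast sub_nonneg.mpr this
  · have : Matrix.trace (V * (U * D * Uᴴ * V)ᴴ) = Matrix.trace
        (Matrix.diagonal (fun i => ((h.eigenvalues i : ℝ) : ℂ)) * D) := by
      calc _ = Matrix.trace (V * Vᴴ * (U * D * Uᴴ)) := by
            simp only [Matrix.conjTranspose_mul, hD, Matrix.conjTranspose_conjTranspose,
              Matrix.mul_assoc]
        _ = Matrix.trace (U * (Matrix.diagonal (fun i => ((h.eigenvalues i : ℝ) : ℂ))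
            * (Uᴴ * U) * D * Uᴴ)) := by
            refine (congrArg (fun Z => Matrix.trace (Z * (U * D * Uᴴ))) hs).trans ?_
            simp only [Matrix.mul_assoc]
        _ = _ := by
            rw [hU, Matrix.trace_mul_comm, Matrix.mul_one, Matrix.mul_assoc, hU, Matrix.mul_one]
    rw [this]
    simp only [D, Matrix.diagonal_mul_diagonal, Matrix.trace_diagonal]
    push_cast
    refine Finset.sum_congr rfl fun i _ => ?_
    rw [← Complex.ofReal_inv, ← Complex.ofReal_mul]
    congr 1
    exact Real.div_sqrt

/-- If the entropy of `p` is within `Δ` bits of maximal, the fidelity `∑ √p / √d` with the uniform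
distribution is at least `1 - Δ / 2`, by `log x ≤ x - 1` at `x = 1 / √(p d)`. -/
lemma sum_sqrt_ge {d : ℕ} (hd : 0 < d) {Δ : ℝ} (hΔ : 0 ≤ Δ) (p : Fin d → ℝ) (h0 : ∀ i, 0 ≤ p i)
    (h1 : ∑ i, p i = 1)
    (hE : -∑ i, p i * Real.logb 2 (p i) ≥ Real.logb 2 d - Δ) :
    1 - Δ / 2 ≤ (√(d : ℝ))⁻¹ * ∑ i, √(p i) := by
  have hd' : (0 : ℝ) < d := by exact_mod_cast hd
  have hl2 : 0 < Real.log 2 := Real.log_pos (by norm_num)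
  have hl2' : Real.log 2 ≤ 1 := by
    have := Real.log_le_sub_one_of_pos (show (0 : ℝ) < 2 by norm_num)
    linarith
  have hpt : ∀ i, -(p i * (Real.log (p i) + Real.log d)) / 2 ≤ (√(d : ℝ))⁻¹ * √(p i) - p i := by
    intro i
    rcases (h0 i).eq_or_lt with hz | hz
    · simp [← hz]
    · have hx : 0 < (√(d : ℝ))⁻¹ * (√(p i))⁻¹ := by positivity
      have hlog := Real.log_le_sub_one_of_pos hx
      rw [Real.log_mul (by positivity) (by positivity), Real.log_inv, Real.log_inv,
        Real.log_sqrt hd'.le, Real.log_sqrt hz.le] at hlog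
      have hm := mul_le_mul_of_nonneg_left hlog hz.le
      have : p i * ((√(d : ℝ))⁻¹ * (√(p i))⁻¹ - 1) = (√(d : ℝ))⁻¹ * √(p i) - p i := by
        have : p i * (√(p i))⁻¹ = √(p i) := Real.div_sqrt
        linear_combination (√(d : ℝ))⁻¹ * this
      linarith
  have hsum := Finset.sum_le_sum fun i (_ : i ∈ Finset.univ) => hpt i
  simp only [Finset.sum_sub_distrib, ← Finset.mul_sum, ← Finset.sum_div, Finset.sum_neg_distrib,
    mul_add, Finset.sum_add_distrib, ← Finset.sum_mul, h1] at hsum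
  have hE' : -∑ i, p i * Real.log (p i) ≥ Real.log d - Δ * Real.log 2 := by
    have hk := mul_le_mul_of_nonneg_right hE hl2.le
    have e1 : (-∑ i, p i * Real.logb 2 (p i)) * Real.log 2 = -∑ i, p i * Real.log (p i) := by
      rw [neg_mul, Finset.sum_mul]
      congr 1
      refine Finset.sum_congr rfl fun i _ => ?_
      rw [Real.logb]; field_simp
    have e2 : (Real.logb 2 d - Δ) * Real.log 2 = Real.log d - Δ * Real.log 2 := by
      rw [Real.logb]; field_simp
    rw [e1, e2] at hk
    exact hk
  have : Δ * Real.log 2 ≤ Δ := by nlinarith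
  linarith

/-- lemma on PPT detectors, eq. (2): if E(v) ≥ log₂ dB − Δ and M is a PPT
POVM element detecting φ_v with probability ≥ 1 − ε, then tr M ≥ (1 − ε − √2·Δ^{1/4})·dB. -/
theorem stmt6 (dB dC : ℕ) (hB : 0 < dB) (hBC : dB ≤ dC) (Δ ε : ℝ) (hΔ : 0 ≤ Δ) (hε : 0 ≤ ε)
    (v : Fin dB × Fin dC → ℂ) (hv : IsUnitVec v)
    (hE : entg v ≥ Real.logb 2 dB - Δ)
    (M : Matrix (Fin dB × Fin dC) (Fin dB × Fin dC) ℂ)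
    (hM : M.PosSemidef) (hM1 : (1 - M).PosSemidef) (hMΓ : (ptranspose M).PosSemidef)
    (htr : 1 - ε ≤ (Matrix.trace (pureState v * M)).re) :
    (1 - ε - Real.sqrt 2 * Δ ^ ((1 : ℝ) / 4)) * dB ≤ (Matrix.trace M).re := by
  have hd' : (0 : ℝ) < dB := by exact_mod_cast hB
  have hMtr : 0 ≤ (Matrix.trace M).re := (Complex.nonneg_iff.mp hM.trace_nonneg).1
  have hr : 0 ≤ Δ ^ ((1 : ℝ) / 4) := by positivity
  have hr2 : (Δ ^ ((1 : ℝ) / 4)) ^ 2 = √Δ := by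
    rw [← Real.rpow_natCast, ← Real.rpow_mul hΔ, Real.sqrt_eq_rpow]; norm_num
  set r := Δ ^ ((1 : ℝ) / 4)
  have h2 : √2 * √2 = (2 : ℝ) := Real.mul_self_sqrt (by norm_num)
  have h2p : 0 < √(2 : ℝ) := by positivity
  -- If `√2 * r ≥ 1` the left-hand side is nonpositive.
  by_cases hbig : 1 ≤ √2 * r
  · have : (1 - ε - √2 * r) * dB ≤ 0 := mul_nonpos_of_nonpos_of_nonneg (by linarith) hd'.le
    linarith
  push Not at hbig
  have hδ : 2 * √Δ ≤ √2 * r := by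
    rw [← hr2]
    have := mul_le_mul_of_nonneg_left hbig.le (mul_nonneg h2p.le hr)
    nlinarith
  let V : Matrix (Fin dB) (Fin dC) ℂ := fun i j => v (i, j)
  have hVv : ∀ i j, v (i, j) = V i j := fun _ _ => rfl
  have hρ : ptraceC (pureState v) = V * Vᴴ := by
    ext i k
    simp [ptraceC, pureState, hVv, Matrix.mul_apply, Matrix.vecMulVec_apply]
  have h : (V * Vᴴ).IsHermitian := (Matrix.posSemidef_self_mul_conjTranspose V).1
  have h0 : ∀ i, 0 ≤ h.eigenvalues i :=
    (Matrix.posSemidef_self_mul_conjTranspose V).eigenvalues_nonneg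
  have hVV : Matrix.trace (V * Vᴴ) = 1 := by
    have : Matrix.trace (V * Vᴴ) = ((∑ x, Complex.normSq (v x) : ℝ) : ℂ) := by
      simp [Matrix.trace, Matrix.mul_apply, hVv, Complex.mul_conj, Fintype.sum_prod_type]
    rw [this, hv, Complex.ofReal_one]
  have hsum1 : ∑ i, h.eigenvalues i = 1 := by
    have := h.trace_eq_sum_eigenvalues
    rw [hVV] at this
    have := congrArg Complex.re this
    simpa using this.symm
  rw [entg, hρ, vnEntropy, dif_pos h] at hE
  have hF := sum_sqrt_ge hB hΔ h.eigenvalues h0 hsum1 hE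
  obtain ⟨W, hW, hVW⟩ := exists_contraction V h
  set S := ∑ i, √(h.eigenvalues i)
  set c : ℝ := (√(dB : ℝ))⁻¹
  have hc2 : c * c * dB = 1 := by
    have := Real.mul_self_sqrt hd'.le
    simp only [c]; field_simp; nlinarith
  have hWtr : (Matrix.trace (W * Wᴴ)).re ≤ dB := by
    have := (Complex.nonneg_iff.mp hW.trace_nonneg).1
    rw [Matrix.trace_sub, Matrix.trace_one, Complex.sub_re] at this
    simp at this
    linarith
  let w : Fin dB × Fin dC → ℂ := (c : ℂ) • fun p => W p.1 p.2
  have hdist : ∑ x, Complex.normSq (v x - w x)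
      = 1 + c * c * (Matrix.trace (W * Wᴴ)).re - 2 * c * S := by
    have hv1 : (1 : ℝ) = ∑ i, ∑ j, Complex.normSq (V i j) := by
      rw [← hv, Fintype.sum_prod_type]
    have hS : S = (Matrix.trace (V * Wᴴ)).re := by rw [hVW, Complex.ofReal_re]
    rw [hv1, hS, Fintype.sum_prod_type]
    simp only [Matrix.trace, Matrix.diag, Matrix.mul_apply, Matrix.conjTranspose_apply,
      Complex.re_sum, Finset.mul_sum, ← Finset.sum_add_distrib, ← Finset.sum_sub_distrib]
    refine Finset.sum_congr rfl fun i _ => Finset.sum_congr rfl fun j _ => ?_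
    simp [w, V, Complex.normSq_apply]
    ring
  have hdist' : ∑ x, Complex.normSq (v x - w x) ≤ Δ := by
    have : c * c * (Matrix.trace (W * Wᴴ)).re ≤ c * c * dB :=
      mul_le_mul_of_nonneg_left hWtr (mul_self_nonneg c)
    rw [hdist]; linarith
  have hw : (star w ⬝ᵥ M *ᵥ w).re * dB ≤ (Matrix.trace M).re := by
    have := quadForm_le_trace hW hMΓ
    simp only [w, star_smul, Matrix.mulVec_smul, smul_dotProduct, dotProduct_smul, smul_eq_mul,
      Complex.star_def, Complex.conj_ofReal, Complex.re_ofReal_mul]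
    linear_combination this + hc2 *
      (star (fun p : Fin dB × Fin dC => W p.1 p.2) ⬝ᵥ M *ᵥ (fun p => W p.1 p.2)).re
  rw [trace_pureState_mul] at htr
  -- Letting `δ` decrease to `√Δ` covers the case `Δ = 0`.
  have hkey : 1 - ε ≤ (star w ⬝ᵥ M *ᵥ w).re + 2 * √Δ := by
    refine le_of_forall_pos_le_add fun η hη => ?_
    have := quadForm_le_add hM hM1 v w hv (δ := √Δ + η / 2) (by positivity)
      (hdist'.trans (by nlinarith [Real.sq_sqrt hΔ, Real.sqrt_nonneg Δ]))
    linarith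
  refine le_trans (mul_le_mul_of_nonneg_right ?_ hd'.le) hw
  linarith
end
end
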